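/- Let r be a positive integer and set κ = 1/(r·2^(r+1)). For every δ > 0 there exists p₀ = p₀(r, δ) such that the following holds for every prime p > p₀: if G is a subgroup of the multiplicative group 𝔽_p* with |G| > p^(1−κ), then every subset A ⊆ G with |A| > δ|G| contains a non-trivial r-term arithmetic progression, i.e., there exist a, b ∈ 𝔽_p with b ≠ 0 such that a, a+b, a+2b, …, a+(r−1)b all lie in A. -/

import Mathlib

namespace MulAP
open Polynomial

section Stepanov
variable {p : ℕ} [Fact p.Prime]

/-- the derivation `W · d/dx` -/
noncomputable def theta (W P : (ZMod p)[X]) : (ZMod p)[X] := W * derivative P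

lemma theta_root_aux (W : (ZMod p)[X]) (y : ZMod p) (hW : W.eval y ≠ 0) :
    ∀ (m : ℕ), m < p → ∀ H : (ZMod p)[X], H.eval y ≠ 0 →
      ((theta W)^[m] ((X - C y) ^ m * H)).eval y ≠ 0 := by
  intro m
  induction m with
  | zero => intro _ H hH; simpa using hH
  | succ m ih =>
    intro hm H hH
    rw [Function.iterate_succ_apply]
    have e : theta W ((X - C y) ^ (m+1) * H)
        = (X - C y) ^ m * (W * (C ((m+1 : ℕ) : ZMod p) * H + (X - C y) * derivative H)) := by
      simp only [theta, derivative_mul, derivative_pow, derivative_sub, derivative_X, derivative_C]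
      push_cast
      simp
      ring
    rw [e]
    apply ih (by omega)
    simp only [eval_mul, eval_add, eval_sub, eval_X, eval_C, sub_self, zero_mul, add_zero]
    refine mul_ne_zero hW (mul_ne_zero ?_ hH)
    intro h
    rw [ZMod.natCast_eq_zero_iff] at h
    exact absurd (Nat.le_of_dvd (by omega) h) (by omega)

lemma rootMult_ge (W P : (ZMod p)[X]) (hP : P ≠ 0) (y : ZMod p) (hW : W.eval y ≠ 0) (M : ℕ)
    (hM : M ≤ p) (h : ∀ l < M, ((theta W)^[l] P).eval y = 0) :
    M ≤ P.rootMultiplicity y := by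
  by_contra hlt
  push Not at hlt
  obtain ⟨H, hH, hnd⟩ := Polynomial.exists_eq_pow_rootMultiplicity_mul_and_not_dvd P hP y
  have h1 := h _ hlt
  have := theta_root_aux W y hW (P.rootMultiplicity y) (by omega) H
    (by rwa [Polynomial.dvd_iff_isRoot] at hnd)
  rw [← hH] at this
  exact this h1

lemma card_mul_le (P : (ZMod p)[X]) (hP : P ≠ 0) (Z : Finset (ZMod p)) (M : ℕ)
    (h : ∀ y ∈ Z, M ≤ P.rootMultiplicity y) : Z.card * M ≤ P.natDegree := by
  classical
  calc Z.card * M = ∑ y ∈ Z, M := by simp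
    _ ≤ ∑ y ∈ Z, P.roots.count y := Finset.sum_le_sum (fun y hy => by
        rw [Polynomial.count_roots]; exact h y hy)
    _ ≤ P.roots.card := by
        rw [← Multiset.sum_count_eq_card (s := Finset.univ) (m := P.roots) (by simp)]
        exact Finset.sum_le_sum_of_subset (Finset.subset_univ _)
    _ ≤ P.natDegree := Polynomial.card_roots' P

/-- iterated coefficient operator -/
noncomputable def qop (W V Q : (ZMod p)[X]) : (ZMod p)[X] := W * derivative Q + Q * V

lemma theta_term (W V U Q : (ZMod p)[X]) (hU : W * derivative U = U * V) (j : ℕ) (l : ℕ) :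
    (theta W)^[l] (Q * X ^ (p * j) * U) = (qop W V)^[l] Q * X ^ (p * j) * U := by
  induction l generalizing Q with
  | zero => rfl
  | succ l ih =>
    rw [Function.iterate_succ_apply, Function.iterate_succ_apply, ← ih]
    congr 1
    simp only [theta, qop, derivative_mul, derivative_X_pow]
    have : (C ((p * j : ℕ) : ZMod p)) = 0 := by simp
    rw [this]
    linear_combination (Q * X ^ (p*j)) * hU

lemma theta_iter_sum {ι : Type*} (s : Finset ι) (W : (ZMod p)[X]) (f : ι → (ZMod p)[X]) (l : ℕ) :
    (theta W)^[l] (∑ i ∈ s, f i) = ∑ i ∈ s, (theta W)^[l] (f i) := by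
  induction l generalizing f with
  | zero => rfl
  | succ l ih =>
    simp only [Function.iterate_succ_apply]
    rw [← ih]
    congr 1
    simp [theta, Finset.mul_sum]

lemma qop_deg (W V Q : (ZMod p)[X]) (N n : ℕ) (hW : W.natDegree ≤ N) (hV : V.natDegree ≤ N)
    (hQ : Q.natDegree ≤ n) (l : ℕ) : ((qop W V)^[l] Q).natDegree ≤ n + l * N := by
  induction l with
  | zero => simpa using hQ
  | succ l ih =>
    rw [Function.iterate_succ_apply']
    generalize (qop W V)^[l] Q = R at ih ⊢
    unfold qop
    refine (natDegree_add_le _ _).trans (max_le ?_ ?_)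
    · refine natDegree_mul_le.trans ?_
      have := (natDegree_derivative_le R).trans (Nat.sub_le _ 1)
      nlinarith
    · refine natDegree_mul_le.trans ?_
      nlinarith

noncomputable def qlin (W V : (ZMod p)[X]) : (ZMod p)[X] →ₗ[ZMod p] (ZMod p)[X] :=
  LinearMap.mulLeft (ZMod p) W ∘ₗ derivative + LinearMap.mulRight (ZMod p) V

lemma qlin_pow (W V Q : (ZMod p)[X]) (l : ℕ) : ((qlin W V) ^ l) Q = (qop W V)^[l] Q := by
  rw [Module.End.pow_apply]
  have : (⇑(qlin W V)) = qop W V := by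
    funext Q; simp [qlin, qop]
  rw [this]


lemma exists_Q (d q n M N K : ℕ) (hdq : d * q = K) (hd : 0 < d)
    (hcount : M * (n + M * N + q) < K * n)
    (W : (ZMod p)[X]) (V : ℕ → (ZMod p)[X]) (hW : W.natDegree ≤ N) (hV : ∀ e < d, (V e).natDegree ≤ N)
    (c : ZMod p) :
    ∃ Q : Fin K → (ZMod p)[X], (∃ t, Q t ≠ 0) ∧ (∀ t, (Q t).degree < n) ∧
      ∀ l < M, ∑ t : Fin K, C (c ^ (t.1 % d)) * X ^ (t.1 / d) * (qop W (V (t.1 % d)))^[l] (Q t) = 0 := by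
  let Qlin : Fin K → ((Fin K × Fin n → ZMod p) →ₗ[ZMod p] (ZMod p)[X]) := fun t =>
    ∑ s : Fin n, (monomial s.1) ∘ₗ LinearMap.proj (t, s)
  let Rlin : ℕ → ((Fin K × Fin n → ZMod p) →ₗ[ZMod p] (ZMod p)[X]) := fun l =>
    ∑ t : Fin K, LinearMap.mulLeft (ZMod p) (C (c ^ (t.1 % d)) * X ^ (t.1 / d)) ∘ₗ
      ((qlin W (V (t.1 % d))) ^ l) ∘ₗ Qlin t
  let Φ : (Fin K × Fin n → ZMod p) →ₗ[ZMod p] (Fin M × Fin (n + M * N + q) → ZMod p) :=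
    LinearMap.pi fun li => lcoeff (ZMod p) li.2.1 ∘ₗ Rlin li.1.1
  have hker : Φ.ker ≠ ⊥ := by
    apply LinearMap.ker_ne_bot_of_finrank_lt
    simpa using hcount
  obtain ⟨v, hv, hv0⟩ := Submodule.exists_mem_ne_zero_of_ne_bot hker
  have hQ : ∀ t, Qlin t v = ∑ s : Fin n, monomial s.1 (v (t, s)) := by
    intro t; simp [Qlin]
  have hcoef : ∀ t (s : Fin n), (Qlin t v).coeff s.1 = v (t, s) := by
    intro t s
    rw [hQ]
    simp only [finsetSum_coeff, coeff_monomial]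
    rw [Finset.sum_eq_single s]
    · simp
    · intro b _ hb; rw [if_neg]; intro h; exact hb (Fin.ext h)
    · simp
  have hdeg : ∀ t, (Qlin t v).degree < n := by
    intro t
    rw [hQ]
    refine (degree_sum_le _ _).trans_lt ?_
    rw [Finset.sup_lt_iff (by exact WithBot.bot_lt_coe n)]
    intro s _
    exact (degree_monomial_le _ _).trans_lt (by exact_mod_cast s.2)
  refine ⟨fun t => Qlin t v, ?_, hdeg, ?_⟩
  · by_contra hcon
    push Not at hcon
    apply hv0
    funext ⟨t, s⟩
    rw [← hcoef, hcon t]; simp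
  · intro l hl
    have hR : Rlin l v = ∑ t : Fin K, C (c ^ (t.1 % d)) * X ^ (t.1 / d) *
        (qop W (V (t.1 % d)))^[l] (Qlin t v) := by
      simp only [Rlin, LinearMap.sum_apply, LinearMap.comp_apply, LinearMap.mulLeft_apply, qlin_pow]
    rw [← hR]
    ext i
    rw [coeff_zero]
    by_cases hi : i < n + M * N + q
    · have := congrFun (LinearMap.mem_ker.1 hv) (⟨l, hl⟩, ⟨i, hi⟩)
      simpa [Φ] using this
    · rw [hR, finsetSum_coeff]
      apply Finset.sum_eq_zero
      intro t _
      apply coeff_eq_zero_of_natDegree_lt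
      have h1 := qop_deg W (V (t.1 % d)) (Qlin t v) N n hW (hV _ (Nat.mod_lt _ hd))
        (natDegree_le_of_degree_le (hdeg t).le) l
      have h2 : t.1 / d < q := by
        rw [Nat.div_lt_iff_lt_mul hd, mul_comm, hdq]; exact t.2
      have h3 : (C (c ^ (t.1 % d)) * X ^ (t.1 / d) : (ZMod p)[X]).natDegree ≤ t.1 / d :=
        natDegree_C_mul_X_pow_le _ _
      have h4 := natDegree_mul_le (p := (C (c ^ (t.1 % d)) * X ^ (t.1 / d) : (ZMod p)[X]))
        (q := (qop W (V (t.1 % d)))^[l] (Qlin t v))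
      have : l * N ≤ M * N := Nat.mul_le_mul_right _ hl.le
      omega

lemma Q_zero (d n K : ℕ) (hd : 0 < d) (hnd : n * d + 1 = p) (A1 B : (ZMod p)[X])
    (hA1 : ¬ X ∣ A1) (hB : ¬ X ∣ B) (Q : Fin K → (ZMod p)[X]) (hdeg : ∀ t, (Q t).degree < n)
    (h : ∑ t : Fin K, Q t * X ^ (p * (t.1 / d)) *
      ((X * A1) ^ ((t.1 % d) * n) * B ^ ((d - t.1 % d) * n)) = 0) : ∀ t, Q t = 0 := by
  have hw : ∀ t, p * (t / d) + (t % d) * n = n * t + t / d := by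
    intro t
    conv_rhs => rw [← Nat.div_add_mod t d]
    rw [Nat.div_add_mod, ← hnd]
    have := Nat.div_add_mod t d
    calc _ = n * (d * (t/d) + t % d) + t / d := by ring
      _ = _ := by rw [this]
  have key : ∀ s : ℕ, ∀ t : Fin K, t.1 = s → Q t = 0 := by
    intro s
    induction s using Nat.strong_induction_on with
    | _ s ih =>
    rintro t rfl
    have hdvd : X ^ (n * t.1 + t.1 / d + n) ∣ Q t * X ^ (p * (t.1 / d)) *
      ((X * A1) ^ ((t.1 % d) * n) * B ^ ((d - t.1 % d) * n)) := by
      rw [← Finset.add_sum_erase _ _ (Finset.mem_univ t)] at h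
      rw [eq_neg_of_add_eq_zero_left h, dvd_neg]
      apply Finset.dvd_sum
      intro u hu
      rcases lt_trichotomy u.1 t.1 with hlt | heq | hgt
      · rw [ih u.1 hlt u rfl]; simp
      · exact absurd (Fin.ext heq) (Finset.ne_of_mem_erase hu)
      · have h1 : X ^ (n * t.1 + t.1 / d + n) ∣ (X : (ZMod p)[X]) ^ (n * u.1 + u.1 / d) := by
          apply pow_dvd_pow
          have : t.1 / d ≤ u.1 / d := Nat.div_le_div_right hgt.le
          nlinarith
        refine h1.trans ?_
        rw [← hw, pow_add, mul_pow]
        exact ⟨Q u * (A1 ^ ((u.1 % d) * n) * B ^ ((d - u.1 % d) * n)), by ring⟩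
    have e : Q t * X ^ (p * (t.1 / d)) *
      ((X * A1) ^ ((t.1 % d) * n) * B ^ ((d - t.1 % d) * n)) = X ^ (n * t.1 + t.1 / d) *
        (Q t * (A1 ^ ((t.1 % d) * n) * B ^ ((d - t.1 % d) * n))) := by
      rw [← hw, pow_add, mul_pow]; ring
    rw [e, pow_add] at hdvd
    have hd2 := (mul_dvd_mul_iff_left (pow_ne_zero _ X_ne_zero)).1 hdvd
    have hcop : IsCoprime ((X : (ZMod p)[X]) ^ n)
        (A1 ^ ((t.1 % d) * n) * B ^ ((d - t.1 % d) * n)) := by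
      have hx := (prime_X (R := ZMod p)).irreducible
      exact IsCoprime.mul_right ((hx.coprime_iff_not_dvd.2 hA1).pow)
        ((hx.coprime_iff_not_dvd.2 hB).pow)
    have hd3 := hcop.dvd_of_dvd_mul_right hd2
    refine Polynomial.eq_zero_of_dvd_of_degree_lt hd3 ?_
    rw [degree_X_pow]; exact hdeg t
  exact fun t => key t.1 t rfl

set_option maxHeartbeats 600000 in
lemma stepanov_core (A1 B : (ZMod p)[X]) (hA1 : ¬ X ∣ A1) (hB : ¬ X ∣ B) (n d q N : ℕ)
    (hnd : n * d + 1 = p) (hd : 0 < d) (hn : 0 < n) (hq : q * q * d ≤ n) (hqN : N + 2 < q)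
    (hN : (X * A1).natDegree + B.natDegree ≤ N) (c : ZMod p) (Z : Finset (ZMod p))
    (hZ : ∀ y ∈ Z, (X * A1).eval y ≠ 0 ∧ B.eval y ≠ 0 ∧ (X * A1).eval y ^ n = c * B.eval y ^ n) :
    Z.card * (d * (q - N - 2)) ≤ p * (q + N) := by
  set A := X * A1 with hA
  set W := A * B with hWdef
  let V : ℕ → (ZMod p)[X] := fun e =>
    C ((e * n : ℕ) : ZMod p) * derivative A * B + C (((d - e) * n : ℕ) : ZMod p) * derivative B * A
  let U : ℕ → (ZMod p)[X] := fun e => A ^ (e * n) * B ^ ((d - e) * n)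
  have hWd : W.natDegree ≤ N := natDegree_mul_le.trans hN
  have hVd : ∀ e, (V e).natDegree ≤ N := by
    intro e
    refine (natDegree_add_le _ _).trans (max_le ?_ ?_)
    · refine natDegree_mul_le.trans ?_
      have h1 := natDegree_C_mul_le ((e * n : ℕ) : ZMod p) (derivative A)
      have h2 := natDegree_derivative_le A
      omega
    · refine natDegree_mul_le.trans ?_
      have h1 := natDegree_C_mul_le (((d - e) * n : ℕ) : ZMod p) (derivative B)
      have h2 := natDegree_derivative_le B
      omega
  have hpw : ∀ (D : (ZMod p)[X]) (k : ℕ), D * derivative (D ^ k) = C (k : ZMod p) * derivative D * D ^ k := by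
    intro D k
    rcases k with _ | k
    · simp
    · rw [derivative_pow_succ, pow_succ]; push_cast; ring
  have hU : ∀ e, W * derivative (U e) = U e * V e := by
    intro e
    simp only [U, V, derivative_mul, hWdef]
    linear_combination (B * B ^ ((d-e)*n)) * hpw A (e * n) + (A * A ^ (e*n)) * hpw B ((d-e)*n)
  set M := d * (q - N - 2) with hM
  obtain ⟨r, rfl⟩ : ∃ r, q = r + N + 2 := ⟨q - N - 2, by omega⟩
  have hr : r + N + 2 - N - 2 = r := by omega
  rw [hr] at hM
  obtain ⟨Q, ⟨t0, ht0⟩, hdeg, hR⟩ := exists_Q (p := p) d (r + N + 2) n M N (d * (r + N + 2)) rfl hd (by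
    rw [hM]
    have h1 : r * (d * r * N + (r + N + 2)) ≤ (N + 1) * n := by
      have : r * (d * r * N + (r + N + 2)) ≤
        (N + 1) * ((r + N + 2) * (r + N + 2) * d) := by
        obtain ⟨d', rfl⟩ : ∃ d', d = d' + 1 := ⟨d - 1, by omega⟩
        nlinarith [Nat.zero_le (N*N*N), Nat.zero_le (d' * r * N), Nat.zero_le (d' * r), Nat.zero_le (d' * r * r * N), Nat.zero_le (d' * N), Nat.zero_le (d' * r * r),Nat.zero_le (d' * N*N*N), Nat.zero_le (d' * N*N*r), Nat.zero_le (d' * N*N),Nat.zero_le (N*N*r), Nat.zero_le (N*N), Nat.zero_le (N*r), Nat.zero_le (r*r*N)]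
      exact this.trans (Nat.mul_le_mul_left _ hq)
    have h2 : r * (n + d * r * N + (r + N + 2)) < (r + N + 2) * n := by nlinarith
    calc d * r * (n + d * r * N + (r + N + 2)) = d * (r * (n + d * r * N + (r + N + 2))) := by ring
      _ < d * ((r + N + 2) * n) := Nat.mul_lt_mul_of_pos_left h2 hd
      _ = _ := by ring) W V hWd (fun e _ => hVd e) c
  set P : (ZMod p)[X] := ∑ t : Fin (d * (r + N + 2)), Q t * X ^ (p * (t.1 / d)) * U (t.1 % d) with hP
  have hP0 : P ≠ 0 := fun h => ht0 (Q_zero d n _ hd hnd A1 B hA1 hB Q hdeg h t0)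
  have hdegP : P.natDegree ≤ p * (r + N + 2 + N) := by
    apply natDegree_sum_le_of_forall_le
    intro t _
    have h1 : (Q t).natDegree ≤ n := natDegree_le_of_degree_le (hdeg t).le
    have h2 : t.1 / d < r + N + 2 := Nat.div_lt_of_lt_mul t.2
    have hm : t.1 % d ≤ d := (Nat.mod_lt _ hd).le
    have h3 : (U (t.1 % d)).natDegree ≤ p * N := by
      refine natDegree_mul_le.trans ?_
      have a1 := natDegree_pow_le (p := A) (n := (t.1 % d) * n)
      have a2 := natDegree_pow_le (p := B) (n := (d - t.1 % d) * n)
      have b1 : (t.1 % d) * n ≤ p := by nlinarith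
      have b2 : (d - t.1 % d) * n ≤ p := by nlinarith [Nat.sub_le d (t.1 % d)]
      have c1 := Nat.mul_le_mul_right A.natDegree b1
      have c2 := Nat.mul_le_mul_right B.natDegree b2
      have c3 := Nat.mul_le_mul_left p hN
      rw [mul_add] at c3
      omega
    have h4 : (Q t * X ^ (p * (t.1 / d))).natDegree ≤ n + p * (t.1 / d) := by
      refine natDegree_mul_le.trans ?_
      rw [natDegree_X_pow]; omega
    refine natDegree_mul_le.trans ?_
    have h5 : p * (t.1 / d + 1) ≤ p * (r + N + 2) := Nat.mul_le_mul_left _ h2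
    have h6 : n ≤ p := by nlinarith
    nlinarith
  refine (card_mul_le P hP0 Z M ?_).trans hdegP
  intro y hy
  obtain ⟨hAy, hBy, hc⟩ := hZ y hy
  have hp1 : n * d = p - 1 := by omega
  have hUy : ∀ e < d, (U e).eval y = c ^ e := by
    intro e he
    have : (d - e) * n = n * d - e * n := by rw [Nat.sub_mul]; ring_nf
    simp only [U, eval_mul, eval_pow]
    rw [mul_comm e n, pow_mul, hc, mul_pow, ← pow_mul, mul_assoc, ← pow_add]
    have : n * e + (d - e) * n = p - 1 := by
      rw [← hp1]
      obtain ⟨f, rfl⟩ : ∃ f, d = e + f := ⟨d - e, by omega⟩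
      rw [Nat.add_sub_cancel_left]; ring
    rw [this, ZMod.pow_card_sub_one_eq_one hBy, mul_one]
  refine rootMult_ge W P hP0 y ?_ M ?_ ?_
  · rw [hWdef, eval_mul]; exact mul_ne_zero hAy hBy
  · have h1 : d * r ≤ (r + N + 2) * (r + N + 2) * d := by
      rw [mul_comm d r]; exact Nat.mul_le_mul_right _ (by nlinarith)
    have h2 : n ≤ p := by rw [← hnd]; exact (Nat.le_mul_of_pos_right n hd).trans (Nat.le_succ _)
    rw [hM]; exact (h1.trans hq).trans h2
  · intro l hl
    rw [hP, theta_iter_sum]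
    have := congrArg (Polynomial.eval y) (hR l hl)
    rw [eval_zero] at this
    rw [← this, eval_finset_sum, eval_finset_sum]
    apply Finset.sum_congr rfl
    intro t _
    rw [theta_term W (V (t.1 % d)) (U (t.1 % d)) (Q t) (hU _)]
    simp only [eval_mul, eval_pow, eval_X, eval_C]
    rw [hUy _ (Nat.mod_lt _ hd), pow_mul, ZMod.pow_card]
    ring

end Stepanov
end MulAP

namespace MulAP
open Polynomial

section StepanovChar
variable {p : ℕ} [Fact p.Prime]

/-- products of shifted characters -/
noncomputable def charT (χ : MulChar (ZMod p) ℂ) (S S' : Finset (ZMod p)) (x : ZMod p) : ℂ :=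
  (∏ a ∈ S, χ (x + a)) * ∏ b ∈ S', (starRingEnd ℂ) (χ (x + b))

lemma charT_eq (χ : MulChar (ZMod p) ℂ) (S S' : Finset (ZMod p)) (x : ZMod p) :
    charT χ S S' x = χ (∏ a ∈ S, (x + a)) * (starRingEnd ℂ) (χ (∏ b ∈ S', (x + b))) := by
  rw [charT, map_prod χ, map_prod χ, map_prod (starRingEnd ℂ)]

lemma pow_eq_one_of_char (χ : MulChar (ZMod p) ℂ) (d n : ℕ) (hnd : n * d + 1 = p)
    (hχ : orderOf χ = d) (w : ZMod p) (hw : w ≠ 0) (h : χ w = 1) : w ^ n = 1 := by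
  obtain ⟨g, hg⟩ := IsCyclic.exists_generator (α := (ZMod p)ˣ)
  obtain ⟨k, hk⟩ := (Submonoid.mem_powers_iff _ _).1
    ((mem_powers_iff_mem_zpowers).2 (hg (Units.mk0 w hw)))
  have hk' : (g : ZMod p) ^ k = w := by
    have := congrArg Units.val hk; simpa using this
  have h1 : χ (g : ZMod p) ^ k = 1 := by rw [← map_pow, hk', h]
  have h2 : χ ^ k = 1 := by
    ext u
    obtain ⟨j, hj⟩ := (Submonoid.mem_powers_iff _ _).1 ((mem_powers_iff_mem_zpowers).2 (hg u))
    rw [← hj]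
    rw [MulChar.pow_apply_coe, MulChar.one_apply_coe]
    push_cast
    rw [map_pow, ← pow_mul, mul_comm, pow_mul, h1, one_pow]
  have h3 : d ∣ k := by rw [← hχ]; exact orderOf_dvd_of_pow_eq_one h2
  obtain ⟨j, rfl⟩ := h3
  have : (w : ZMod p) ^ n = ((g : ZMod p) ^ (p - 1)) ^ j := by
    rw [← hk', ← pow_mul, ← pow_mul]; congr 1
    rw [← hnd]; simp; ring
  rw [this, ZMod.pow_card_sub_one_eq_one g.ne_zero, one_pow]

lemma stepanov_char0 (χ : MulChar (ZMod p) ℂ) (d n q N : ℕ) (hnd : n * d + 1 = p)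
    (hχ : orderOf χ = d) (hd : 2 ≤ d) (hn : 0 < n) (hq : q * q * d ≤ n) (hqN : N + 2 < q)
    (S S' : Finset (ZMod p)) (hdisj : Disjoint S S') (h0 : 0 ∈ S) (hN : S.card + S'.card ≤ N) :
    ‖∑ x, charT χ S S' x‖ ≤ p * (2 * N + 2) / ((q : ℝ) - N - 2) + N := by
  classical
  set A1 : (ZMod p)[X] := ∏ a ∈ S.erase 0, (X + C a) with hA1
  set B : (ZMod p)[X] := ∏ b ∈ S', (X + C b) with hB
  have hA : X * A1 = ∏ a ∈ S, (X + C a) := by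
    rw [← Finset.mul_prod_erase S _ h0, hA1]; simp
  have hAe : ∀ y, (X * A1).eval y = ∏ a ∈ S, (y + a) := by
    intro y; rw [hA, eval_prod]; simp
  have hBe : ∀ y, B.eval y = ∏ a ∈ S', (y + a) := by
    intro y; rw [hB, eval_prod]; simp
  have hX1 : ¬ X ∣ A1 := by
    rw [X_dvd_iff, coeff_zero_eq_eval_zero, hA1, eval_prod, Finset.prod_eq_zero_iff]
    rintro ⟨a, ha, h⟩
    simp at h
    exact (Finset.ne_of_mem_erase ha) h
  have hX2 : ¬ X ∣ B := by
    rw [X_dvd_iff, coeff_zero_eq_eval_zero, hB, eval_prod, Finset.prod_eq_zero_iff]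
    rintro ⟨a, ha, h⟩
    simp at h
    subst h
    exact (Finset.disjoint_left.1 hdisj) h0 ha
  have hdegp : ∀ T : Finset (ZMod p), (∏ a ∈ T, (X + C a) : (ZMod p)[X]).natDegree = T.card := by
    intro T
    rw [natDegree_prod_of_monic _ _ (fun a _ => monic_X_add_C a)]
    simp
  have hND : (X * A1).natDegree + B.natDegree ≤ N := by
    rw [hA, hdegp, hdegp]; exact hN
  set G : Finset (ZMod p) := Finset.univ.filter fun x => (X * A1).eval x ≠ 0 ∧ B.eval x ≠ 0 with hG
  have hGc : (p : ℝ) - N ≤ G.card := by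
    have h1 : (Finset.univ \ G : Finset (ZMod p)) ⊆ (S ∪ S').image (fun a => -a) := by
      intro x hx
      simp only [hG, Finset.mem_sdiff, Finset.mem_univ, true_and, Finset.mem_filter, hAe, hBe,
        not_and_or, not_not, Finset.prod_eq_zero_iff] at hx
      rw [Finset.mem_image]
      rcases hx with ⟨a, ha, h⟩ | ⟨a, ha, h⟩
      · exact ⟨a, Finset.mem_union_left _ ha, (eq_neg_of_add_eq_zero_left h).symm⟩
      · exact ⟨a, Finset.mem_union_right _ ha, (eq_neg_of_add_eq_zero_left h).symm⟩
    have h2 := (Finset.card_le_card h1).trans (Finset.card_image_le.trans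
      ((Finset.card_union_le S S').trans hN))
    rw [Finset.card_sdiff_of_subset (Finset.subset_univ _), Finset.card_univ, ZMod.card] at h2
    have : p ≤ N + G.card := by omega
    have : (p : ℝ) ≤ N + G.card := by exact_mod_cast this
    linarith
  let u : ZMod p → ZMod p := fun x => (X * A1).eval x * (B.eval x)⁻¹
  have hcT : ∀ x ∈ G, charT χ S S' x = χ (u x) := by
    intro x hx
    simp only [charT_eq, u]
    rw [map_mul, hAe, hBe]
    congr 1
    rw [← MulChar.inv_apply', ← MulChar.star_apply']; rfl
  have hcT0 : ∀ x ∉ G, charT χ S S' x = 0 := by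
    intro x hx
    simp only [hG, Finset.mem_univ, true_and, Finset.mem_filter, hAe, hBe,
        not_and_or, not_not] at hx
    rw [charT_eq]
    have hz := MulChar.map_zero χ
    rcases hx with h | h
    · rw [h, hz, zero_mul]
    · rw [h, hz, map_zero, mul_zero]
  have hsum : ∑ x, charT χ S S' x = ∑ x ∈ G, χ (u x) := by
    rw [← Finset.sum_congr rfl hcT]
    exact (Finset.sum_subset (Finset.subset_univ _) (fun x _ hx => hcT0 x hx)).symm
  have hd0 : d ≠ 0 := by omega
  obtain ⟨ζ, hζ⟩ : ∃ ζ : ℂ, IsPrimitiveRoot ζ d := ⟨_, Complex.isPrimitiveRoot_exp d hd0⟩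
  have hu0 : ∀ x ∈ G, u x ≠ 0 := by
    intro x hx
    simp only [hG, Finset.mem_filter, Finset.mem_univ, true_and] at hx
    exact mul_ne_zero hx.1 (inv_ne_zero hx.2)
  have hex : ∀ x, ∃ i, i < d ∧ (x ∈ G → χ (u x) = ζ ^ i) := by
    intro x
    by_cases hx : x ∈ G
    · have h1 : χ (u x) ^ d = 1 := by
        rw [← MulChar.pow_apply' χ hd0, ← hχ, pow_orderOf_eq_one,
          MulChar.one_apply (isUnit_iff_ne_zero.2 (hu0 x hx))]
      haveI : NeZero d := ⟨hd0⟩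
      obtain ⟨i, hi, h⟩ := hζ.eq_pow_of_pow_eq_one h1
      exact ⟨i, hi, fun _ => h.symm⟩
    · exact ⟨0, by omega, fun h => absurd h hx⟩
  choose I hI hIχ using hex
  set w : ℕ → Finset (ZMod p) := fun i => G.filter fun x => I x = i with hw
  have hrw : ∑ x ∈ G, χ (u x) = ∑ i ∈ Finset.range d, ζ ^ i * ((w i).card : ℂ) := by
    rw [← Finset.sum_fiberwise_of_maps_to (s := G) (t := Finset.range d) (g := I)
      (fun x _ => Finset.mem_range.2 (hI x))]
    apply Finset.sum_congr rfl
    intro i _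
    rw [Finset.sum_congr rfl (g := fun _ => ζ ^ i)]
    · simp [hw, mul_comm]
    · intro x hx
      rw [Finset.mem_filter] at hx
      rw [hIχ x hx.1, hx.2]
  have hcard : ∑ i ∈ Finset.range d, (w i).card = G.card :=
    (Finset.card_eq_sum_card_fiberwise (fun x _ => Finset.mem_coe.2 (Finset.mem_range.2 (hI x)))).symm
  have hqr : (0:ℝ) < (q : ℝ) - N - 2 := by
    have : ((N + 2 : ℕ) : ℝ) < q := by exact_mod_cast hqN
    push_cast at this; linarith
  have hdr : (0:ℝ) < d := by exact_mod_cast (by omega : 0 < d)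
  set K : ℝ := p * (q + N) / (d * ((q:ℝ) - N - 2)) with hK
  have hwK : ∀ i, ((w i).card : ℝ) ≤ K := by
    intro i
    rcases (w i).eq_empty_or_nonempty with he | ⟨x0, hx0⟩
    · rw [he]; simp; positivity
    have key := stepanov_core A1 B hX1 hX2 n d q N hnd (by omega) hn hq hqN hND (u x0 ^ n) (w i) (by
      intro y hy
      have hyG := (Finset.mem_filter.1 hy).1
      have hyI := (Finset.mem_filter.1 hy).2
      have hxG := (Finset.mem_filter.1 hx0).1
      have hxI := (Finset.mem_filter.1 hx0).2
      have hy' := hyG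
      simp only [hG, Finset.mem_filter, Finset.mem_univ, true_and] at hy'
      refine ⟨hy'.1, hy'.2, ?_⟩
      have e1 : χ (u y * (u x0)⁻¹) = 1 := by
        have : χ (u x0)⁻¹ = (χ (u x0))⁻¹ := by
          apply eq_inv_of_mul_eq_one_left
          rw [← map_mul, inv_mul_cancel₀ (hu0 x0 hxG), map_one]
        rw [map_mul, this, hIχ y hyG, hIχ x0 hxG, hyI, hxI]
        exact mul_inv_cancel₀ (pow_ne_zero _ (hζ.ne_zero hd0))
      have e2 := pow_eq_one_of_char χ d n hnd hχ _ (mul_ne_zero (hu0 y hyG) (inv_ne_zero (hu0 x0 hxG))) e1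
      have e3 : u y ^ n = u x0 ^ n := by
        rw [mul_pow, inv_pow] at e2
        exact (mul_inv_eq_one₀ (pow_ne_zero _ (hu0 x0 hxG))).1 e2
      rw [← e3]
      simp only [u]
      rw [mul_pow, mul_assoc, ← mul_pow, inv_mul_cancel₀ hy'.2, one_pow, mul_one])
    rw [hK, le_div_iff₀ (mul_pos hdr hqr)]
    have : (((w i).card * (d * (q - N - 2)) : ℕ) : ℝ) ≤ ((p * (q + N) : ℕ) : ℝ) := by exact_mod_cast key
    rw [Nat.sub_sub] at this
    push_cast [Nat.cast_sub hqN.le] at this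
    linarith
  have hz : ∑ i ∈ Finset.range d, ζ ^ i = 0 := hζ.geom_sum_eq_zero (by omega)
  have hfin : ∑ i ∈ Finset.range d, ζ ^ i * ((w i).card : ℂ)
      = ∑ i ∈ Finset.range d, ζ ^ i * ((((w i).card : ℝ) - K : ℝ) : ℂ) := by
    push_cast
    simp only [mul_sub, Finset.sum_sub_distrib]
    rw [← Finset.sum_mul, hz]; simp
  have hζn : ‖ζ‖ = 1 := hζ.norm'_eq_one hd0
  rw [hsum, hrw, hfin]
  refine (norm_sum_le _ _).trans ?_
  have : ∀ i ∈ Finset.range d, ‖ζ ^ i * ((((w i).card : ℝ) - K : ℝ) : ℂ)‖ = K - (w i).card := by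
    intro i _
    rw [norm_mul, norm_pow, hζn, one_pow, one_mul, Complex.norm_real, Real.norm_eq_abs,
      abs_of_nonpos (by linarith [hwK i])]; ring
  rw [Finset.sum_congr rfl this, Finset.sum_sub_distrib, ← Nat.cast_sum, hcard]
  simp only [Finset.sum_const, Finset.card_range, nsmul_eq_mul]
  have : (d:ℝ) * K = p + p * (2 * N + 2) / ((q:ℝ) - N - 2) := by
    rw [hK]; field_simp; ring
  rw [this]; linarith

lemma charT_shift (χ : MulChar (ZMod p) ℂ) (S S' : Finset (ZMod p)) (t x : ZMod p) :
    charT χ S S' (x + t) = charT χ (S.map (addLeftEmbedding t)) (S'.map (addLeftEmbedding t)) x := by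
  simp [charT, add_assoc]

lemma charT_conj (χ : MulChar (ZMod p) ℂ) (S S' : Finset (ZMod p)) (x : ZMod p) :
    charT χ S' S x = (starRingEnd ℂ) (charT χ S S' x) := by
  simp [charT, mul_comm]

lemma stepanov_char (χ : MulChar (ZMod p) ℂ) (d n q N : ℕ) (hnd : n * d + 1 = p)
    (hχ : orderOf χ = d) (hd : 2 ≤ d) (hn : 0 < n) (hq : q * q * d ≤ n) (hqN : N + 2 < q)
    (S S' : Finset (ZMod p)) (hdisj : Disjoint S S') (h0 : (S ∪ S').Nonempty)
    (hN : S.card + S'.card ≤ N) :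
    ‖∑ x, charT χ S S' x‖ ≤ p * (2 * N + 2) / ((q : ℝ) - N - 2) + N := by
  have main : ∀ S S' : Finset (ZMod p), Disjoint S S' → S.Nonempty → S.card + S'.card ≤ N →
      ‖∑ x, charT χ S S' x‖ ≤ p * (2 * N + 2) / ((q : ℝ) - N - 2) + N := by
    rintro S S' hdisj ⟨a, ha⟩ hN
    rw [← Equiv.sum_comp (Equiv.addRight (-a))]
    simp only [Equiv.coe_addRight, charT_shift]
    refine stepanov_char0 χ d n q N hnd hχ hd hn hq hqN _ _ ?_ ?_ (by simpa using hN)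
    · exact (Finset.disjoint_map _).2 hdisj
    · rw [Finset.mem_map]; exact ⟨a, ha, by simp⟩
  rcases S.eq_empty_or_nonempty with he | hne
  · have hS' : S'.Nonempty := by simpa [he] using h0
    have := main S' S hdisj.symm hS' (by omega)
    simp only [charT_conj χ S S'] at this
    rwa [← map_sum, RCLike.norm_conj] at this
  · exact main S S' hdisj hne hN

end StepanovChar
end MulAP

namespace MulAP
open scoped BigOperators

section GR
variable {α β κ ι η : Type}

/-- apply a parametrised combinatorial subspace -/
def app (s : ι → β ⊕ κ) (v : κ → β) : ι → β := fun i => Sum.elim id v (s i)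

/-- every variable occurs -/
def Proper (s : ι → β ⊕ κ) : Prop := ∀ k, ∃ i, s i = Sum.inr k

/-- view an `α`-subspace as an `Option α`-subspace -/
def lft (U : ι → α ⊕ η) : ι → Option α ⊕ η := fun i => (U i).map some id

lemma proper_lft {U : ι → α ⊕ η} (h : Proper U) : Proper (lft U) := by
  intro k
  obtain ⟨i, hi⟩ := h k
  exact ⟨i, by simp [lft, hi]⟩

/-- composition of subspaces -/
def cmp (s : ι → β ⊕ κ) (t : κ → β ⊕ η) : ι → β ⊕ η := fun i => Sum.elim Sum.inl t (s i)

lemma app_cmp (s : ι → β ⊕ κ) (t : κ → β ⊕ η) (v : η → β) : app (cmp s t) v = app s (app t v) := by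
  funext i
  rcases h : s i with b | k <;> simp [app, cmp, h]

lemma proper_cmp {s : ι → β ⊕ κ} {t : κ → β ⊕ η} (hs : Proper s) (ht : Proper t) :
    Proper (cmp s t) := by
  intro k
  obtain ⟨j, hj⟩ := ht k
  obtain ⟨i, hi⟩ := hs j
  exact ⟨i, by simp [cmp, hi, hj]⟩

lemma lft_cmp (s : ι → α ⊕ κ) (t : κ → α ⊕ η) : lft (cmp s t) = cmp (lft s) (lft t) := by
  funext i
  rcases h : s i with b | k <;> simp [lft, cmp, h]

theorem HJ (β C η : Type) [Finite β] [Finite C] [Finite η] :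
    ∃ (ι : Type) (_ : Fintype ι), ∀ c : (ι → β) → C, ∃ s : ι → β ⊕ η, Proper s ∧
      ∀ v v', c (app s v) = c (app s v') := by
  obtain ⟨ι, hι, h⟩ := Combinatorics.Subspace.exists_mono_in_high_dimension β C η
  refine ⟨ι, hι, fun c => ?_⟩
  obtain ⟨l, x, hx⟩ := h c
  exact ⟨l.idxFun, l.proper, fun v v' => (hx v).trans (hx v').symm⟩

theorem grP (α : Type) [Finite α] (m : ℕ) : ∀ (C : Type) [Finite C],
    ∃ (ι : Type) (_ : Fintype ι), ∀ c : (ι → Option α) → C, ∃ U : ι → α ⊕ Fin m, Proper U ∧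
      ∀ (w w' : Fin m → Option α) (f : Fin m), w f = none → (∀ i ≤ f, w i = w' i) →
        c (app (lft U) w) = c (app (lft U) w') := by
  induction m with
  | zero =>
    intro C _
    exact ⟨Empty, inferInstance, fun c => ⟨fun x => x.elim, fun k => k.elim0, fun w w' f => f.elim0⟩⟩
  | succ m ih =>
    intro C _
    obtain ⟨m', _, h3⟩ := ih (α → C)
    obtain ⟨ι2, _, h2⟩ := HJ (Option α) C m'
    refine ⟨Option ι2, inferInstance, fun c => ?_⟩
    obtain ⟨V, hV, hVc⟩ := h2 (fun y => c (fun o => o.elim none y))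
    obtain ⟨U3, hU3, hU3c⟩ := h3 (fun w' b => c (fun o => o.elim (some b) (fun i => Sum.elim
      (fun x : Option α => some (x.getD b)) w' (V i))))
    let U : Option ι2 → α ⊕ Fin (m+1) := fun o => o.elim (Sum.inr 0) (fun i => Sum.elim
      (fun x : Option α => x.elim (Sum.inr 0) Sum.inl) (fun j => (U3 j).map id Fin.succ) (V i))
    have e1 : ∀ w : Fin (m+1) → Option α, w 0 = none →
        app (lft U) w = fun o => o.elim none (app V (app (lft U3) (fun i => w i.succ))) := by
      intro w hw
      funext o
      rcases o with _ | i
      · simp [app, lft, U, hw]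
      · rcases hV : V i with x | j
        · rcases x with _ | a <;> simp [app, lft, U, hV, hw]
        · rcases hU : U3 j with a | l <;> simp [app, lft, U, hV, hU]
    have e2 : ∀ (w : Fin (m+1) → Option α) (b : α), w 0 = some b →
        app (lft U) w = fun o => o.elim (some b) (fun i => Sum.elim
          (fun x : Option α => some (x.getD b)) (app (lft U3) (fun i => w i.succ)) (V i)) := by
      intro w b hw
      funext o
      rcases o with _ | i
      · simp [app, lft, U, hw]
      · rcases hV : V i with x | j
        · rcases x with _ | a <;> simp [app, lft, U, hV, hw]
        · rcases hU : U3 j with a | l <;> simp [app, lft, U, hV, hU]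
    refine ⟨U, ?_, ?_⟩
    · intro k
      refine Fin.cases ⟨none, rfl⟩ (fun l => ?_) k
      obtain ⟨j, hj⟩ := hU3 l
      obtain ⟨i, hi⟩ := hV j
      exact ⟨some i, by simp [U, hi, hj]⟩
    · intro w w' f hf hww
      have h0 : w 0 = w' 0 := hww 0 (Fin.zero_le _)
      rcases hw0 : w 0 with _ | b
      · rw [e1 w hw0, e1 w' (h0 ▸ hw0)]
        exact hVc _ _
      · rw [e2 w b hw0, e2 w' b (h0 ▸ hw0)]
        have hf0 : f ≠ 0 := by rintro rfl; rw [hw0] at hf; cases hf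
        obtain ⟨f', rfl⟩ := Fin.exists_succ_eq.2 hf0
        exact congrFun (hU3c (fun i => w i.succ) (fun i => w' i.succ) f' hf
          (fun i hi => hww _ (Fin.succ_le_succ_iff.2 hi))) b

/-- colour depends only on the part up to any occurrence of `none` -/
def PrefixOnly {M : ℕ} {C : Type} (c : (Fin M → Option α) → C) : Prop :=
  ∀ (w w' : Fin M → Option α) (f : Fin M), w f = none → (∀ i ≤ f, w i = w' i) → c w = c w'

theorem grQ (α : Type) [Finite α] [Nonempty α] (C : Type) [Finite C] (m : ℕ) :
    ∃ M : ℕ, ∀ c : (Fin M → Option α) → C, PrefixOnly c → ∃ U : Fin M → α ⊕ Fin m, Proper U ∧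
      ∀ (w w' : Fin m → Option α) (f : Fin m), w f = none → w' f = none →
        (∀ i < f, w i ≠ none) → (∀ i < f, w' i ≠ none) →
        c (app (lft U) w) = c (app (lft U) w') := by
  induction m with
  | zero => exact ⟨0, fun c _ => ⟨fun x => x.elim0, fun k => k.elim0, fun w w' f => f.elim0⟩⟩
  | succ m ih =>
    obtain ⟨M2, h2⟩ := ih
    obtain ⟨ι1, _, h1⟩ := HJ α ((Fin M2 → Option α) → C) Unit
    let L := Fintype.card ι1
    let e : ι1 ≃ Fin L := Fintype.equivFin ι1
    refine ⟨L + M2, fun c hc => ?_⟩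
    obtain ⟨V, hV, hVc⟩ := h1 (fun x y => c (Fin.append (fun i => some (x (e.symm i))) y))
    let U1 : Fin L → α ⊕ Unit := fun i => V (e.symm i)
    let a0 : α := Classical.arbitrary α
    obtain ⟨U2, hU2, hU2c⟩ := h2
      (fun y => c (Fin.append (fun i => some (app V (fun _ => a0) (e.symm i))) y)) (by
        intro w w' f hf hww
        refine hc _ _ (Fin.natAdd L f) (by simpa using hf) ?_
        intro i
        refine Fin.addCases (fun i _ => by simp) (fun i hi => ?_) i
        simp only [Fin.append_right]
        exact hww i (by simpa using hi))
    let U : Fin (L + M2) → α ⊕ Fin (m+1) := Fin.append (fun i => (U1 i).map id (fun _ => 0))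
      (fun j => (U2 j).map id Fin.succ)
    have eU : ∀ w : Fin (m+1) → Option α, app (lft U) w =
        Fin.append (app (lft U1) (fun _ => w 0)) (app (lft U2) (fun i => w i.succ)) := by
      intro w
      funext i
      refine Fin.addCases (fun i => ?_) (fun i => ?_) i
      · rcases h : U1 i with a | l <;> simp [app, lft, U, h]
      · rcases h : U2 i with a | l <;> simp [app, lft, U, h]
    refine ⟨U, ?_, ?_⟩
    · intro k
      refine Fin.cases ?_ (fun l => ?_) k
      · obtain ⟨i, hi⟩ := hV ()
        exact ⟨Fin.castAdd M2 (e i), by simp [U, U1, hi]⟩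
      · obtain ⟨j, hj⟩ := hU2 l
        exact ⟨Fin.natAdd L j, by simp [U, hj]⟩
    · intro w w' f hf hf' hw hw'
      rw [eU, eU]
      refine Fin.cases (motive := fun f => w f = none → w' f = none → (∀ i < f, w i ≠ none) →
        (∀ i < f, w' i ≠ none) → _ = _) ?_ ?_ f hf hf' hw hw'
      · intro h h' _ _
        obtain ⟨i, hi⟩ := hV ()
        refine hc _ _ (Fin.castAdd M2 (e i)) ?_ ?_
        · simp [app, lft, U1, hi, h]
        · intro j
          refine Fin.addCases (fun j _ => by simp [h, h']) (fun j hj => ?_) j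
          exfalso
          have := Fin.le_def.1 hj
          simp at this
          omega
      · intro g h h' hw hw'
        have key : ∀ w : Fin (m+1) → Option α, w 0 ≠ none → ∀ y,
            c (Fin.append (app (lft U1) (fun _ => w 0)) y)
              = c (Fin.append (fun i => some (app V (fun _ => a0) (e.symm i))) y) := by
          intro w hw0 y
          obtain ⟨b, hb⟩ := Option.ne_none_iff_exists'.1 hw0
          have := congrFun (hVc (fun _ => b) (fun _ => a0)) y
          rw [← this]
          congr 2
          funext i
          rcases h : V (e.symm i) with a | l <;> simp [app, lft, U1, h, hb]
        rw [key w (hw 0 (Fin.succ_pos g)), key w' (hw' 0 (Fin.succ_pos g))]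
        exact hU2c _ _ g h h' (fun i hi => hw _ (Fin.succ_lt_succ_iff.2 hi))
          (fun i hi => hw' _ (Fin.succ_lt_succ_iff.2 hi))

/-- Graham–Rothschild theorem for lines -/
theorem gr (α : Type) [Finite α] [Nonempty α] (C : Type) [Finite C] (η : Type) [Finite η] :
    ∃ (ι : Type) (_ : Fintype ι), ∀ c : (ι → Option α) → C, ∃ U : ι → α ⊕ η, Proper U ∧
      ∀ (w w' : η → Option α), (∃ i, w i = none) → (∃ i, w' i = none) →
        c (app (lft U) w) = c (app (lft U) w') := by
  classical
  haveI := Fintype.ofFinite C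
  haveI := Fintype.ofFinite η
  let m := Fintype.card C * Fintype.card η
  obtain ⟨M, hM⟩ := grQ α C m
  obtain ⟨ι, hι, h⟩ := grP α M C
  refine ⟨ι, hι, fun c => ?_⟩
  obtain ⟨U1, hU1, hU1c⟩ := h c
  obtain ⟨U2, hU2, hU2c⟩ := hM (fun w => c (app (lft U1) w)) hU1c
  let a0 : α := Classical.arbitrary α
  let col : Fin m → C := fun f => c (app (lft U1) (app (lft U2) (fun i => if i < f then some a0 else none)))
  have hcol : ∀ (w : Fin m → Option α) f, w f = none → (∀ i < f, w i ≠ none) →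
      c (app (lft U1) (app (lft U2) w)) = col f := by
    intro w f hf hw
    exact hU2c w _ f hf (by simp) hw (fun i hi => by simp [hi])
  haveI : Nonempty C := ⟨c (fun _ => none)⟩
  obtain ⟨y, hy⟩ := Fintype.exists_le_card_fiber_of_mul_le_card col (n := Fintype.card η)
    (by simp [m])
  have : Fintype.card η ≤ Fintype.card {x // col x = y} := by
    rw [Fintype.card_subtype]; exact hy
  obtain ⟨emb⟩ := Function.Embedding.nonempty_of_card_le this
  let U3 : Fin m → α ⊕ η := fun i => if h : ∃ k, (emb k).1 = i then Sum.inr h.choose else Sum.inl a0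
  have hU3e : ∀ k, U3 (emb k).1 = Sum.inr k := by
    intro k
    have hk : ∃ k', (emb k').1 = (emb k).1 := ⟨k, rfl⟩
    simp only [U3, dif_pos hk]
    congr 1
    exact emb.injective (Subtype.ext hk.choose_spec)
  refine ⟨cmp U1 (cmp U2 U3), proper_cmp hU1 (proper_cmp hU2 (fun k => ⟨_, hU3e k⟩)), ?_⟩
  have main : ∀ w : η → Option α, (∃ i, w i = none) → c (app (lft (cmp U1 (cmp U2 U3))) w) = y := by
    rintro w ⟨k, hk⟩
    rw [lft_cmp, lft_cmp, app_cmp, app_cmp]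
    have hne : (Finset.univ.filter (fun i => app (lft U3) w i = none)).Nonempty :=
      ⟨(emb k).1, by rw [Finset.mem_filter]; refine ⟨Finset.mem_univ _, ?_⟩; unfold app lft; rw [hU3e]; exact hk⟩
    set f := Finset.min' _ hne with hf
    have hfm := Finset.min'_mem _ hne
    rw [← hf] at hfm
    simp only [Finset.mem_filter, Finset.mem_univ, true_and] at hfm
    rw [hcol _ f hfm]
    · by_cases hx : ∃ k, (emb k).1 = f
      · obtain ⟨k', hk'⟩ := hx
        have := (emb k').2
        rw [hk'] at this
        simpa using this
      · simp [app, lft, U3, dif_neg hx] at hfm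
    · intro i hi hni
      exact absurd (Finset.min'_le _ i (by simpa using hni)) (not_le.2 hi)
  intro w w' hw hw'
  rw [main w hw, main w' hw']
end GR
end MulAP

namespace MulAP
open scoped BigOperators
open Finset (univ)

section basics
variable {X Y Z : Type}

noncomputable def ind {X : Type} (A : Set X) (x : X) : ℝ := A.indicator (fun _ => (1:ℝ)) x
noncomputable def dens {X : Type} [Fintype X] (A : Set X) : ℝ := 𝔼 x, ind A x

lemma ind_mem {A : Set X} {x : X} (h : x ∈ A) : ind A x = 1 := by simp [ind, h]
lemma ind_not_mem {A : Set X} {x : X} (h : x ∉ A) : ind A x = 0 := by simp [ind, h]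
lemma ind_nonneg (A : Set X) (x : X) : 0 ≤ ind A x := by
  by_cases h : x ∈ A <;> simp [ind_mem, ind_not_mem, h]
lemma ind_le_one (A : Set X) (x : X) : ind A x ≤ 1 := by
  by_cases h : x ∈ A <;> simp [ind_mem, ind_not_mem, h]

variable [Fintype X] [Fintype Y] [Fintype Z]

lemma expect_mono {f g : X → ℝ} (h : ∀ x, f x ≤ g x) : 𝔼 x, f x ≤ 𝔼 x, g x :=
  Finset.expect_le_expect (fun x _ => h x)

lemma expect_const_le {c : ℝ} (hc : 0 ≤ c) : 𝔼 _x : X, c ≤ c := by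
  rcases isEmpty_or_nonempty X with h | h
  · simpa using hc
  · rw [Fintype.expect_const]

lemma expect_le_of {f : X → ℝ} {c : ℝ} (hc : 0 ≤ c) (h : ∀ x, f x ≤ c) : 𝔼 x, f x ≤ c :=
  (expect_mono h).trans (expect_const_le hc)

lemma expect_nn {f : X → ℝ} (h : ∀ x, 0 ≤ f x) : 0 ≤ 𝔼 x, f x :=
  Finset.expect_nonneg (fun x _ => h x)

lemma dens_nonneg (A : Set X) : 0 ≤ dens A := expect_nn (ind_nonneg A)
lemma dens_le_one (A : Set X) : dens A ≤ 1 := expect_le_of zero_le_one (ind_le_one A)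

lemma exists_ge_expect [Nonempty X] (f : X → ℝ) : ∃ x, 𝔼 y, f y ≤ f x := by
  obtain ⟨x, _, h⟩ := Finset.exists_le_of_le_expect (s := univ) (f := f) (Finset.univ_nonempty) le_rfl
  exact ⟨x, h⟩

lemma exists_mem_of_dens {A : Set X} (h : 0 < dens A) : A.Nonempty := by
  by_contra hA
  rw [Set.not_nonempty_iff_eq_empty] at hA
  subst hA
  simp [dens, ind] at h

lemma markov {f : X → ℝ} {δ : ℝ} (hδ : 0 ≤ δ) (hf : ∀ x, f x ≤ 1) (h : δ ≤ 𝔼 x, f x) :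
    δ / 2 ≤ dens {x | δ / 2 ≤ f x} := by
  have : 𝔼 x, f x ≤ 𝔼 x, (ind {x | δ / 2 ≤ f x} x + δ / 2) := by
    apply expect_mono
    intro x
    by_cases hx : δ / 2 ≤ f x
    · rw [ind_mem (by exact hx)]; linarith [hf x]
    · rw [ind_not_mem (by exact hx)]; linarith
  rw [Finset.expect_add_distrib] at this
  have h2 := expect_const_le (X := X) (c := δ/2) (by linarith)
  unfold dens
  linarith

lemma pigeon {T : Type} [Fintype T] {G : Set X} (P : T → Set X) (h : ∀ x ∈ G, ∃ t, x ∈ P t)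
    (hG : 0 < dens G) : ∃ t, dens G / Fintype.card T ≤ dens (P t) := by
  obtain ⟨x0, hx0⟩ := exists_mem_of_dens hG
  have : Nonempty T := ⟨(h x0 hx0).choose⟩
  have h1 : dens G ≤ ∑ t, dens (P t) := by
    unfold dens
    rw [← Finset.expect_sum_comm]
    apply expect_mono
    intro x
    by_cases hx : x ∈ G
    · obtain ⟨t, ht⟩ := h x hx
      rw [ind_mem hx, ← ind_mem ht]
      exact Finset.single_le_sum (f := fun t => ind (P t) x) (fun t _ => ind_nonneg _ _) (Finset.mem_univ t)
    · rw [ind_not_mem hx]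
      exact Finset.sum_nonneg (fun t _ => ind_nonneg _ _)
  obtain ⟨t, ht⟩ := exists_ge_expect (fun t => dens (P t))
  refine ⟨t, le_trans ?_ ht⟩
  rw [Fintype.expect_eq_sum_div_card]
  gcongr

lemma expect_prod_type (f : X × Y → ℝ) : 𝔼 z, f z = 𝔼 x, 𝔼 y, f (x, y) := by
  rw [← Finset.expect_product]; rfl

lemma expect_comm2 (f : X → Y → ℝ) : 𝔼 x, 𝔼 y, f x y = 𝔼 y, 𝔼 x, f x y := Finset.expect_comm _ _ _

lemma expect_map [DecidableEq Z] (Φ : X → Z) (c : ℕ) (hc : c ≠ 0)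
    (h : ∀ z, (univ.filter (fun x => Φ x = z)).card = c) (f : Z → ℝ) :
    𝔼 x, f (Φ x) = 𝔼 z, f z := by
  have hcard : Fintype.card X = c * Fintype.card Z := by
    rw [← Finset.card_univ, Finset.card_eq_sum_card_fiberwise (f := Φ) (t := univ) (by simp)]
    simp [h, mul_comm]
  rw [Fintype.expect_eq_sum_div_card, Fintype.expect_eq_sum_div_card, hcard,
    ← Finset.sum_fiberwise (s := univ) (g := Φ)]
  have : ∀ z, ∑ x ∈ univ.filter (fun x => Φ x = z), f (Φ x) = c * f z := by
    intro z
    rw [Finset.sum_congr rfl (g := fun _ => f z)]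
    · simp [h]
    · intro x hx; rw [(Finset.mem_filter.1 hx).2]
  simp_rw [this]
  rw [← Finset.mul_sum]
  push_cast
  rw [mul_div_mul_left]
  exact_mod_cast hc

variable {ι ι' ι1 ι2 β : Type} [Fintype ι] [DecidableEq ι] [Fintype ι'] [DecidableEq ι']
  [Fintype ι1] [DecidableEq ι1] [Fintype ι2] [DecidableEq ι2] [Fintype β]

lemma expect_sumArrow (f : (ι1 ⊕ ι2 → β) → ℝ) :
    𝔼 w, f w = 𝔼 x, 𝔼 y, f (Sum.elim x y) := by
  rw [← expect_prod_type (fun z : (ι1 → β) × (ι2 → β) => f (Sum.elim z.1 z.2))]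
  apply Fintype.expect_equiv (Equiv.sumArrowEquivProdArrow ι1 ι2 β)
  intro w
  congr 1
  funext i
  rcases i with i | i <;> rfl

lemma expect_comp_equiv (e : ι1 ≃ ι2) (f : (ι1 → β) → ℝ) :
    𝔼 w, f w = 𝔼 w : ι2 → β, f (fun i => w (e i)) := by
  symm
  apply Fintype.expect_equiv (e.symm.arrowCongr (Equiv.refl β))
  intro w; rfl

lemma expect_extend (c : ι' ↪ ι) (f : (ι → β) → ℝ) :
    𝔼 z : ι → β, 𝔼 x : ι' → β, f (Function.extend c x z) = 𝔼 z, f z := by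
  rcases isEmpty_or_nonempty β with hb | hb
  · rcases isEmpty_or_nonempty ι with hi | hi
    · have : IsEmpty ι' := ⟨fun j => hi.elim (c j)⟩
      refine Finset.expect_congr rfl fun z _ => ?_
      rw [Finset.expect_congr rfl (g := fun _ => f z)]
      · rw [Fintype.expect_const]
      · intro x _; congr 1; funext i; exact hi.elim i
    · have : IsEmpty (ι → β) := ⟨fun w => hb.elim (w (Classical.arbitrary ι))⟩
      simp
  rw [← expect_prod_type (fun q : (ι → β) × (ι' → β) => f (Function.extend c q.2 q.1))]
  let e : (ι → β) × (ι' → β) ≃ (ι → β) × (ι' → β) :=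
    { toFun := fun q => (Function.extend c q.2 q.1, q.1 ∘ c)
      invFun := fun q => (Function.extend c q.2 q.1, q.1 ∘ c)
      left_inv := by
        rintro ⟨z, x⟩
        refine Prod.ext ?_ ?_
        · funext i
          by_cases h : ∃ j, c j = i
          · obtain ⟨j, rfl⟩ := h
            simp [c.injective.extend_apply]
          · simp [Function.extend_apply' _ _ _ h]
        · funext j; simp [c.injective.extend_apply]
      right_inv := by
        rintro ⟨z, x⟩
        refine Prod.ext ?_ ?_
        · funext i
          by_cases h : ∃ j, c j = i
          · obtain ⟨j, rfl⟩ := h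
            simp [c.injective.extend_apply]
          · simp [Function.extend_apply' _ _ _ h]
        · funext j; simp [c.injective.extend_apply] }
  refine (Fintype.expect_equiv e (fun q => f (Function.extend c q.2 q.1)) (fun q => f q.1)
    (fun q => rfl)).trans ?_
  rw [expect_prod_type]
  refine Finset.expect_congr rfl fun z _ => ?_
  exact Fintype.expect_const (ι := ι' → β) (f z)

lemma exists_extend [Nonempty β] (c : ι' ↪ ι) (A : Set (ι → β)) :
    ∃ z, dens A ≤ dens {x : ι' → β | Function.extend c x z ∈ A} := by
  obtain ⟨z, hz⟩ := exists_ge_expect (fun z : ι → β => 𝔼 x : ι' → β, ind A (Function.extend c x z))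
  rw [expect_extend] at hz
  exact ⟨z, hz⟩

lemma expect_prod (g : ι → β → ℝ) : 𝔼 w : ι → β, ∏ i, g i (w i) = ∏ i, 𝔼 b, g i b := by
  simp_rw [Fintype.expect_eq_sum_div_card]
  rw [Finset.prod_div_distrib, Finset.prod_univ_sum]
  simp

lemma dens_pi [Nonempty β] (s : Finset ι) (P : Set β) : dens {w : ι → β | ∀ i ∈ s, w i ∈ P} = dens P ^ s.card := by
  have h1 : ∀ w : ι → β, ind {w : ι → β | ∀ i ∈ s, w i ∈ P} w =
      ∏ i, (if i ∈ s then ind P (w i) else 1) := by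
    intro w
    rw [Finset.prod_ite_mem, Finset.univ_inter]
    by_cases h : ∀ i ∈ s, w i ∈ P
    · rw [ind_mem (by exact h), Finset.prod_congr rfl (fun i hi => ind_mem (h i hi))]; simp
    · rw [ind_not_mem (by exact h)]
      push Not at h
      obtain ⟨i, hi, hw⟩ := h
      exact (Finset.prod_eq_zero (f := fun i => ind P (w i)) hi (ind_not_mem hw)).symm
  unfold dens
  simp_rw [h1]
  rw [expect_prod (fun i b => if i ∈ s then ind P b else 1)]
  have : ∀ i, 𝔼 b, (if i ∈ s then ind P b else 1) = if i ∈ s then 𝔼 b, ind P b else 1 := by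
    intro i; split_ifs <;> simp
  simp_rw [this]
  rw [Finset.prod_ite_mem, Finset.univ_inter, Finset.prod_const]
end basics

section MD
variable {β : Type} [Fintype β]

/-- dense sets contain subspaces with parameter set `κ` -/
def SubAt (β κ : Type) [Fintype β] (δ : ℝ) : Prop :=
  ∃ n : ℕ, ∀ (ι : Type) [Fintype ι] [DecidableEq ι], n ≤ Fintype.card ι → ∀ A : Set (ι → β),
    δ ≤ dens A → ∃ W : ι → β ⊕ κ, Proper W ∧ ∀ v, app W v ∈ A

lemma subAt_of [Nonempty β] {κ : Type} {δ : ℝ} (ι0 : Type) [Fintype ι0] [DecidableEq ι0]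
    (h : ∀ A : Set (ι0 → β), δ ≤ dens A → ∃ W : ι0 → β ⊕ κ, Proper W ∧ ∀ v, app W v ∈ A) :
    SubAt β κ δ := by
  refine ⟨Fintype.card ι0, fun ι _ _ hc A hA => ?_⟩
  obtain ⟨c⟩ := Function.Embedding.nonempty_of_card_le hc
  obtain ⟨z, hz⟩ := exists_extend c A
  obtain ⟨W, hW, hWA⟩ := h _ (hA.trans hz)
  refine ⟨Function.extend c W (fun i => Sum.inl (z i)), ?_, ?_⟩
  · intro k
    obtain ⟨i, hi⟩ := hW k
    exact ⟨c i, by rw [c.injective.extend_apply, hi]⟩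
  · intro v
    have := hWA v
    simp only [Set.mem_ofPred_eq] at this
    convert this using 1
    funext i
    by_cases h : ∃ j, c j = i
    · obtain ⟨j, rfl⟩ := h
      simp [app, c.injective.extend_apply]
    · simp [app, Function.extend_apply' _ _ _ h]

lemma SubAt.mono {κ : Type} {δ δ' : ℝ} (h : SubAt β κ δ) (hd : δ ≤ δ') : SubAt β κ δ' := by
  obtain ⟨n, hn⟩ := h
  exact ⟨n, fun ι _ _ hc A hA => hn ι hc A (hd.trans hA)⟩

theorem mdhj [Nonempty β] (h : ∀ δ > 0, SubAt β Unit δ) (κ : Type) [Finite κ] :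
    ∀ δ > 0, SubAt β κ δ := by
  classical
  revert κ
  apply Finite.induction_empty_option
  · rintro κ κ' e ih δ hδ
    obtain ⟨n, hn⟩ := ih δ hδ
    refine ⟨n, fun ι _ _ hc A hA => ?_⟩
    obtain ⟨W, hW, hWA⟩ := hn ι hc A hA
    refine ⟨fun i => (W i).map id e, ?_, ?_⟩
    · intro k
      obtain ⟨i, hi⟩ := hW (e.symm k)
      exact ⟨i, by simp [hi]⟩
    · intro v
      convert hWA (v ∘ e) using 1
      funext i
      rcases h : W i with b | k <;> simp [app, h]
  · intro δ hδ
    refine ⟨0, fun ι _ _ hc A hA => ?_⟩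
    obtain ⟨x, hx⟩ := exists_mem_of_dens (hδ.trans_le hA)
    exact ⟨fun i => Sum.inl (x i), fun k => k.elim, fun v => hx⟩
  · intro κ _ ih δ hδ
    obtain ⟨n1, h1⟩ := h (δ/2) (by positivity)
    let T := Fin n1 → β ⊕ Unit
    have hT : (0:ℝ) < Fintype.card T := by
      have : Nonempty T := ⟨fun _ => Sum.inr ()⟩
      exact_mod_cast Fintype.card_pos
    obtain ⟨n2, h2⟩ := ih (δ / 2 / Fintype.card T) (by positivity)
    apply subAt_of (Fin n1 ⊕ Fin n2)
    intro A hA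
    have hA' : δ ≤ 𝔼 y : Fin n2 → β, dens {x : Fin n1 → β | Sum.elim x y ∈ A} := by
      rw [dens, expect_sumArrow, expect_comm2] at hA
      exact hA
    have hm := markov hδ.le (fun y => dens_le_one _) hA'
    obtain ⟨s, hs⟩ := pigeon (T := {s : T // Proper s})
      (fun s => {y : Fin n2 → β | ∀ v, Sum.elim (app s.1 v) y ∈ A})
      (fun y hy => by
        obtain ⟨s, hs, hs2⟩ := h1 (Fin n1) (by simp) _ hy
        exact ⟨⟨s, hs⟩, hs2⟩) (lt_of_lt_of_le (by positivity) hm)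
    have hs' : δ / 2 / Fintype.card T ≤ dens {y : Fin n2 → β | ∀ v, Sum.elim (app s.1 v) y ∈ A} := by
      refine le_trans ?_ hs
      have hle : (Fintype.card {s : T // Proper s} : ℝ) ≤ Fintype.card T := by
        exact_mod_cast Fintype.card_subtype_le _
      have : Nonempty {s : T // Proper s} := ⟨s⟩
      have h0 : (0:ℝ) < Fintype.card {s : T // Proper s} := by exact_mod_cast Fintype.card_pos
      exact div_le_div₀ (by linarith [dens_nonneg {y : Fin n2 → β | δ / 2 ≤ dens {x : Fin n1 → β | Sum.elim x y ∈ A}}]) hm h0 hle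
    obtain ⟨S, hS, hSA⟩ := h2 (Fin n2) (by simp) _ hs'
    refine ⟨Sum.elim (fun i => (s.1 i).map id (fun _ => none)) (fun j => (S j).map id some), ?_, ?_⟩
    · intro k
      rcases k with _ | k
      · obtain ⟨i, hi⟩ := s.2 ()
        exact ⟨Sum.inl i, by simp [hi]⟩
      · obtain ⟨i, hi⟩ := hS k
        exact ⟨Sum.inr i, by simp [hi]⟩
    · intro v
      convert hSA (v ∘ some) (fun _ => v none) using 1
      funext i
      rcases i with i | i
      · rcases h : s.1 i with b | k <;> simp [app, h]
      · rcases h : S i with b | k <;> simp [app, h]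
end MD

section ID
variable {α : Type} [Fintype α]

/-- replace `none` by `a` -/
def fill {ι : Type} (a : α) (w : ι → Option α) : ι → Option α := fun i => some ((w i).getD a)

def Insens {ι : Type} (a : α) (R : Set (ι → Option α)) : Prop := ∀ w, w ∈ R ↔ fill a w ∈ R

def mix {ι : Type} (τ : ι → Option α) (x : ι → α) : ι → Option α := fun i => (τ i).map (fun _ => x i)

lemma expect_mix [Nonempty α] {ι : Type} [Fintype ι] [DecidableEq ι] (f : (ι → Option α) → ℝ) :
    𝔼 w, f w = 𝔼 τ : ι → Option α, 𝔼 x : ι → α, f (mix τ x) := by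
  classical
  let φ : Option α × α → Option α := fun q => q.1.map (fun _ => q.2)
  have hφ : ∀ z, (univ.filter (fun q => φ q = z)).card = Fintype.card α := by
    intro z
    rcases z with _ | b
    · have : (univ.filter (fun q => φ q = none)) = ({none} : Finset (Option α)) ×ˢ (univ : Finset α) := by
        ext ⟨t, b⟩; simp [φ, eq_comm]
      rw [this]; simp
    · have : (univ.filter (fun q => φ q = some b)) = (univ.image some : Finset (Option α)) ×ˢ ({b} : Finset α) := by
        ext ⟨t, c⟩
        rcases t with _ | t <;> simp [φ, eq_comm]
      rw [this, Finset.card_product, Finset.card_image_of_injective _ (Option.some_injective α)]; simp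
  rw [← expect_prod_type (fun q : (ι → Option α) × (ι → α) => f (mix q.1 q.2))]
  rw [← expect_map (fun y : ι → Option α × α => φ ∘ y) (Fintype.card α ^ Fintype.card ι)
    (pow_ne_zero _ Fintype.card_ne_zero) (by
      intro z
      have : (univ.filter (fun y : ι → Option α × α => φ ∘ y = z)) =
          Fintype.piFinset (fun i => univ.filter (fun q => φ q = z i)) := by
        ext y; simp [funext_iff]
      rw [this, Fintype.card_piFinset]
      simp [hφ]) f]
  apply Fintype.expect_equiv (Equiv.arrowProdEquivProdArrow ι (fun _ => Option α) (fun _ => α))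
  intro y; rfl

theorem idhj [Nonempty α] (h : ∀ (κ : Type) [Finite κ], ∀ δ > 0, SubAt α κ δ) (κ : Type) [Finite κ]
    (ε : ℝ) (hε : 0 < ε) :
    ∃ N : ℕ, ∀ (a : α) (R : Set (Fin N → Option α)), Insens a R → ε ≤ dens R →
      ∃ W : Fin N → Option α ⊕ κ, Proper W ∧ ∀ v, app W v ∈ R := by
  classical
  suffices H : ∃ (ι : Type) (_ : Fintype ι) (_ : DecidableEq ι), ∀ (a : α) (R : Set (ι → Option α)),
      Insens a R → ε ≤ dens R → ∃ W : ι → Option α ⊕ κ, Proper W ∧ ∀ v, app W v ∈ R by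
    obtain ⟨ι, _, _, H⟩ := H
    refine ⟨Fintype.card ι, fun a R hR hd => ?_⟩
    let e := Fintype.equivFin ι
    obtain ⟨W, hW, hWR⟩ := H a {w | (fun i => w (e.symm i)) ∈ R} (fun w => hR _) (by
      unfold dens at hd ⊢
      rw [expect_comp_equiv e]
      convert hd using 3 with w
      simp [ind, Set.indicator_apply])
    refine ⟨fun i => W (e.symm i), fun k => ?_, fun v => hWR v⟩
    obtain ⟨i, hi⟩ := hW k
    exact ⟨e i, by simpa using hi⟩
  obtain ⟨n, hn⟩ := h κ (ε/2) (by positivity)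
  obtain ⟨L, hL⟩ : ∃ L : ℕ, (n : ℝ) * (1/2 : ℝ) ^ L ≤ ε / 4 := by
    have : Filter.Tendsto (fun L : ℕ => (n : ℝ) * (1/2 : ℝ) ^ L) Filter.atTop (nhds ((n:ℝ) * 0)) :=
      (tendsto_pow_atTop_nhds_zero_of_lt_one (by norm_num) (by norm_num)).const_mul _
    rw [mul_zero] at this
    exact ((this.eventually_lt_const (by positivity : (0:ℝ) < ε/4)).exists).imp (fun _ h => h.le)
  refine ⟨Fin n × Fin L, inferInstance, inferInstance, fun a R hR hd => ?_⟩
  let Bad : Fin n → Set (Fin n × Fin L → Option α) := fun j =>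
    {τ | ∀ i ∈ univ.map (Function.Embedding.sectR j (Fin L)), τ i ∈ ({none} : Set (Option α))}
  have hbad : ∀ j, dens (Bad j) ≤ (1/2 : ℝ) ^ L := by
    intro j
    simp only [Bad]
    rw [dens_pi, Finset.card_map, Finset.card_univ, Fintype.card_fin]
    apply pow_le_pow_left₀ (dens_nonneg _)
    have : dens ({none} : Set (Option α)) = 1 / (Fintype.card α + 1) := by
      unfold dens
      rw [Fintype.expect_eq_sum_div_card]
      simp [ind, Set.indicator_apply]
    rw [this]
    have : (1:ℝ) ≤ Fintype.card α := by exact_mod_cast Fintype.card_pos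
    gcongr; linarith
  have hex : ∃ τ : Fin n × Fin L → Option α, (∀ j, τ ∉ Bad j) ∧
      ε / 2 ≤ dens {x : Fin n × Fin L → α | mix τ x ∈ R} := by
    by_contra hcon
    push Not at hcon
    have h1 : dens R ≤ 𝔼 τ : Fin n × Fin L → Option α, ((∑ j, ind (Bad j) τ) + ε / 2) := by
      unfold dens
      rw [expect_mix]
      apply expect_mono
      intro τ
      by_cases hτ : ∃ j, τ ∈ Bad j
      · obtain ⟨j, hj⟩ := hτ
        have a1 : 1 ≤ ∑ j, ind (Bad j) τ := by
          rw [← ind_mem hj]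
          exact Finset.single_le_sum (f := fun j => ind (Bad j) τ) (fun t _ => ind_nonneg _ _) (Finset.mem_univ j)
        have a2 : 𝔼 x, ind R (mix τ x) ≤ 1 := expect_le_of zero_le_one (fun x => ind_le_one _ _)
        linarith
      · push Not at hτ
        have a1 : 0 ≤ ∑ j, ind (Bad j) τ := Finset.sum_nonneg (fun j _ => ind_nonneg _ _)
        have a2 := hcon τ hτ
        have a3 : 𝔼 x, ind R (mix τ x) = dens {x : Fin n × Fin L → α | mix τ x ∈ R} := rfl
        rw [a3]
        linarith
    rw [Finset.expect_add_distrib, Finset.expect_sum_comm] at h1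
    have h2 : ∑ j, 𝔼 τ, ind (Bad j) τ ≤ ε / 4 := by
      calc ∑ j, 𝔼 τ, ind (Bad j) τ ≤ ∑ j : Fin n, (1/2 : ℝ) ^ L := Finset.sum_le_sum (fun j _ => hbad j)
        _ = n * (1/2 : ℝ) ^ L := by simp
        _ ≤ _ := hL
    have h3 := expect_const_le (X := Fin n × Fin L → Option α) (c := ε/2) (by linarith)
    linarith
  obtain ⟨τ, hτ, hτd⟩ := hex
  have hc : ∀ j, ∃ l, τ (j, l) ≠ none := by
    intro j
    have := hτ j
    simpa [Bad] using this
  choose l hl using hc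
  let c : Fin n ↪ Fin n × Fin L := ⟨fun j => (j, l j), fun j j' h => congrArg Prod.fst h⟩
  obtain ⟨z, hz⟩ := exists_extend c {x : Fin n × Fin L → α | mix τ x ∈ R}
  obtain ⟨S, hS, hSR⟩ := hn (Fin n) (by simp) _ (hτd.trans hz)
  refine ⟨Function.extend c (lft S) (fun i => Sum.inl (mix τ z i)), ?_, ?_⟩
  · intro k
    obtain ⟨i, hi⟩ := hS k
    exact ⟨c i, by rw [c.injective.extend_apply]; simp [lft, hi]⟩
  · intro v
    have h1 := hSR (fun k => (v k).getD a)
    simp only [Set.mem_ofPred_eq] at h1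
    rw [hR] at h1 ⊢
    convert h1 using 1
    funext i
    by_cases hi : ∃ j, c j = i
    · obtain ⟨j, rfl⟩ := hi
      obtain ⟨t, ht⟩ := Option.ne_none_iff_exists'.1 (hl j)
      have ht' : τ (c j) = some t := ht
      rcases hs : S j with b | k <;> simp [fill, app, mix, c.injective.extend_apply, lft, hs, ht']
    · simp [fill, app, mix, Function.extend_apply' _ _ _ hi]
end ID
end MulAP

namespace MulAP
open scoped BigOperators
open Finset (univ)

section C
variable {α : Type} [Fintype α]

lemma fill_fill {ι : Type} (a : α) (w : ι → Option α) : fill a (fill a w) = fill a w := by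
  funext i; simp [fill]

lemma fill_app {ι κ : Type} (a : α) (W : ι → Option α ⊕ κ) (v : κ → Option α) :
    fill a (app W v) = fill a (app W (fill a v)) := by
  funext i
  rcases h : W i with b | k <;> simp [fill, app, h]

lemma fill_lft {ι η : Type} (a : α) (U : ι → α ⊕ η) (v : η → Option α) :
    fill a (app (lft U) v) = app (lft U) (fill a v) := by
  funext i
  rcases h : U i with b | k <;> simp [fill, app, lft, h]

lemma Insens.pull {ι κ : Type} {a : α} {R : Set (ι → Option α)} (h : Insens a R)
    (W : ι → Option α ⊕ κ) : Insens a {v | app W v ∈ R} := by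
  intro v
  simp only [Set.mem_ofPred_eq]
  rw [h, fill_app, ← h]

lemma Insens.compl {ι : Type} {a : α} {R : Set (ι → Option α)} (h : Insens a R) : Insens a Rᶜ := by
  intro w
  simp only [Set.mem_compl_iff]
  rw [h]

lemma fill_elim {ι κ : Type} (a : α) (z : ι → Option α) (y : κ → Option α) :
    fill a (Sum.elim z y) = Sum.elim (fill a z) (fill a y) := by
  funext i; rcases i with i | i <;> rfl

lemma Insens.elim_right {ι κ : Type} {a : α} {R : Set (ι ⊕ κ → Option α)} (h : Insens a R)
    (z : ι → Option α) (y : κ → Option α) : Sum.elim z y ∈ R ↔ Sum.elim z (fill a y) ∈ R := by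
  rw [h (Sum.elim z y), h (Sum.elim z (fill a y)), fill_elim, fill_elim, fill_fill]

lemma Insens.elim_left {ι κ : Type} {a : α} {R : Set (ι ⊕ κ → Option α)} (h : Insens a R)
    (z : ι → Option α) (y : κ → Option α) : Sum.elim z y ∈ R ↔ Sum.elim (fill a z) y ∈ R := by
  rw [h (Sum.elim z y), h (Sum.elim (fill a z) y), fill_elim, fill_elim, fill_fill]

lemma app_injective {ι β κ : Type} {W : ι → β ⊕ κ} (hW : Proper W) : Function.Injective (app W) := by
  intro v v' h
  funext k
  obtain ⟨i, hi⟩ := hW k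
  have := congrFun h i
  simpa [app, hi] using this

lemma expect_range_nonpos {ι β κ : Type} [Fintype ι] [DecidableEq ι] [Fintype β] [Fintype κ]
    [DecidableEq κ] {W : ι → β ⊕ κ} (hW : Proper W)
    (f : (ι → β) → ℝ) (h : 𝔼 v, f (app W v) ≤ 0) :
    𝔼 z, f z * ind (Set.range (app W)) z ≤ 0 := by
  classical
  rcases isEmpty_or_nonempty (κ → β) with hE | hE
  · have : Set.range (app W) = ∅ := Set.range_eq_empty _
    rw [this]
    simp [ind]
  rw [Fintype.expect_eq_sum_div_card] at h ⊢
  apply div_nonpos_of_nonpos_of_nonneg _ (Nat.cast_nonneg _)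
  have h2 : ∑ v, f (app W v) ≤ 0 := by
    by_contra hc
    push Not at hc
    have : (0:ℝ) < Fintype.card (κ → β) := by exact_mod_cast Fintype.card_pos
    have := div_pos hc this
    linarith
  have : ∑ z, f z * ind (Set.range (app W)) z = ∑ v, f (app W v) := by
    rw [← Finset.sum_image (s := univ) (g := app W) (f := f) (fun _ _ _ _ h => app_injective hW h)]
    rw [← Finset.sum_filter_add_sum_filter_not univ (fun z => z ∈ Set.range (app W))]
    have z1 : ∑ z ∈ univ.filter (fun z => z ∉ Set.range (app W)), f z * ind (Set.range (app W)) z = 0 := by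
      apply Finset.sum_eq_zero
      intro z hz
      rw [ind_not_mem (Finset.mem_filter.1 hz).2, mul_zero]
    rw [z1, add_zero]
    refine Finset.sum_congr (by ext z; simp) ?_
    intro z hz
    rw [ind_mem (by simpa using hz), mul_one]
  rw [this]; exact h2

lemma single_aux (κ : Type) [Fintype κ] [DecidableEq κ] (ε : ℝ) (hε : 0 < ε) (N : ℕ)
    (hN : ∀ (a : α) (R : Set (Fin N → Option α)), Insens a R → ε ≤ dens R →
      ∃ W : Fin N → Option α ⊕ κ, Proper W ∧ ∀ v, app W v ∈ R) (t : ℕ) :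
    ∃ (J : Type) (_ : Fintype J) (_ : DecidableEq J), ∀ (a : α) (X : Type) [Fintype X]
      (R : X → Set (J → Option α)) (g : X → (J → Option α) → ℝ),
      (∀ x, Insens a (R x)) → (∀ x w, g x w ≤ 1) →
      (∀ x, ∀ W : J → Option α ⊕ κ, Proper W → 𝔼 v, g x (app W v) ≤ 0) →
      𝔼 x, dens (R x) ≤ 2 * ε + t * (ε / Fintype.card (Fin N → Option α)) →
      𝔼 x, 𝔼 w, g x w * ind (R x) w ≤ 2 * ε := by
  classical
  have triv : ∀ (J : Type) [Fintype J] [DecidableEq J] (X : Type) [Fintype X]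
      (R : X → Set (J → Option α)) (g : X → (J → Option α) → ℝ), (∀ x w, g x w ≤ 1) →
      𝔼 x, dens (R x) ≤ 2 * ε → 𝔼 x, 𝔼 w, g x w * ind (R x) w ≤ 2 * ε := by
    intro J _ _ X _ R g hg h
    refine le_trans ?_ h
    apply expect_mono
    intro x
    apply expect_mono
    intro w
    have := mul_le_mul_of_nonneg_right (hg x w) (ind_nonneg (R x) w)
    linarith
  induction t with
  | zero =>
    refine ⟨Empty, inferInstance, inferInstance, ?_⟩
    intro a X _ R g _ hg _ hd
    apply triv _ _ R g hg
    simpa using hd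
  | succ t ih =>
    obtain ⟨J, _, _, ih⟩ := ih
    refine ⟨Fin N ⊕ J, inferInstance, inferInstance, ?_⟩
    intro a X _ R g hR hg hgW hd
    set q : ℝ := ε / Fintype.card (Fin N → Option α) with hq
    have hcard : (0:ℝ) < Fintype.card (Fin N → Option α) := by exact_mod_cast Fintype.card_pos
    let sl : X → (J → Option α) → Set (Fin N → Option α) := fun x y => {z | Sum.elim z y ∈ R x}
    have hsl : ∀ x y, Insens a (sl x y) := fun x y z => (hR x).elim_left z y
    have hsl2 : ∀ x y, sl x y = sl x (fill a y) := by
      intro x y; ext z; exact (hR x).elim_right z y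
    let good : Set (X × (J → Option α)) := {q | ε ≤ dens (sl q.1 q.2)}
    have e1 : 𝔼 x, dens (R x) = 𝔼 x, 𝔼 y, dens (sl x y) := by
      refine Finset.expect_congr rfl fun x _ => ?_
      unfold dens
      rw [expect_sumArrow, expect_comm2]
      rfl
    by_cases hgood : dens good < ε
    · apply triv _ _ R g hg
      rw [e1, ← expect_prod_type (fun q : X × (J → Option α) => dens (sl q.1 q.2))]
      calc 𝔼 q : X × (J → Option α), dens (sl q.1 q.2) ≤ 𝔼 q, (ind good q + ε) := by
            apply expect_mono
            intro q
            by_cases h : q ∈ good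
            · rw [ind_mem h]; linarith [dens_le_one (sl q.1 q.2)]
            · rw [ind_not_mem h]
              have : ¬ (ε ≤ dens (sl q.1 q.2)) := h
              linarith
        _ = dens good + 𝔼 q : X × (J → Option α), ε := by rw [Finset.expect_add_distrib]; rfl
        _ ≤ 2 * ε := by
            have := expect_const_le (X := X × (J → Option α)) hε.le
            linarith
    push Not at hgood
    have hV : ∀ Q : Set (Fin N → Option α), ∃ V : Set (Fin N → Option α),
        (Insens a Q → ε ≤ dens Q → V ⊆ Q ∧ ∃ W : Fin N → Option α ⊕ κ, Proper W ∧ V = Set.range (app W)) ∧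
        (¬ (ε ≤ dens Q) → V = ∅) := by
      intro Q
      by_cases h1 : ε ≤ dens Q
      · by_cases h2 : Insens a Q
        · obtain ⟨W, hW, hWR⟩ := hN a Q h2 h1
          refine ⟨Set.range (app W), fun _ _ => ⟨?_, W, hW, rfl⟩, fun h => absurd h1 h⟩
          rintro _ ⟨v, rfl⟩; exact hWR v
        · exact ⟨∅, fun h => absurd h h2, fun _ => rfl⟩
      · exact ⟨∅, fun _ h => absurd h h1, fun _ => rfl⟩
    choose V hV1 hV2 using hV
    have hVsub : ∀ x y, V (sl x y) ⊆ sl x y := by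
      intro x y
      by_cases h : ε ≤ dens (sl x y)
      · exact (hV1 _ (hsl x y) h).1
      · rw [hV2 _ h]; exact Set.empty_subset _
    let R' : X × (Fin N → Option α) → Set (J → Option α) := fun q => {y | Sum.elim q.2 y ∈ R q.1 ∧ q.2 ∉ V (sl q.1 y)}
    have hind : ∀ x z y, ind (R' (x, z)) y = ind (R x) (Sum.elim z y) - ind (V (sl x y)) z := by
      intro x z y
      by_cases h1 : z ∈ V (sl x y)
      · have h2 : Sum.elim z y ∈ R x := hVsub x y h1
        have h3 : y ∉ R' (x, z) := fun h => h.2 h1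
        rw [ind_mem h1, ind_mem h2, ind_not_mem h3, sub_self]
      · rw [ind_not_mem h1, sub_zero]
        by_cases h2 : Sum.elim z y ∈ R x
        · have h3 : y ∈ R' (x, z) := ⟨h2, h1⟩
          rw [ind_mem h2, ind_mem h3]
        · have h3 : y ∉ R' (x, z) := fun h => h2 h.1
          rw [ind_not_mem h2, ind_not_mem h3]
    have key := ih a (X × (Fin N → Option α)) R' (fun q y => g q.1 (Sum.elim q.2 y)) ?_ ?_ ?_ ?_
    · refine le_trans ?_ key
      rw [expect_prod_type]
      apply expect_mono
      intro x
      rw [expect_sumArrow]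
      have : 𝔼 z : Fin N → Option α, 𝔼 y : J → Option α, g x (Sum.elim z y) * ind (R x) (Sum.elim z y) =
          𝔼 z : Fin N → Option α, 𝔼 y : J → Option α, g x (Sum.elim z y) * ind (R' (x, z)) y
          + 𝔼 y : J → Option α, 𝔼 z : Fin N → Option α, g x (Sum.elim z y) * ind (V (sl x y)) z := by
        rw [expect_comm2 (X := J → Option α), ← Finset.expect_add_distrib]
        refine Finset.expect_congr rfl fun z _ => ?_
        rw [← Finset.expect_add_distrib]
        refine Finset.expect_congr rfl fun y _ => ?_
        rw [hind]; ring
      rw [this]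
      have : 𝔼 y : J → Option α, 𝔼 z : Fin N → Option α, g x (Sum.elim z y) * ind (V (sl x y)) z ≤ 0 := by
        apply expect_le_of le_rfl
        intro y
        by_cases h : ε ≤ dens (sl x y)
        · obtain ⟨_, W, hW, hVW⟩ := hV1 _ (hsl x y) h
          rw [hVW]
          apply expect_range_nonpos hW (fun z => g x (Sum.elim z y))
          have := hgW x (Sum.elim W (fun j => Sum.inl (y j))) (fun k => by
            obtain ⟨i, hi⟩ := hW k
            exact ⟨Sum.inl i, hi⟩)
          convert this using 4 with v
          funext i
          rcases i with i | i <;> simp [app]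
        · rw [hV2 _ h]; simp [ind]
      linarith
    · rintro ⟨x, z⟩ y
      have h1 : V (sl x y) = V (sl x (fill a y)) := by rw [hsl2]
      simp only [R', Set.mem_ofPred_eq]
      rw [h1, (hR x).elim_right z y]
    · intro q y; exact hg _ _
    · rintro ⟨x, z⟩ W hW
      have := hgW x (Sum.elim (fun j => Sum.inl (z j)) W) (fun k => by
            obtain ⟨i, hi⟩ := hW k
            exact ⟨Sum.inr i, hi⟩)
      convert this using 4 with v
      funext i
      rcases i with i | i <;> simp [app]
    · have h1 : 𝔼 q, dens (R' q) = 𝔼 x, dens (R x) - 𝔼 x, 𝔼 y, dens (V (sl x y)) := by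
        rw [e1, expect_prod_type, ← Finset.expect_sub_distrib]
        refine Finset.expect_congr rfl fun x _ => ?_
        unfold dens
        rw [expect_comm2, ← Finset.expect_sub_distrib]
        refine Finset.expect_congr rfl fun y _ => ?_
        rw [← Finset.expect_sub_distrib]
        refine Finset.expect_congr rfl fun z _ => ?_
        rw [hind]
        rfl
      have h2 : q ≤ 𝔼 x, 𝔼 y, dens (V (sl x y)) := by
        rw [← expect_prod_type (fun q : X × (J → Option α) => dens (V (sl q.1 q.2)))]
        calc q ≤ dens good * (1 / Fintype.card (Fin N → Option α)) := by
              rw [hq, mul_one_div]; gcongr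
          _ = 𝔼 q, ind good q * (1 / Fintype.card (Fin N → Option α)) := by
              rw [dens, Finset.expect_mul]
          _ ≤ _ := by
              apply expect_mono
              intro p
              by_cases h : p ∈ good
              · rw [ind_mem h, one_mul]
                obtain ⟨_, W, hW, hVW⟩ := hV1 _ (hsl p.1 p.2) h
                rw [hVW, dens, Fintype.expect_eq_sum_div_card]
                gcongr
                rw [← ind_mem (A := Set.range (app W)) (x := app W (fun _ => none)) ⟨_, rfl⟩]
                exact Finset.single_le_sum (f := fun z => ind (Set.range (app W)) z) (fun _ _ => ind_nonneg _ _) (Finset.mem_univ _)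
              · rw [ind_not_mem h, zero_mul]; exact dens_nonneg _
      rw [h1]
      push_cast at hd
      linarith

lemma single [Nonempty α] (h : ∀ (κ : Type) [Finite κ], ∀ δ > 0, SubAt α κ δ) (κ : Type) [Fintype κ] [DecidableEq κ]
    (ε : ℝ) (hε : 0 < ε) :
    ∃ n : ℕ, ∀ (η : Type) [Fintype η] [DecidableEq η], n ≤ Fintype.card η → ∀ (a : α) (R : Set (η → Option α))
      (g : (η → Option α) → ℝ), Insens a R → (∀ w, g w ≤ 1) →
      (∀ W : η → Option α ⊕ κ, Proper W → 𝔼 v, g (app W v) ≤ 0) →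
      𝔼 w, g w * ind R w ≤ 2 * ε := by
  classical
  obtain ⟨N, hN⟩ := idhj h κ ε hε
  set q : ℝ := ε / Fintype.card (Fin N → Option α) with hq
  have hcard : (0:ℝ) < Fintype.card (Fin N → Option α) := by exact_mod_cast Fintype.card_pos
  have hq0 : 0 < q := by positivity
  obtain ⟨t, ht⟩ := exists_nat_ge (1 / q)
  rw [div_le_iff₀ hq0] at ht
  obtain ⟨J, _, _, hJ⟩ := single_aux κ ε hε N hN t
  refine ⟨Fintype.card J, fun η _ _ hc a R g hR hg hgW => ?_⟩
  obtain ⟨c⟩ := Function.Embedding.nonempty_of_card_le hc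
  rw [← expect_extend c]
  have hE : ∀ (z : η → Option α) (W : J → Option α ⊕ κ) v, Function.extend c (app W v) z =
      app (Function.extend c W (fun i => Sum.inl (z i))) v := by
    intro z W v
    funext i
    by_cases h : ∃ j, c j = i
    · obtain ⟨j, rfl⟩ := h
      simp [app, c.injective.extend_apply]
    · simp [app, Function.extend_apply' _ _ _ h]
  have hF : ∀ (z : η → Option α) (x : J → Option α), fill a (Function.extend c x z) =
      fill a (Function.extend c (fill a x) z) := by
    intro z x
    funext i
    by_cases h : ∃ j, c j = i
    · obtain ⟨j, rfl⟩ := h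
      simp [fill, c.injective.extend_apply]
    · simp [fill, Function.extend_apply' _ _ _ h]
  refine hJ a (η → Option α) (fun z => {x | Function.extend c x z ∈ R}) (fun z x => g (Function.extend c x z)) ?_ ?_ ?_ ?_
  · intro z x
    simp only [Set.mem_ofPred_eq]
    rw [hR, hF, ← hR]
  · intro z x; exact hg _
  · intro z W hW
    simp_rw [hE]
    apply hgW
    intro k
    obtain ⟨i, hi⟩ := hW k
    exact ⟨c i, by rw [c.injective.extend_apply, hi]⟩
  · have : 𝔼 z : η → Option α, dens {x | Function.extend c x z ∈ R} ≤ 1 := expect_le_of zero_le_one (fun z => dens_le_one _)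
    linarith

lemma part_s [Nonempty α] [DecidableEq α] (h : ∀ (κ : Type) [Finite κ], ∀ δ > 0, SubAt α κ δ) (s : Finset α) :
    ∀ (κ : Type) [Fintype κ] [DecidableEq κ] (ε : ℝ) (_ : 0 < ε),
    ∃ n : ℕ, ∀ (η : Type) [Fintype η] [DecidableEq η], n ≤ Fintype.card η → ∀ (F : α → Set (η → Option α))
      (g : (η → Option α) → ℝ), (∀ a, Insens a (F a)) → (∀ w, g w ≤ 1) →
      (∀ W : η → Option α ⊕ κ, Proper W → 𝔼 v, g (app W v) ≤ 0) →
      𝔼 w, g w * ∏ a ∈ s, ind (F a) w ≤ ε := by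
  classical
  induction s using Finset.induction_on with
  | empty =>
    intro κ _ _ ε hε
    refine ⟨Fintype.card κ, fun η _ _ hc F g hF hg hgW => ?_⟩
    obtain ⟨c⟩ := Function.Embedding.nonempty_of_card_le hc
    simp only [Finset.prod_empty, mul_one]
    rw [← expect_extend c]
    apply expect_le_of hε.le
    intro z
    have hE : ∀ v, Function.extend c v z =
        app (Function.extend c Sum.inr (fun i => Sum.inl (z i))) v := by
      intro v
      funext i
      by_cases h : ∃ j, c j = i
      · obtain ⟨j, rfl⟩ := h
        simp [app, c.injective.extend_apply]
      · simp [app, Function.extend_apply' _ _ _ h]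
    simp_rw [hE]
    refine le_trans (hgW _ ?_) hε.le
    intro k
    exact ⟨c k, by rw [c.injective.extend_apply]⟩
  | insert a s ha ih =>
    intro κ _ _ ε hε
    obtain ⟨n0, h0⟩ := ih κ (ε/2) (by positivity)
    obtain ⟨n1, h1⟩ := single h (Fin n0) (ε/4) (by positivity)
    refine ⟨n1, fun η _ _ hc F g hF hg hgW => ?_⟩
    have hprod : ∀ w, 0 ≤ ∏ a ∈ s, ind (F a) w ∧ ∏ a ∈ s, ind (F a) w ≤ 1 := fun w =>
      ⟨Finset.prod_nonneg (fun a _ => ind_nonneg _ _),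
        Finset.prod_le_one (fun a _ => ind_nonneg _ _) (fun a _ => ind_le_one _ _)⟩
    have key := h1 η hc a (F a) (fun w => g w * ∏ a ∈ s, ind (F a) w - ε / 2) (hF a) ?_ ?_
    · have e : ∀ w, g w * ∏ a ∈ insert a s, ind (F a) w =
        (g w * ∏ a ∈ s, ind (F a) w - ε / 2) * ind (F a) w + ε / 2 * ind (F a) w := by
        intro w; rw [Finset.prod_insert ha]; ring
      simp_rw [e]
      rw [Finset.expect_add_distrib, ← Finset.mul_expect]
      have := dens_le_one (F a)
      unfold dens at this
      nlinarith
    · intro w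
      have := hprod w
      nlinarith [hg w]
    · intro W hW
      rw [Finset.expect_sub_distrib, Fintype.expect_const]
      have := h0 (Fin n0) (by simp) (fun a => {v | app W v ∈ F a}) (fun v => g (app W v)) (fun a => (hF a).pull W)
        (fun v => hg _) (fun W' hW' => by
          simp_rw [← app_cmp]
          exact hgW _ (proper_cmp hW hW'))
      have e : ∀ (v : Fin n0 → Option α) (a : α), ind {v | app W v ∈ F a} v = ind (F a) (app W v) := fun v a => rfl
      simp_rw [e] at this
      linarith

lemma part [Nonempty α] [DecidableEq α] (h : ∀ (κ : Type) [Finite κ], ∀ δ > 0, SubAt α κ δ)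
    (κ : Type) [Fintype κ] [DecidableEq κ] (ε : ℝ) (hε : 0 < ε) :
    ∃ n : ℕ, ∀ (η : Type) [Fintype η] [DecidableEq η], n ≤ Fintype.card η → ∀ (F : α → Set (η → Option α))
      (g : (η → Option α) → ℝ), (∀ a, Insens a (F a)) → (∀ w, g w ≤ 1) →
      (∀ W : η → Option α ⊕ κ, Proper W → 𝔼 v, g (app W v) ≤ 0) →
      𝔼 w, g w * (1 - ∏ a, ind (F a) w) ≤ Fintype.card α * ε := by
  classical
  choose n hn using fun s => part_s h s κ ε hε
  refine ⟨∑ s, n s, fun η _ _ hc F g hF hg hgW => ?_⟩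
  have hc' : ∀ s, n s ≤ Fintype.card η := fun s =>
    le_trans (Finset.single_le_sum (f := n) (fun _ _ => Nat.zero_le _) (Finset.mem_univ s)) hc
  have key : ∀ s : Finset α, 𝔼 w, g w * (1 - ∏ a ∈ s, ind (F a) w) ≤ s.card * ε := by
    intro s
    induction s using Finset.induction_on with
    | empty => simp
    | insert a s ha ih =>
      have e : ∀ w, g w * (1 - ∏ a ∈ insert a s, ind (F a) w) =
          g w * (1 - ∏ a ∈ s, ind (F a) w) + g w * ∏ b ∈ insert a s, ind (Function.update F a (F a)ᶜ b) w := by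
        intro w
        rw [Finset.prod_insert ha, Finset.prod_insert ha, Function.update_self]
        have : ∏ b ∈ s, ind (Function.update F a (F a)ᶜ b) w = ∏ b ∈ s, ind (F b) w := by
          apply Finset.prod_congr rfl
          intro b hb
          rw [Function.update_of_ne (by rintro rfl; exact ha hb)]
        rw [this]
        have : ind (F a)ᶜ w = 1 - ind (F a) w := by
          by_cases hw : w ∈ F a
          · rw [ind_mem hw, ind_not_mem (by simpa using hw), sub_self]
          · rw [ind_not_mem hw, ind_mem (by simpa using hw), sub_zero]
        rw [this]; ring
      simp_rw [e]
      rw [Finset.expect_add_distrib, Finset.card_insert_of_notMem ha]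
      have := hn (insert a s) η (hc' _) (Function.update F a (F a)ᶜ) g (by
        intro b
        by_cases hb : b = a
        · subst hb; rw [Function.update_self]; exact (hF b).compl
        · rw [Function.update_of_ne hb]; exact hF b) hg hgW
      push_cast
      linarith
  simpa using key univ
end C
end MulAP

namespace MulAP
open scoped BigOperators
open Finset (univ)

section D
variable {α : Type} [Fintype α]

/-- a word with `none`s viewed as a combinatorial line -/
def toLine {ι : Type} (w : ι → Option α) : ι → Option α ⊕ Unit := fun i =>
  match w i with
  | none => Sum.inr ()
  | some b => Sum.inl (some b)

lemma app_toLine_some {ι : Type} (w : ι → Option α) (a : α) (v : Unit → Option α) (hv : v () = some a) :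
    app (toLine w) v = fill a w := by
  funext i
  rcases h : w i with _ | b <;> simp [app, toLine, fill, h, hv]

lemma app_toLine_none {ι : Type} (w : ι → Option α) (v : Unit → Option α) (hv : v () = none) :
    app (toLine w) v = w := by
  funext i
  rcases h : w i with _ | b <;> simp [app, toLine, h, hv]

lemma app_elim_const {ι κ η β : Type} (W : ι → β ⊕ κ) (y : η → β) (v : κ → β) :
    app (Sum.elim W (fun j => Sum.inl (y j))) v = Sum.elim (app W v) y := by
  funext i
  rcases i with i | i <;> simp [app]

lemma app_const_elim {ι κ η β : Type} (W : ι → β ⊕ κ) (y : η → β) (v : κ → β) :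
    app (Sum.elim (fun j => Sum.inl (y j)) W) v = Sum.elim y (app W v) := by
  funext i
  rcases i with i | i <;> simp [app]

lemma le_of_avg {X : Type} [Fintype X] [Nonempty X] (f : X → ℝ) (d γ : ℝ) (hγ : 0 ≤ γ) (h1 : ∀ x, f x ≤ d + γ)
    (h2 : d - γ ≤ 𝔼 x, f x) (x : X) : d - 2 * γ * Fintype.card X ≤ f x := by
  classical
  rw [Fintype.expect_eq_sum_div_card, le_div_iff₀ (by exact_mod_cast Fintype.card_pos)] at h2
  rw [← Finset.add_sum_erase _ _ (Finset.mem_univ x)] at h2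
  have h3 : ∑ y ∈ univ.erase x, f y ≤ (univ.erase x).card • (d + γ) :=
    Finset.sum_le_card_nsmul _ _ _ (fun y _ => h1 y)
  rw [Finset.card_erase_of_mem (Finset.mem_univ x), Finset.card_univ, nsmul_eq_mul,
    Nat.cast_sub (Fintype.card_pos)] at h3
  have h4 : (1:ℝ) ≤ Fintype.card X := by exact_mod_cast Fintype.card_pos
  push_cast at h3
  nlinarith

lemma dens_full [Nonempty α] (n : ℕ) : dens {w : Fin n → Option α | ∀ i, w i ≠ none} =
    ((Fintype.card α : ℝ) / (Fintype.card α + 1)) ^ n := by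
  have := dens_pi (ι := Fin n) (β := Option α) univ {b | b ≠ none}
  simp only [Finset.mem_univ, forall_true_left, Set.mem_ofPred_eq, Finset.card_univ, Fintype.card_fin] at this
  rw [this]
  congr 1
  unfold dens
  rw [Fintype.expect_eq_sum_div_card]
  simp [ind, Set.indicator_apply, Fintype.sum_option]

theorem increment [Nonempty α] (hα : ∀ δ > 0, SubAt α Unit δ) (δ : ℝ) (hδ : 0 < δ) (hδ2 : δ ≤ 2)
    (hup : ∀ γ > 0, SubAt (Option α) Unit (δ + γ)) : ∃ γ > 0, SubAt (Option α) Unit (δ - γ) := by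
  classical
  have hm : ∀ (κ : Type) [Finite κ], ∀ δ > 0, SubAt α κ δ := fun κ _ => mdhj hα κ
  obtain ⟨n0, h0⟩ := hα (δ/4) (by positivity)
  let T := Fin n0 → α ⊕ Unit
  have hT : (1:ℝ) ≤ Fintype.card T := by
    have : Nonempty T := ⟨fun _ => Sum.inr ()⟩
    exact_mod_cast Fintype.card_pos
  set θ : ℝ := δ / 4 / Fintype.card T with hθ
  have hθ0 : 0 < θ := by positivity
  have hθ1 : θ ≤ 1 / 2 := by
    rw [hθ, div_le_iff₀ (by positivity)]; linarith
  set μ : ℝ := δ * θ with hμ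
  have hμ0 : 0 < μ := by positivity
  have hμ1 : μ ≤ 1 := by nlinarith
  obtain ⟨nκ, hκ⟩ := hup (μ/8) (by positivity)
  have hk : (1:ℝ) ≤ Fintype.card α := by exact_mod_cast Fintype.card_pos
  obtain ⟨n1, h1⟩ := part hm (Fin nκ) (μ / (4 * Fintype.card α)) (by positivity)
  obtain ⟨M, hM⟩ : ∃ M : ℕ, ((Fintype.card α : ℝ) / (Fintype.card α + 1)) ^ M < μ / 16 :=
    exists_pow_lt_of_lt_one (by positivity) (by rw [div_lt_one (by positivity)]; linarith)
  let n := max (max n0 n1) M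
  obtain ⟨ι1, hι1, hgr⟩ := gr α Bool (Fin n)
  set K : ℝ := (Fintype.card (ι1 → Option α) : ℝ) with hK
  have hK1 : (1:ℝ) ≤ K := by
    have := Fintype.card_pos (α := ι1 → Option α)
    rw [hK]; exact_mod_cast this
  set γ : ℝ := μ / (16 * K) with hγ
  have hγ0 : 0 < γ := by positivity
  have hγK : 2 * γ * K = μ / 8 := by rw [hγ]; field_simp; ring
  obtain ⟨n2, h2⟩ := hup γ hγ0
  refine ⟨γ, hγ0, ?_⟩
  apply subAt_of (ι1 ⊕ Fin n2)
  intro A hA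
  by_contra hno
  let As : (ι1 → Option α) → Set (Fin n2 → Option α) := fun w => {y | Sum.elim w y ∈ A}
  have hAs : δ - γ ≤ 𝔼 w, dens (As w) := by
    rw [dens, expect_sumArrow] at hA
    exact hA
  have hAs1 : ∀ w, dens (As w) ≤ δ + γ := by
    intro w
    by_contra hc
    push Not at hc
    obtain ⟨W, hW, hWA⟩ := h2 (Fin n2) (by simp) (As w) hc.le
    refine hno ⟨Sum.elim (fun j => Sum.inl (w j)) W, ?_, ?_⟩
    · intro k
      obtain ⟨i, hi⟩ := hW k
      exact ⟨Sum.inr i, hi⟩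
    · intro v
      rw [app_const_elim]
      exact hWA v
  have hAs2 : ∀ w, δ - μ / 8 ≤ dens (As w) := by
    intro w
    have := le_of_avg (fun w => dens (As w)) δ γ hγ0.le hAs1 hAs w
    rwa [← hK, hγK] at this
  obtain ⟨U, hU, hUc⟩ := hgr (fun w => decide (θ ≤ dens {y | ∀ a : α, y ∈ As (fill a w)}))
  have hyes : ∀ w : Fin n → Option α, (∃ i, w i = none) →
      θ ≤ dens {y | ∀ a : α, y ∈ As (app (lft U) (fill a w))} := by
    obtain ⟨a0⟩ := (inferInstance : Nonempty α)
    let c : Fin n0 ↪ Fin n := Fin.castLEEmb ((le_max_left _ _).trans (le_max_left _ _))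
    let e : (Fin n0 → α) → (Fin n → Option α) := fun x => Function.extend c (fun i => some (x i)) (fun _ => some a0)
    have hm1 : δ / 2 ≤ 𝔼 y : Fin n2 → Option α, dens {x : Fin n0 → α | y ∈ As (app (lft U) (e x))} := by
      have : 𝔼 y : Fin n2 → Option α, dens {x : Fin n0 → α | y ∈ As (app (lft U) (e x))} =
          𝔼 x : Fin n0 → α, dens (As (app (lft U) (e x))) := by
        unfold dens
        rw [expect_comm2]
        rfl
      rw [this]
      have a0 : 𝔼 x : Fin n0 → α, (δ/2) = δ / 2 := Fintype.expect_const _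
      rw [← a0]
      apply expect_mono
      intro x
      have := hAs2 (app (lft U) (e x))
      nlinarith
    have hm2 := markov (by linarith) (fun y => dens_le_one _) hm1
    have e4 : δ / 2 / 2 = δ / 4 := by ring
    rw [e4] at hm2
    obtain ⟨s, hs⟩ := pigeon (T := {s : T // Proper s})
      (fun s => {y : Fin n2 → Option α | ∀ v, y ∈ As (app (lft U) (e (app s.1 v)))})
      (fun y hy => by
        obtain ⟨s, hs, hs2⟩ := h0 (Fin n0) (by simp) _ hy
        exact ⟨⟨s, hs⟩, hs2⟩) (lt_of_lt_of_le (by positivity) hm2)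
    have hs' : θ ≤ dens {y : Fin n2 → Option α | ∀ v, y ∈ As (app (lft U) (e (app s.1 v)))} := by
      refine le_trans ?_ hs
      have hle : (Fintype.card {s : T // Proper s} : ℝ) ≤ Fintype.card T := by
        exact_mod_cast Fintype.card_subtype_le _
      have : Nonempty {s : T // Proper s} := ⟨s⟩
      have h0 : (0:ℝ) < Fintype.card {s : T // Proper s} := by exact_mod_cast Fintype.card_pos
      exact div_le_div₀ (dens_nonneg _) hm2 h0 hle
    let w0 : Fin n → Option α := Function.extend c (fun i => Sum.elim some (fun _ => none) (s.1 i)) (fun _ => some a0)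
    have hw0 : ∃ i, w0 i = none := by
      obtain ⟨i, hi⟩ := s.2 ()
      exact ⟨c i, by simp [w0, c.injective.extend_apply, hi]⟩
    have hw0f : ∀ a, fill a w0 = e (app s.1 (fun _ => a)) := by
      intro a
      funext i
      by_cases h : ∃ j, c j = i
      · obtain ⟨j, rfl⟩ := h
        rcases hs : s.1 j with b | b <;> simp [fill, w0, e, app, c.injective.extend_apply, hs]
      · simp [fill, w0, e, Function.extend_apply' _ _ _ h]
    have hyes0 : θ ≤ dens {y | ∀ a : α, y ∈ As (app (lft U) (fill a w0))} := by
      refine hs'.trans ?_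
      apply expect_mono
      intro y
      by_cases hy : y ∈ {y : Fin n2 → Option α | ∀ v, y ∈ As (app (lft U) (e (app s.1 v)))}
      · rw [ind_mem hy, ind_mem]
        intro a
        rw [hw0f]
        exact hy _
      · rw [ind_not_mem hy]; exact ind_nonneg _ _
    intro w hw
    have := hUc w0 w hw0 hw
    simp only [fill_lft, decide_eq_decide] at this
    exact this.1 hyes0
  -- the sets
  let A' : (Fin n2 → Option α) → Set (Fin n → Option α) := fun y => {w | y ∈ As (app (lft U) w)}
  let F : (Fin n2 → Option α) → α → Set (Fin n → Option α) := fun y a => {w | y ∈ As (app (lft U) (fill a w))}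
  let full : Set (Fin n → Option α) := {w | ∀ i, w i ≠ none}
  have hfull : dens full ≤ μ / 16 := by
    rw [dens_full]
    refine le_trans ?_ hM.le
    exact pow_le_pow_of_le_one (by positivity) (by rw [div_le_one (by positivity)]; linarith) (le_max_right _ _)
  have hline : ∀ y w, w ∈ A' y → (∀ a, w ∈ F y a) → w ∈ full := by
    intro y w hw hF i hi
    refine hno ⟨Sum.elim (cmp (lft U) (toLine w)) (fun j => Sum.inl (y j)), ?_, ?_⟩
    · intro k
      obtain ⟨j, hj⟩ := proper_cmp (proper_lft hU) (t := toLine w) (fun k => ⟨i, by simp [toLine, hi]⟩) k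
      exact ⟨Sum.inl j, hj⟩
    · intro v
      rw [app_elim_const, app_cmp]
      rcases hv : v () with _ | a
      · rw [app_toLine_none _ _ hv]; exact hw
      · rw [app_toLine_some _ _ _ hv]; exact hF a
  let g : (Fin n2 → Option α) → (Fin n → Option α) → ℝ := fun y w => ind (A' y) w - (δ + μ / 8)
  have hpart : ∀ y, 𝔼 w, g y w * (1 - ∏ a, ind (F y a) w) ≤ μ / 4 := by
    intro y
    have := h1 (Fin n) (by simp [n]) (F y) (g y) ?_ ?_ ?_
    · refine this.trans (le_of_eq ?_)
      field_simp
    · intro a w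
      simp only [F, Set.mem_ofPred_eq]
      rw [fill_fill]
    · intro w
      have := ind_le_one (A' y) w
      simp only [g]
      linarith
    · intro W hW
      by_contra hc
      push Not at hc
      simp only [g] at hc
      rw [Finset.expect_sub_distrib, Fintype.expect_const] at hc
      obtain ⟨L, hL, hLA⟩ := hκ (Fin nκ) (by simp) {v | app W v ∈ A' y} (by
        have : dens {v | app W v ∈ A' y} = 𝔼 v, ind (A' y) (app W v) := rfl
        linarith)
      refine hno ⟨Sum.elim (cmp (lft U) (cmp W L)) (fun j => Sum.inl (y j)), ?_, ?_⟩
      · intro k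
        obtain ⟨j, hj⟩ := proper_cmp (proper_lft hU) (proper_cmp hW hL) k
        exact ⟨Sum.inl j, hj⟩
      · intro v
        rw [app_elim_const, app_cmp, app_cmp]
        exact hLA v
  have htot : 𝔼 y, 𝔼 w, g y w * (1 - ∏ a, ind (F y a) w) ≤ μ / 4 :=
    expect_le_of (by positivity) hpart
  -- lower bound
  have hDind : ∀ y w, ∏ a, ind (F y a) w = ind {y | ∀ a : α, y ∈ As (app (lft U) (fill a w))} y := by
    intro y w
    by_cases h : ∀ a : α, y ∈ As (app (lft U) (fill a w))
    · rw [ind_mem (by exact h)]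
      apply Finset.prod_eq_one
      intro a _
      exact ind_mem (h a)
    · rw [ind_not_mem (by exact h)]
      push Not at h
      obtain ⟨a, ha⟩ := h
      exact Finset.prod_eq_zero (Finset.mem_univ a) (ind_not_mem ha)
  have hpt : ∀ y w, g y w + (δ * ∏ a, ind (F y a) w - ind full w) ≤ g y w * (1 - ∏ a, ind (F y a) w) := by
    intro y w
    have hi := ind_nonneg full w
    by_cases h : ∀ a : α, y ∈ As (app (lft U) (fill a w))
    · rw [hDind, ind_mem (by exact h)]
      by_cases hw : w ∈ A' y
      · rw [ind_mem (hline y w hw h)]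
        simp only [g]
        rw [ind_mem hw]
        linarith
      · simp only [g]
        rw [ind_not_mem hw]
        linarith
    · rw [hDind, ind_not_mem (by exact h)]
      linarith
  have hw : ∀ w, δ - μ / 8 - (δ + μ/8) + (δ * (θ * (1 - ind full w)) - ind full w) ≤
      𝔼 y, (g y w + (δ * ∏ a, ind (F y a) w - ind full w)) := by
    intro w
    have b0 : 𝔼 y, (g y w + (δ * ∏ a, ind (F y a) w - ind full w)) =
        𝔼 y, g y w + (δ * 𝔼 y, ∏ a, ind (F y a) w - ind full w) := by
      rw [Finset.expect_add_distrib, Finset.mul_expect]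
      congr 1
      rw [Finset.expect_sub_distrib, Fintype.expect_const]
    rw [b0]
    have b1 : 𝔼 y, g y w = dens (As (app (lft U) w)) - (δ + μ/8) := by
      simp only [g]
      rw [Finset.expect_sub_distrib, Fintype.expect_const]
      rfl
    have b2 : θ * (1 - ind full w) ≤ 𝔼 y, ∏ a, ind (F y a) w := by
      simp_rw [hDind]
      by_cases hw : w ∈ full
      · rw [ind_mem hw, sub_self, mul_zero]
        exact expect_nn (fun y => ind_nonneg _ _)
      · rw [ind_not_mem hw, sub_zero, mul_one]
        apply hyes
        simpa [full] using hw
    rw [b1]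
    have := hAs2 (app (lft U) w)
    have := mul_le_mul_of_nonneg_left b2 hδ.le
    linarith
  have hlow : δ - μ / 8 - (δ + μ/8) + (δ * (θ * (1 - dens full)) - dens full) ≤ μ / 4 := by
    refine le_trans ?_ htot
    rw [expect_comm2]
    calc δ - μ / 8 - (δ + μ/8) + (δ * (θ * (1 - dens full)) - dens full)
        = 𝔼 w : Fin n → Option α, (δ - μ / 8 - (δ + μ/8) + (δ * (θ * (1 - ind full w)) - ind full w)) := by
          have : ∀ w : Fin n → Option α, δ - μ / 8 - (δ + μ/8) + (δ * (θ * (1 - ind full w)) - ind full w) =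
            (δ - μ / 8 - (δ + μ/8) + δ * θ) - (δ * θ + 1) * ind full w := fun w => by ring
          simp_rw [this]
          rw [Finset.expect_sub_distrib, Fintype.expect_const, ← Finset.mul_expect]
          unfold dens
          ring
      _ ≤ _ := by
          apply expect_mono
          intro w
          exact (hw w).trans (expect_mono (fun y => hpt y w))
  have hf0 := dens_nonneg full
  have : δ * (θ * (1 - dens full)) = μ - μ * dens full := by rw [hμ]; ring
  nlinarith

theorem dhj_option [Nonempty α] (hα : ∀ δ > 0, SubAt α Unit δ) : ∀ δ > 0, SubAt (Option α) Unit δ := by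
  by_contra hcon
  push Not at hcon
  obtain ⟨δ0, hδ0, hn⟩ := hcon
  let S : Set ℝ := {δ | 0 < δ ∧ SubAt (Option α) Unit δ}
  have h2 : (2:ℝ) ∈ S := by
    refine ⟨by norm_num, 0, fun ι _ _ _ A hA => ?_⟩
    exact absurd hA (by linarith [dens_le_one A])
  have hbd : ∀ δ ∈ S, δ0 ≤ δ := by
    intro δ hδ
    by_contra hc
    push Not at hc
    exact hn (hδ.2.mono hc.le)
  have hbb : BddBelow S := ⟨δ0, hbd⟩
  have hs0 : δ0 ≤ sInf S := le_csInf ⟨2, h2⟩ hbd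
  obtain ⟨γ, hγ, h⟩ := increment hα (sInf S) (by linarith) (csInf_le hbb h2) (by
    intro γ hγ
    obtain ⟨δ, hδ, hlt⟩ := exists_lt_of_csInf_lt ⟨2, h2⟩ (show sInf S < sInf S + γ by linarith)
    exact hδ.2.mono hlt.le)
  have : max (sInf S - γ) (sInf S / 2) ∈ S :=
    ⟨lt_max_of_lt_right (by linarith), h.mono (le_max_left _ _)⟩
  have := csInf_le hbb this
  rcases le_max_iff.1 this with h | h <;> linarith
end D

theorem dhj (α : Type) [Finite α] : Nonempty α → ∀ [Fintype α], ∀ δ > 0, SubAt α Unit δ := by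
  classical
  revert α
  apply Finite.induction_empty_option
  · intro α β e ih hβ _ δ hδ
    have : Fintype α := Fintype.ofEquiv β e.symm
    obtain ⟨n, hn⟩ := ih ⟨e.symm hβ.some⟩ δ hδ
    refine ⟨n, fun ι _ _ hc A hA => ?_⟩
    obtain ⟨W, hW, hWA⟩ := hn ι hc {w | (fun i => e (w i)) ∈ A} (by
      refine hA.trans (le_of_eq ?_)
      unfold dens
      apply Fintype.expect_equiv (Equiv.arrowCongr (Equiv.refl ι) e.symm)
      intro w
      simp [ind, Set.indicator_apply])
    refine ⟨fun i => (W i).map e id, ?_, ?_⟩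
    · intro k
      obtain ⟨i, hi⟩ := hW k
      exact ⟨i, by simp [hi]⟩
    · intro v
      have h1 := hWA (fun k => e.symm (v k))
      simp only [Set.mem_ofPred_eq] at h1
      convert h1 using 1
      funext i
      rcases h : W i with b | k <;> simp [app, h]
  · intro h; exact absurd h (by simp)
  · intro α _ ih _ inst δ hδ
    rcases isEmpty_or_nonempty α with hE | hE
    · refine ⟨1, fun ι _ _ hc A hA => ?_⟩
      obtain ⟨x, hx⟩ := exists_mem_of_dens (hδ.trans_le hA)
      have : Nonempty ι := Fintype.card_pos_iff.1 hc
      refine ⟨fun i => Sum.inr (), fun k => ⟨Classical.arbitrary ι, rfl⟩, fun v => ?_⟩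
      convert hx using 1
      exact Subsingleton.elim _ _
    · have hinst : inst = instFintypeOption := Subsingleton.elim _ _
      subst hinst
      exact dhj_option (ih hE) δ hδ
end MulAP

namespace MulAP
open scoped BigOperators
open Finset (univ)

lemma expect_hom {X Z : Type} [Fintype X] [Fintype Z] [AddGroup X] [AddGroup Z] (Φ : X →+ Z)
    (hΦ : Function.Surjective Φ) (f : Z → ℝ) : 𝔼 x, f (Φ x) = 𝔼 z, f z := by
  classical
  apply expect_map Φ ((univ.filter (fun x => Φ x = 0)).card)
  · rw [Finset.card_ne_zero]
    exact ⟨0, by simp⟩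
  · intro z
    exact AddMonoidHom.card_fiber_eq_of_mem_range Φ (hΦ z) ⟨0, by simp⟩

theorem varnavides_set (k : ℕ) (hk : 0 < k) (δ : ℝ) (hδ : 0 < δ) : ∃ c > 0, ∀ (p : ℕ) [Fact p.Prime]
    (B : Set (ZMod p)), δ ≤ dens B →
      c ≤ dens {q : ZMod p × ZMod p | ∀ j < k, q.1 + (j : ZMod p) * q.2 ∈ B} := by
  classical
  have : Nonempty (Fin k) := ⟨⟨0, hk⟩⟩
  obtain ⟨n, hn⟩ := dhj (Fin k) inferInstance (δ/2) (by positivity)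
  let T := Fin n → Fin k ⊕ Unit
  have hT : (0:ℝ) < Fintype.card T := by
    have : Nonempty T := ⟨fun _ => Sum.inr ()⟩
    exact_mod_cast Fintype.card_pos
  refine ⟨δ / 2 / Fintype.card T, by positivity, fun p _ B hB => ?_⟩
  let P : ZMod p × (Fin n → ZMod p) → (Fin n → Fin k) → ZMod p := fun q w => q.1 + ∑ i, ((w i : ℕ) : ZMod p) * q.2 i
  have h1 : δ ≤ 𝔼 q : ZMod p × (Fin n → ZMod p), dens {w | P q w ∈ B} := by
    have : 𝔼 q : ZMod p × (Fin n → ZMod p), dens {w | P q w ∈ B} = 𝔼 w : Fin n → Fin k, dens B := by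
      unfold dens
      rw [expect_comm2]
      refine Finset.expect_congr rfl fun w _ => ?_
      have : ∀ q, ind {w | P q w ∈ B} w = ind B (P q w) := fun _ => rfl
      simp_rw [this]
      let Φ : ZMod p × (Fin n → ZMod p) →+ ZMod p :=
        { toFun := fun q => P q w
          map_zero' := by simp [P]
          map_add' := by
            intro q q'
            simp only [P, Prod.fst_add, Prod.snd_add, Pi.add_apply, mul_add, Finset.sum_add_distrib]
            ring }
      exact expect_hom Φ (fun z => ⟨(z, 0), by simp [Φ, P]⟩) (ind B)
    rw [this, Fintype.expect_const]
    exact hB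
  have hm := markov hδ.le (fun y => dens_le_one _) h1
  obtain ⟨s, hs⟩ := pigeon (T := {s : T // Proper s})
      (fun s => {q : ZMod p × (Fin n → ZMod p) | ∀ v, P q (app s.1 v) ∈ B})
      (fun y hy => by
        obtain ⟨s, hs, hs2⟩ := hn (Fin n) (by simp) _ hy
        exact ⟨⟨s, hs⟩, hs2⟩) (lt_of_lt_of_le (by positivity) hm)
  have hs' : δ / 2 / Fintype.card T ≤ dens {q : ZMod p × (Fin n → ZMod p) | ∀ v, P q (app s.1 v) ∈ B} := by
    refine le_trans ?_ hs
    have hle : (Fintype.card {s : T // Proper s} : ℝ) ≤ Fintype.card T := by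
      exact_mod_cast Fintype.card_subtype_le _
    have : Nonempty {s : T // Proper s} := ⟨s⟩
    have h0 : (0:ℝ) < Fintype.card {s : T // Proper s} := by exact_mod_cast Fintype.card_pos
    exact div_le_div₀ (dens_nonneg _) hm h0 hle
  refine hs'.trans ?_
  let Φ : ZMod p × (Fin n → ZMod p) →+ ZMod p × ZMod p :=
    { toFun := fun q => (q.1 + ∑ i, (Sum.elim (fun b : Fin k => ((b : ℕ) : ZMod p)) (fun _ => 0) (s.1 i)) * q.2 i,
        ∑ i, (Sum.elim (fun _ => 0) (fun _ => 1) (s.1 i)) * q.2 i)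
      map_zero' := by simp
      map_add' := by
        intro q q'
        simp only [Prod.fst_add, Prod.snd_add, Pi.add_apply, mul_add, Finset.sum_add_distrib, Prod.mk_add_mk]
        congr 1
        ring }
  have hΦ : Function.Surjective Φ := by
    rintro ⟨x, d⟩
    obtain ⟨i0, hi0⟩ := s.2 ()
    refine ⟨(x, Pi.single i0 d), ?_⟩
    simp only [Φ, AddMonoidHom.coe_mk, ZeroHom.coe_mk]
    rw [Finset.sum_eq_single i0, Finset.sum_eq_single i0]
    · simp [hi0]
    · intro i _ hi; simp [hi]
    · simp
    · intro i _ hi; simp [hi]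
    · simp
  have := expect_hom Φ hΦ (ind {q : ZMod p × ZMod p | ∀ j < k, q.1 + (j : ZMod p) * q.2 ∈ B})
  unfold dens
  rw [← this]
  apply expect_mono
  intro q
  by_cases hq : q ∈ {q : ZMod p × (Fin n → ZMod p) | ∀ v, P q (app s.1 v) ∈ B}
  · rw [ind_mem hq, ind_mem]
    intro j hj
    have h2 := hq (fun _ => ⟨j, hj⟩)
    convert h2 using 1
    simp only [Φ, AddMonoidHom.coe_mk, ZeroHom.coe_mk, P]
    rw [add_assoc, Finset.mul_sum, ← Finset.sum_add_distrib]
    congr 1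
    refine Finset.sum_congr rfl fun i _ => ?_
    rcases h : s.1 i with b | b <;> simp [app, h]
  · rw [ind_not_mem hq]; exact ind_nonneg _ _

theorem varnavides (k : ℕ) (hk : 0 < k) (δ : ℝ) (hδ : 0 < δ) : ∃ c > 0, ∀ (p : ℕ) [Fact p.Prime]
    (g : ZMod p → ℝ), (∀ x, 0 ≤ g x) → (∀ x, g x ≤ 1) → δ ≤ 𝔼 x, g x →
      c ≤ 𝔼 x, 𝔼 d, ∏ j ∈ Finset.range k, g (x + (j : ZMod p) * d) := by
  obtain ⟨c, hc, h⟩ := varnavides_set k hk (δ/2) (by positivity)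
  refine ⟨c * (δ/2)^k, by positivity, fun p _ g h0 h1 hE => ?_⟩
  have := h p {x | δ/2 ≤ g x} (markov hδ.le h1 hE)
  rw [← expect_prod_type (fun q : ZMod p × ZMod p => ∏ j ∈ Finset.range k, g (q.1 + (j : ZMod p) * q.2))]
  refine le_trans (mul_le_mul_of_nonneg_right this (by positivity)) ?_
  unfold dens
  rw [Finset.expect_mul]
  apply expect_mono
  intro q
  by_cases hq : q ∈ {q : ZMod p × ZMod p | ∀ j < k, q.1 + (j : ZMod p) * q.2 ∈ {x | δ/2 ≤ g x}}
  · rw [ind_mem hq, one_mul]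
    calc (δ/2)^k = ∏ j ∈ Finset.range k, (δ/2) := by rw [Finset.prod_const, Finset.card_range]
      _ ≤ _ := Finset.prod_le_prod (fun _ _ => by positivity) (fun j hj => hq j (Finset.mem_range.1 hj))
  · rw [ind_not_mem hq, zero_mul]
    exact Finset.prod_nonneg (fun _ _ => h0 _)
end MulAP

namespace MulAP
open scoped BigOperators
open Finset (univ)

section cnt
variable {I X : Type} [Fintype I] [DecidableEq I] [Fintype X]

def Indep {I X Y : Type} [DecidableEq I] (i : I) (f : (I → X) → Y) : Prop :=
  ∀ x t, f (Function.update x i t) = f x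

def CutLe (i : I) (F : (I → X) → ℝ) (ε : ℝ) : Prop :=
  ∀ h : I → (I → X) → ℝ, (∀ j, j ≠ i → Indep j (h j)) → (∀ j, j ≠ i → ∀ x, |h j x| ≤ 1) →
    |𝔼 x, F x * ∏ j ∈ univ.erase i, h j x| ≤ ε

noncomputable def av (i : I) (F : (I → X) → ℝ) (x : I → X) : ℝ := 𝔼 t, F (Function.update x i t)

lemma expect_update (i : I) (F : (I → X) → ℝ) : 𝔼 x, av i F x = 𝔼 x, F x := by
  let c : Unit ↪ I := ⟨fun _ => i, fun _ _ _ => rfl⟩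
  rw [← expect_extend c F]
  refine Finset.expect_congr rfl fun z _ => ?_
  unfold av
  apply Fintype.expect_equiv (Equiv.funUnique Unit X).symm
  intro t
  congr 1
  funext j
  by_cases h : j = i
  · subst h
    have : j = c () := rfl
    rw [Function.update_self]
    conv_rhs => rw [this]
    rw [c.injective.extend_apply]
    rfl
  · rw [Function.update_of_ne h, Function.extend_apply']
    rintro ⟨u, hu⟩
    exact h hu.symm

lemma indep_av (i : I) (F : (I → X) → ℝ) : Indep i (av i F) := by
  intro x t
  simp [av]

lemma expect_mul_av (i : I) {u : (I → X) → ℝ} (hu : Indep i u) (F : (I → X) → ℝ) :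
    𝔼 x, u x * F x = 𝔼 x, u x * av i F x := by
  rw [← expect_update i]
  refine Finset.expect_congr rfl fun x _ => ?_
  unfold av
  rw [Finset.mul_expect]
  refine Finset.expect_congr rfl fun t _ => ?_
  show u (Function.update x i t) * _ = _
  rw [hu]

lemma av_of_indep [Nonempty X] (i : I) {u : (I → X) → ℝ} (hu : Indep i u) (x) : av i u x = u x := by
  unfold av
  simp_rw [hu x]
  exact Fintype.expect_const _

lemma CutLe.mono {i : I} {F : (I → X) → ℝ} {ε ε' : ℝ} (h : CutLe i F ε) (he : ε ≤ ε') : CutLe i F ε' :=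
  fun g h1 h2 => (h g h1 h2).trans he

lemma cut_zero (i : I) {ε : ℝ} (hε : 0 ≤ ε) : CutLe (X := X) i (fun _ => 0) ε := by
  intro h _ _
  simpa using hε

lemma cut_scaled {i : I} {F : (I → X) → ℝ} {ε : ℝ} (hF : CutLe i F ε) (h : I → (I → X) → ℝ)
    (hi : ∀ j, j ≠ i → Indep j (h j)) (C : I → ℝ) (hC : ∀ j, 0 < C j)
    (hb : ∀ j, j ≠ i → ∀ x, |h j x| ≤ C j) :
    |𝔼 x, F x * ∏ j ∈ univ.erase i, h j x| ≤ (∏ j ∈ univ.erase i, C j) * ε := by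
  have h0 : 0 < ∏ j ∈ univ.erase i, C j := Finset.prod_pos (fun j _ => hC j)
  have := hF (fun j x => (C j)⁻¹ * h j x) (fun j hj x t => by simp only [hi j hj x t]) (fun j hj x => by
    rw [abs_mul, abs_inv, abs_of_pos (hC j), inv_mul_le_iff₀ (hC j), mul_one]
    exact hb j hj x)
  have e : ∀ x, F x * ∏ j ∈ univ.erase i, (C j)⁻¹ * h j x =
      (∏ j ∈ univ.erase i, C j)⁻¹ * (F x * ∏ j ∈ univ.erase i, h j x) := by
    intro x
    rw [Finset.prod_mul_distrib, Finset.prod_inv_distrib]; ring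
  simp_rw [e] at this
  rw [← Finset.mul_expect, abs_mul, abs_inv, abs_of_pos h0, inv_mul_le_iff₀ h0] at this
  exact this

lemma abs_expect_le {Y : Type} [Fintype Y] {f : Y → ℝ} {c : ℝ} (hc : 0 ≤ c) (h : ∀ x, |f x| ≤ c) :
    |𝔼 x, f x| ≤ c := by
  rw [abs_le]
  constructor
  · have := expect_le_of (f := fun x => - f x) hc (fun x => (neg_le_abs _).trans (h x))
    rw [Finset.expect_neg_distrib] at this
    linarith
  · exact expect_le_of hc (fun x => (le_abs_self _).trans (h x))

lemma count_base (η : ℝ) (f g : I → (I → X) → ℝ) (hf : ∀ j, Indep j (f j)) (hg : ∀ j, Indep j (g j))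
    (hf1 : ∀ j x, |f j x| ≤ 1) (hg1 : ∀ j x, |g j x| ≤ 1)
    (hc : ∀ j, CutLe j (fun x => f j x - g j x) η) :
    |𝔼 x, ∏ j, f j x - 𝔼 x, ∏ j, g j x| ≤ Fintype.card I * η := by
  classical
  have key : ∀ s : Finset I, |𝔼 x, ∏ j, (if j ∈ s then f j x else g j x) - 𝔼 x, ∏ j, g j x| ≤ s.card * η := by
    intro s
    induction s using Finset.induction_on with
    | empty => simp
    | insert a s ha ih =>
      have h1 := hc a (fun j x => if j ∈ s then f j x else g j x)
        (fun j _ x t => by simp only [hf j x t, hg j x t])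
        (fun j _ x => by split_ifs; exacts [hf1 j x, hg1 j x])
      have e : 𝔼 x, ∏ j, (if j ∈ insert a s then f j x else g j x) -
          𝔼 x, ∏ j, (if j ∈ s then f j x else g j x) =
          𝔼 x, (f a x - g a x) * ∏ j ∈ univ.erase a, (if j ∈ s then f j x else g j x) := by
        rw [← Finset.expect_sub_distrib]
        refine Finset.expect_congr rfl fun x _ => ?_
        rw [← Finset.mul_prod_erase univ _ (Finset.mem_univ a), ← Finset.mul_prod_erase univ (fun j => if j ∈ s then f j x else g j x) (Finset.mem_univ a)]
        rw [if_pos (Finset.mem_insert_self a s), if_neg ha, sub_mul]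
        congr 2
        refine Finset.prod_congr rfl fun j hj => ?_
        have := Finset.ne_of_mem_erase hj
        simp [this]
      rw [Finset.card_insert_of_notMem ha]
      push_cast
      rw [← e] at h1
      have := abs_add_le (𝔼 x, ∏ j, (if j ∈ insert a s then f j x else g j x) -
          𝔼 x, ∏ j, (if j ∈ s then f j x else g j x)) (𝔼 x, ∏ j, (if j ∈ s then f j x else g j x) - 𝔼 x, ∏ j, g j x)
      rw [sub_add_sub_cancel] at this
      linarith
  simpa using key univ

lemma prod_le_pow (s : Finset I) (C : I → ℝ) (B : ℝ) (hB : 1 ≤ B) (h0 : ∀ j ∈ s, 0 ≤ C j) (h : ∀ j ∈ s, C j ≤ B) :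
    ∏ j ∈ s, C j ≤ B ^ Fintype.card I := by
  calc ∏ j ∈ s, C j ≤ ∏ j ∈ s, B := Finset.prod_le_prod h0 h
    _ = B ^ s.card := by simp
    _ ≤ _ := pow_le_pow_right₀ hB (Finset.card_le_univ s)

lemma count_nu (i : I) (u : (I → X) → ℝ) (hu : Indep i u) (M : ℝ) (hM : 0 < M) (huM : ∀ x, |u x| ≤ M)
    (ν : I → (I → X) → ℝ) (hν : ∀ j, Indep j (ν j)) (B ε : ℝ) (hB : 1 ≤ B) (hε : 0 ≤ ε)
    (hν0 : ∀ j x, 0 ≤ ν j x) (hνB : ∀ j x, ν j x ≤ B)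
    (hc : ∀ j, CutLe j (fun x => ν j x - 1) ε) :
    |𝔼 x, u x * ∏ j ∈ univ.erase i, ν j x - 𝔼 x, u x| ≤ Fintype.card I * (M * B ^ Fintype.card I * ε) := by
  classical
  have hc0 : 0 ≤ M * B ^ Fintype.card I * ε := by positivity
  have key : ∀ s : Finset I, i ∉ s → |𝔼 x, u x * ∏ j ∈ s, ν j x - 𝔼 x, u x| ≤
      s.card * (M * B ^ Fintype.card I * ε) := by
    intro s
    induction s using Finset.induction_on with
    | empty => simp
    | insert a s ha ih =>
      intro his
      rw [Finset.mem_insert, not_or] at his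
      have ih := ih his.2
      have h1 := cut_scaled (hc a) (fun j x => if j = i then u x else if j ∈ s then ν j x else 1)
        (fun j _ x t => by
          simp only
          split_ifs with h h'
          · subst h; exact hu x t
          · exact hν j x t
          · rfl)
        (fun j => if j = i then M else B)
        (fun j => by split_ifs <;> linarith)
        (fun j _ x => by
          split_ifs
          · exact huM x
          · rw [abs_of_nonneg (hν0 j x)]; exact hνB j x
          · simpa using hB)
      have hprod : ∏ j ∈ univ.erase a, (if j = i then M else B) ≤ M * B ^ Fintype.card I := by
        have hia : i ∈ univ.erase a := by simp [his.1]
        rw [← Finset.mul_prod_erase _ _ hia, if_pos rfl]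
        gcongr
        apply prod_le_pow _ _ _ hB
        · intro j _; split_ifs <;> linarith
        · intro j hj
          rw [if_neg (Finset.ne_of_mem_erase hj)]
      have e : 𝔼 x, u x * ∏ j ∈ insert a s, ν j x - 𝔼 x, u x * ∏ j ∈ s, ν j x =
          𝔼 x, (ν a x - 1) * ∏ j ∈ univ.erase a, (if j = i then u x else if j ∈ s then ν j x else 1) := by
        rw [← Finset.expect_sub_distrib]
        refine Finset.expect_congr rfl fun x _ => ?_
        have hia : i ∈ univ.erase a := by simp [his.1]
        rw [← Finset.mul_prod_erase _ _ hia, if_pos rfl, Finset.prod_insert ha]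
        have : ∏ j ∈ (univ.erase a).erase i, (if j = i then u x else if j ∈ s then ν j x else 1) = ∏ j ∈ s, ν j x := by
          rw [← Finset.prod_subset (s₁ := s)]
          · refine Finset.prod_congr rfl fun j hj => ?_
            rw [if_neg (by rintro rfl; exact his.2 hj), if_pos hj]
          · intro j hj
            simp only [Finset.mem_erase, Finset.mem_univ, and_true]
            exact ⟨by rintro rfl; exact his.2 hj, by rintro rfl; exact ha hj⟩
          · intro j hj hjs
            rw [if_neg (Finset.ne_of_mem_erase hj), if_neg hjs]
        rw [this]; ring
      rw [← e] at h1
      rw [Finset.card_insert_of_notMem ha]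
      push_cast
      have h2 := mul_le_mul_of_nonneg_right hprod hε
      have := abs_add_le (𝔼 x, u x * ∏ j ∈ insert a s, ν j x - 𝔼 x, u x * ∏ j ∈ s, ν j x)
        (𝔼 x, u x * ∏ j ∈ s, ν j x - 𝔼 x, u x)
      rw [sub_add_sub_cancel] at this
      linarith
  refine (key _ (Finset.notMem_erase _ _)).trans ?_
  gcongr
  exact Finset.card_le_univ _

lemma cut_av (i : I) {F : (I → X) → ℝ} {ε : ℝ} (hε : 0 ≤ ε) (hF : CutLe i F ε) (a b : I → (I → X) → ℝ) (B : ℝ) (hB : 1 ≤ B)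
    (ha : ∀ j, Indep j (a j)) (hb : ∀ j, Indep j (b j)) (haB : ∀ j x, |a j x| ≤ B) (hbB : ∀ j x, |b j x| ≤ B) :
    |𝔼 x, F x * (av i (fun x => ∏ j ∈ univ.erase i, a j x) x * av i (fun x => ∏ j ∈ univ.erase i, b j x) x)|
      ≤ B ^ (2 * Fintype.card I) * ε := by
  have e : 𝔼 x, F x * (av i (fun x => ∏ j ∈ univ.erase i, a j x) x * av i (fun x => ∏ j ∈ univ.erase i, b j x) x)
      = 𝔼 s, 𝔼 t, 𝔼 x, F x * ∏ j ∈ univ.erase i, (a j (Function.update x i s) * b j (Function.update x i t)) := by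
    have : ∀ x, F x * (av i (fun x => ∏ j ∈ univ.erase i, a j x) x * av i (fun x => ∏ j ∈ univ.erase i, b j x) x)
      = 𝔼 s, 𝔼 t, F x * ∏ j ∈ univ.erase i, (a j (Function.update x i s) * b j (Function.update x i t)) := by
      intro x
      unfold av
      rw [Finset.expect_mul_expect, Finset.mul_expect]
      refine Finset.expect_congr rfl fun s _ => ?_
      rw [Finset.mul_expect]
      refine Finset.expect_congr rfl fun t _ => ?_
      rw [Finset.prod_mul_distrib]
    simp_rw [this]
    rw [expect_comm2]
    refine Finset.expect_congr rfl fun s _ => ?_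
    rw [expect_comm2]
  rw [e]
  have hB0 : (0:ℝ) < B := by linarith
  apply abs_expect_le (by positivity)
  intro s
  apply abs_expect_le (by positivity)
  intro t
  refine (cut_scaled hF (fun j x => a j (Function.update x i s) * b j (Function.update x i t)) ?_ (fun _ => B * B)
    (fun _ => by positivity) ?_).trans ?_
  · intro j hj x r
    simp only
    rw [Function.update_comm hj, Function.update_comm hj, ha, hb]
  · intro j _ x
    rw [abs_mul]
    exact mul_le_mul (haB _ _) (hbB _ _) (abs_nonneg _) (by linarith)
  · gcongr
    refine (prod_le_pow _ _ (B*B) (by nlinarith) (fun _ _ => by positivity) (fun _ _ => le_rfl)).trans ?_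
    rw [← pow_two, ← pow_mul]
end cnt
end MulAP

namespace MulAP
open scoped BigOperators
open Finset (univ)

set_option linter.unusedSectionVars false
section cnt2
variable {I : Type} [Fintype I] [DecidableEq I]

lemma split_prod {X : Type} [Fintype X] (i : I) (u : (I → X) → ℝ) (hu : Indep i u) (f : I → (I → X) → ℝ) :
    𝔼 x, ∏ j, (if j = i then u x else f j x) = 𝔼 x, u x * av i (fun x => ∏ j ∈ univ.erase i, f j x) x := by
  rw [← expect_mul_av i hu]
  refine Finset.expect_congr rfl fun x _ => ?_
  rw [← Finset.mul_prod_erase univ _ (Finset.mem_univ i), if_pos rfl]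
  congr 1
  refine Finset.prod_congr rfl fun j hj => ?_
  rw [if_neg (Finset.ne_of_mem_erase hj)]

def CountProp (I : Type) [Fintype I] [DecidableEq I] (S : Finset I) (ε η : ℝ) : Prop :=
  ∀ (X : Type) [Fintype X] [Nonempty X] (f g ν : I → (I → X) → ℝ) (B ε₀ : ℝ), 1 ≤ B → 0 ≤ ε₀ →
    B ^ (2 * Fintype.card I) * ε₀ ≤ η →
    (∀ j, Indep j (f j)) → (∀ j, Indep j (g j)) → (∀ j, Indep j (ν j)) →
    (∀ j x, 0 ≤ f j x) → (∀ j x, f j x ≤ ν j x) → (∀ j x, 0 ≤ g j x) → (∀ j x, g j x ≤ 1) →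
    (∀ j x, ν j x ≤ B) →
    (∀ j, CutLe j (fun x => f j x - g j x) η) → (∀ j, CutLe j (fun x => ν j x - 1) ε₀) →
    (∀ j, j ∉ S → ∀ x, ν j x = 1) →
    |𝔼 x, ∏ j, f j x - 𝔼 x, ∏ j, g j x| ≤ ε

lemma count_IH {S : Finset I} {i : I} (hi : i ∉ S) {ε η : ℝ} (hη : 0 ≤ η) (hC : CountProp I S ε η)
    (X : Type) [Fintype X] [Nonempty X] (f g ν : I → (I → X) → ℝ) (B ε₀ : ℝ) (hB : 1 ≤ B) (h0 : 0 ≤ ε₀)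
    (hBe : B ^ (2 * Fintype.card I) * ε₀ ≤ η)
    (hf : ∀ j, Indep j (f j)) (hg : ∀ j, Indep j (g j)) (hν : ∀ j, Indep j (ν j))
    (hf0 : ∀ j x, 0 ≤ f j x) (hfν : ∀ j x, f j x ≤ ν j x) (hg0 : ∀ j x, 0 ≤ g j x) (hg1 : ∀ j x, g j x ≤ 1)
    (hνB : ∀ j x, ν j x ≤ B)
    (hfg : ∀ j, CutLe j (fun x => f j x - g j x) η) (hν1 : ∀ j, CutLe j (fun x => ν j x - 1) ε₀)
    (hS : ∀ j, j ∉ insert i S → ∀ x, ν j x = 1) (u : (I → X) → ℝ) (hu : Indep i u)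
    (hu0 : ∀ x, 0 ≤ u x) (hu1 : ∀ x, u x ≤ 1) :
    |𝔼 x, u x * av i (fun x => ∏ j ∈ univ.erase i, f j x) x
      - 𝔼 x, u x * av i (fun x => ∏ j ∈ univ.erase i, g j x) x| ≤ ε := by
  rw [← split_prod i u hu, ← split_prod i u hu]
  refine hC X (fun j x => if j = i then u x else f j x) (fun j x => if j = i then u x else g j x)
    (fun j x => if j = i then 1 else ν j x) B ε₀ hB h0 hBe ?_ ?_ ?_ ?_ ?_ ?_ ?_ ?_ ?_ ?_ ?_
  · intro j x t
    by_cases h : j = i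
    · subst h; simpa using hu x t
    · simpa [h] using hf j x t
  · intro j x t
    by_cases h : j = i
    · subst h; simpa using hu x t
    · simpa [h] using hg j x t
  · intro j x t
    by_cases h : j = i
    · simp [h]
    · simpa [h] using hν j x t
  · intro j x; split_ifs; exacts [hu0 x, hf0 j x]
  · intro j x; split_ifs; exacts [hu1 x, hfν j x]
  · intro j x; split_ifs; exacts [hu0 x, hg0 j x]
  · intro j x; split_ifs; exacts [hu1 x, hg1 j x]
  · intro j x; split_ifs; exacts [hB, hνB j x]
  · intro j
    by_cases h : j = i
    · simpa [h] using cut_zero i hη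
    · simpa [h] using hfg j
  · intro j
    by_cases h : j = i
    · simpa [h] using cut_zero i h0
    · simpa [h] using hν1 j
  · intro j hj x
    split_ifs with h
    · rfl
    · exact hS j (by simp [h, hj]) x

lemma av_mono {X : Type} [Fintype X] (i : I) {F G : (I → X) → ℝ} (h : ∀ x, F x ≤ G x) (x) : av i F x ≤ av i G x :=
  expect_mono fun _ => h _

lemma av_nn {X : Type} [Fintype X] (i : I) {F : (I → X) → ℝ} (h : ∀ x, 0 ≤ F x) (x) : 0 ≤ av i F x :=
  expect_nn fun _ => h _

lemma var_nu {X : Type} [Fintype X] [Nonempty X] (i : I)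
    (ν : I → (I → X) → ℝ) (hν : ∀ j, Indep j (ν j)) (B ε η : ℝ) (hB : 1 ≤ B) (hε : 0 ≤ ε)
    (hBe : B ^ (2 * Fintype.card I) * ε ≤ η)
    (hν0 : ∀ j x, 0 ≤ ν j x) (hνB : ∀ j x, ν j x ≤ B)
    (hc : ∀ j, CutLe j (fun x => ν j x - 1) ε) :
    𝔼 x, (av i (fun x => ∏ j ∈ univ.erase i, ν j x) x - 1) ^ 2 ≤ 2 * Fintype.card I * η := by
  set ν' := av i (fun x => ∏ j ∈ univ.erase i, ν j x) with hν'
  have hB0 : (0:ℝ) ≤ B := by linarith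
  have hpB : ∀ x, ∏ j ∈ univ.erase i, ν j x ≤ B ^ Fintype.card I := fun x =>
    prod_le_pow _ _ B hB (fun j _ => hν0 j x) (fun j _ => hνB j x)
  have hν'0 : ∀ x, 0 ≤ ν' x := av_nn i (fun x => Finset.prod_nonneg fun j _ => hν0 j x)
  have hν'B : ∀ x, ν' x ≤ B ^ Fintype.card I := fun x => expect_le_of (by positivity) fun t => hpB _
  have h1 := count_nu i (fun _ => 1) (fun _ _ => rfl) 1 one_pos (by simp) ν hν B ε hB hε hν0 hνB hc
  have h2 := count_nu i ν' (indep_av i _) (B ^ Fintype.card I) (by positivity)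
    (fun x => by rw [abs_of_nonneg (hν'0 x)]; exact hν'B x) ν hν B ε hB hε hν0 hνB hc
  rw [expect_mul_av i (indep_av i _)] at h2
  rw [expect_mul_av i (fun _ _ => rfl)] at h1
  rw [← hν'] at h1 h2
  simp only [one_mul, Fintype.expect_const] at h1
  have e : 𝔼 x, (ν' x - 1) ^ 2 = (𝔼 x, ν' x * ν' x - 𝔼 x, ν' x) - (𝔼 x, ν' x - 1) := by
    have : (1:ℝ) = 𝔼 x : I → X, (1:ℝ) := by rw [Fintype.expect_const]
    rw [this, ← Finset.expect_sub_distrib, ← Finset.expect_sub_distrib, ← Finset.expect_sub_distrib, ← this]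
    refine Finset.expect_congr rfl fun x _ => ?_
    ring
  rw [e]
  have h3 : B ^ Fintype.card I * ε ≤ η := by
    refine le_trans ?_ hBe
    gcongr
    omega
  have h4 : B ^ Fintype.card I * B ^ Fintype.card I * ε ≤ η := by
    refine le_trans (le_of_eq ?_) hBe
    rw [two_mul, pow_add]
  have h5 := mul_le_mul_of_nonneg_left h3 (Nat.cast_nonneg (α := ℝ) (Fintype.card I))
  have h6 := mul_le_mul_of_nonneg_left h4 (Nat.cast_nonneg (α := ℝ) (Fintype.card I))
  have h7 := abs_le.1 h1
  have h8 := abs_le.1 h2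
  linarith

lemma counting_step {S : Finset I} {i : I} (hi : i ∉ S) (ε ε1 η' : ℝ) (hε : 0 < ε) (hε1 : 0 < ε1) (hε1ε : 64 * ε1 ≤ ε ^ 2) (hη' : 0 < η')
    (hC : CountProp I S ε1 η') : ∃ η > 0, CountProp I (insert i S) ε η := by
  set K : ℝ := 2 * Fintype.card I + 1 with hK
  have hK0 : 0 < K := by positivity
  obtain ⟨η, hη0, g1, g2, g3, g4, g5, g6⟩ : ∃ η > 0, η ≤ η' ∧ 4 * η ≤ ε1 ∧ η ≤ ε / 2 ∧ η ≤ 1 ∧ K * η ≤ ε1 ^ 2 ∧ K * η ≤ ε1 := by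
    refine ⟨min (min η' (ε1 / 4)) (min (min (ε / 2) 1) (min (ε1 ^ 2 / K) (ε1 / K))), by positivity, ?_, ?_, ?_, ?_, ?_, ?_⟩
    · simp
    · rw [← le_div_iff₀' (by norm_num)]; simp
    · simp
    · simp
    · rw [← le_div_iff₀' hK0]; simp
    · rw [← le_div_iff₀' hK0]; simp
  refine ⟨η, hη0, ?_⟩
  intro X _ _ f g ν B ε₀ hB h0 hBe hf hg hν hf0 hfν hg0 hg1 hνB hfg hν1 hS
  have hν0 : ∀ j x, 0 ≤ ν j x := fun j x => (hf0 j x).trans (hfν j x)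
  have IH := count_IH hi hη'.le hC X f g ν B ε₀ hB h0 (hBe.trans g1) hf hg hν hf0 hfν hg0 hg1 hνB
    (fun j => (hfg j).mono g1) hν1 hS
  have hV := var_nu i ν hν B ε₀ η hB h0 hBe hν0 hνB hν1
  have cff := cut_av i h0 (hν1 i) f f B hB hf hf (fun j x => by rw [abs_of_nonneg (hf0 j x)]; exact (hfν j x).trans (hνB j x))
    (fun j x => by rw [abs_of_nonneg (hf0 j x)]; exact (hfν j x).trans (hνB j x))
  have cfg := cut_av i h0 (hν1 i) f g B hB hf hg (fun j x => by rw [abs_of_nonneg (hf0 j x)]; exact (hfν j x).trans (hνB j x))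
    (fun j x => by rw [abs_of_nonneg (hg0 j x)]; exact (hg1 j x).trans hB)
  have cgg := cut_av i h0 (hν1 i) g g B hB hg hg (fun j x => by rw [abs_of_nonneg (hg0 j x)]; exact (hg1 j x).trans hB)
    (fun j x => by rw [abs_of_nonneg (hg0 j x)]; exact (hg1 j x).trans hB)
  have ef : 𝔼 x, ∏ j, f j x = 𝔼 x, f i x * av i (fun x => ∏ j ∈ univ.erase i, f j x) x := by
    rw [← split_prod i _ (hf i)]
    refine Finset.expect_congr rfl fun x _ => Finset.prod_congr rfl fun j _ => ?_
    split_ifs with h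
    · rw [h]
    · rfl
  have efg : 𝔼 x, f i x * ∏ j ∈ univ.erase i, g j x = 𝔼 x, f i x * av i (fun x => ∏ j ∈ univ.erase i, g j x) x :=
    expect_mul_av i (hf i) _
  have eg : 𝔼 x, ∏ j, g j x = 𝔼 x, g i x * ∏ j ∈ univ.erase i, g j x := by
    refine Finset.expect_congr rfl fun x _ => ?_
    rw [← Finset.mul_prod_erase univ _ (Finset.mem_univ i)]
  have hlast := hfg i g (fun j _ => hg j) (fun j _ x => by rw [abs_of_nonneg (hg0 j x)]; exact hg1 j x)
  have hlast' : 𝔼 x, (f i x - g i x) * ∏ j ∈ univ.erase i, g j x =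
      𝔼 x, f i x * ∏ j ∈ univ.erase i, g j x - 𝔼 x, g i x * ∏ j ∈ univ.erase i, g j x := by
    rw [← Finset.expect_sub_distrib]
    refine Finset.expect_congr rfl fun x _ => ?_
    ring
  have hf'0 := av_nn i (F := fun x => ∏ j ∈ univ.erase i, f j x) (fun x => Finset.prod_nonneg fun j _ => hf0 j x)
  have hg'0 := av_nn i (F := fun x => ∏ j ∈ univ.erase i, g j x) (fun x => Finset.prod_nonneg fun j _ => hg0 j x)
  have hg'1 : ∀ x, av i (fun x => ∏ j ∈ univ.erase i, g j x) x ≤ 1 := fun x => expect_le_of zero_le_one fun t =>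
    Finset.prod_le_one (fun j _ => hg0 j _) (fun j _ => hg1 j _)
  have hf'ν := av_mono i (F := fun x => ∏ j ∈ univ.erase i, f j x) (G := fun x => ∏ j ∈ univ.erase i, ν j x)
    (fun x => Finset.prod_le_prod (fun j _ => hf0 j x) (fun j _ => hfν j x))
  have if' := indep_av i (fun x : I → X => ∏ j ∈ univ.erase i, f j x)
  have ig' := indep_av i (fun x : I → X => ∏ j ∈ univ.erase i, g j x)
  have eνi : 𝔼 x, ν i x ≤ 2 := by
    have := hν1 i (fun _ _ => 1) (fun _ _ _ _ => rfl) (by simp)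
    simp only [Finset.prod_const_one, mul_one] at this
    rw [Finset.expect_sub_distrib, Fintype.expect_const] at this
    have h3 : ε₀ ≤ η := by
      refine le_trans ?_ hBe
      exact le_mul_of_one_le_left h0 (one_le_pow₀ hB)
    have := (abs_le.1 this).2
    linarith
  rw [ef, eg]
  rw [hlast', efg] at hlast
  generalize av i (fun x => ∏ j ∈ univ.erase i, f j x) = f' at *
  generalize av i (fun x => ∏ j ∈ univ.erase i, g j x) = g' at *
  generalize av i (fun x => ∏ j ∈ univ.erase i, ν j x) = ν' at *
  have IH1 := IH (fun x => min (f' x) 1) (fun x t => by simp only [if' x t]) (fun x => le_min (hf'0 x) zero_le_one)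
    (fun x => min_le_right _ _)
  have IH2 := IH g' ig' hg'0 hg'1
  rw [← Finset.expect_sub_distrib] at IH1 IH2
  -- second moment of f' - g'
  have hw : 𝔼 x, (f' x - min (f' x) 1) * (f' x - g' x) ≤ 2 * ε1 := by
    have hpt : ∀ x, (f' x - min (f' x) 1) * (f' x - g' x) ≤ ε1 / 2 + (1 / (2 * ε1) + 1) * (ν' x - 1) ^ 2 := by
      intro x
      have a1 := hf'0 x
      have a2 := hg'0 x
      have a3 := hg'1 x
      have a4 := hf'ν x
      have hR : 0 ≤ (1 / (2 * ε1) + 1) * (ν' x - 1) ^ 2 := by positivity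
      rcases le_total (f' x) 1 with h | h
      · rw [min_eq_left h, sub_self, zero_mul]; linarith
      · rw [min_eq_right h]
        set w := ν' x - 1 with hw
        have hw0 : 0 ≤ w := by linarith
        have b1 : (f' x - 1) * (f' x - g' x) ≤ w * (1 + w) := by
          apply mul_le_mul <;> linarith
        have b2 : w ≤ ε1 / 2 + 1 / (2 * ε1) * w ^ 2 := by
          have : ε1 / 2 + 1 / (2 * ε1) * w ^ 2 - w = (ε1 - w) ^ 2 / (2 * ε1) := by field_simp; ring
          have : 0 ≤ (ε1 - w) ^ 2 / (2 * ε1) := by positivity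
          linarith
        linarith
    refine (expect_mono hpt).trans ?_
    rw [Finset.expect_add_distrib, Fintype.expect_const, ← Finset.mul_expect]
    have hV' : 𝔼 x, (ν' x - 1) ^ 2 ≤ K * η := by
      refine hV.trans ?_
      rw [hK]; gcongr; linarith
    have c1 : 1 / (2 * ε1) * 𝔼 x, (ν' x - 1) ^ 2 ≤ ε1 / 2 := by
      rw [div_mul_eq_mul_div, one_mul, div_le_div_iff₀ (by positivity) (by norm_num)]
      nlinarith
    nlinarith
  have hD2 : 𝔼 x, (f' x - g' x) ^ 2 ≤ 4 * ε1 := by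
    have e : 𝔼 x, (f' x - g' x) ^ 2 = 𝔼 x, (min (f' x) 1 * f' x - min (f' x) 1 * g' x) +
        𝔼 x, (f' x - min (f' x) 1) * (f' x - g' x) - 𝔼 x, (g' x * f' x - g' x * g' x) := by
      rw [← Finset.expect_add_distrib, ← Finset.expect_sub_distrib]
      refine Finset.expect_congr rfl fun x _ => ?_
      ring
    rw [e]
    have := (abs_le.1 IH1).2
    have := (abs_le.1 IH2).1
    linarith
  have hνD : 𝔼 x, ν i x * (f' x - g' x) ^ 2 ≤ 5 * ε1 := by
    have e : 𝔼 x, ν i x * (f' x - g' x) ^ 2 = 𝔼 x, (f' x - g' x) ^ 2 + 𝔼 x, (ν i x - 1) * (f' x * f' x)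
        - 2 * 𝔼 x, (ν i x - 1) * (f' x * g' x) + 𝔼 x, (ν i x - 1) * (g' x * g' x) := by
      rw [Finset.mul_expect, ← Finset.expect_add_distrib, ← Finset.expect_sub_distrib, ← Finset.expect_add_distrib]
      refine Finset.expect_congr rfl fun x _ => ?_
      ring
    rw [e]
    have := (abs_le.1 cff).2
    have := (abs_le.1 cfg).1
    have := (abs_le.1 cgg).2
    linarith
  have hmain : |𝔼 x, f i x * (f' x - g' x)| ≤ ε / 2 := by
    refine (Finset.abs_expect_le _ _).trans ?_
    have hpt : ∀ x, |f i x * (f' x - g' x)| ≤ ε / 8 * ν i x + 2 / ε * (ν i x * (f' x - g' x) ^ 2) := by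
      intro x
      rw [abs_mul, abs_of_nonneg (hf0 i x)]
      set D := f' x - g' x
      have b2 : |D| ≤ ε / 8 + 2 / ε * D ^ 2 := by
        have e1 : ε / 8 + 2 / ε * D ^ 2 - |D| = (ε - 4 * |D|) ^ 2 / (8 * ε) := by
          rw [← sq_abs D]; field_simp; ring
        have : 0 ≤ (ε - 4 * |D|) ^ 2 / (8 * ε) := by positivity
        linarith
      calc f i x * |D| ≤ ν i x * (ε / 8 + 2 / ε * D ^ 2) := mul_le_mul (hfν i x) b2 (abs_nonneg _) (hν0 i x)
        _ = _ := by ring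
    refine (expect_mono hpt).trans ?_
    rw [Finset.expect_add_distrib, ← Finset.mul_expect, ← Finset.mul_expect]
    have c1 : 2 / ε * 𝔼 x, (ν i x * (f' x - g' x) ^ 2) ≤ ε / 4 := by
      rw [div_mul_eq_mul_div, div_le_div_iff₀ (by positivity) (by norm_num)]
      nlinarith
    nlinarith
  have e : 𝔼 x, f i x * (f' x - g' x) = 𝔼 x, f i x * f' x - 𝔼 x, f i x * g' x := by
    rw [← Finset.expect_sub_distrib]
    refine Finset.expect_congr rfl fun x _ => ?_
    ring
  rw [e] at hmain
  have := abs_le.1 hmain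
  have := abs_le.1 hlast
  rw [abs_le]
  constructor <;> linarith

theorem counting (S : Finset I) : ∀ ε > 0, ∃ η > 0, CountProp I S ε η := by
  induction S using Finset.induction_on with
  | empty =>
    intro ε hε
    refine ⟨ε / (Fintype.card I + 1), by positivity, ?_⟩
    intro X _ _ f g ν B ε₀ hB h0 hBe hf hg hν hf0 hfν hg0 hg1 hνB hfg hν1 hS
    refine (count_base _ f g hf hg ?_ ?_ hfg).trans ?_
    · intro j x
      rw [abs_of_nonneg (hf0 j x), ← hS j (by simp) x]
      exact hfν j x
    · intro j x
      rw [abs_of_nonneg (hg0 j x)]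
      exact hg1 j x
    · rw [← mul_div_assoc, div_le_iff₀ (by positivity)]
      nlinarith
  | insert i S hi ih =>
    intro ε hε
    obtain ⟨η', hη', h⟩ := ih (ε ^ 2 / 64) (by positivity)
    exact counting_step hi ε (ε ^ 2 / 64) η' hε (by positivity) (by linarith) hη' h
end cnt2
end MulAP

namespace MulAP
open scoped BigOperators
open Finset (univ)
set_option linter.unusedSectionVars false

lemma re_expect {X : Type} [Fintype X] (f : X → ℂ) : (𝔼 x, f x).re = 𝔼 x, (f x).re := by
  exact map_expect (Complex.reLm.restrictScalars ℚ≥0) f univ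

lemma im_expect {X : Type} [Fintype X] (f : X → ℂ) : (𝔼 x, f x).im = 𝔼 x, (f x).im := by
  exact map_expect (Complex.imLm.restrictScalars ℚ≥0) f univ

lemma conj_expect {X : Type} [Fintype X] (f : X → ℂ) :
    (starRingEnd ℂ) (𝔼 x, f x) = 𝔼 x, (starRingEnd ℂ) (f x) := by
  exact map_expect (starRingEnd ℂ) f univ

lemma norm_expect_le' {X : Type} [Fintype X] (f : X → ℂ) : ‖𝔼 x, f x‖ ≤ 𝔼 x, ‖f x‖ :=
  RCLike.norm_expect_le (K := ℂ)

lemma sq_expect_le {X : Type} [Fintype X] (f : X → ℝ) : (𝔼 x, f x) ^ 2 ≤ 𝔼 x, f x ^ 2 := by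
  cases isEmpty_or_nonempty X
  · simp
  · have h : 0 ≤ 𝔼 x, (f x - 𝔼 y, f y) ^ 2 := expect_nn fun x => sq_nonneg _
    set m := 𝔼 y, f y with hm
    have e : 𝔼 x, (f x - m) ^ 2 = 𝔼 x, f x ^ 2 - 2 * m * 𝔼 x, f x + m ^ 2 := by
      have : m ^ 2 = 𝔼 x : X, m ^ 2 := by rw [Fintype.expect_const]
      rw [this, Finset.mul_expect, ← Finset.expect_sub_distrib, ← Finset.expect_add_distrib]
      refine Finset.expect_congr rfl fun x _ => ?_
      ring
    rw [e, ← hm] at h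
    nlinarith

section vdc
variable {I X : Type} [Fintype I] [DecidableEq I] [Fintype X]

lemma expect_update_c (i : I) (F : (I → X) → ℂ) : 𝔼 x, F x = 𝔼 x, 𝔼 t, F (Function.update x i t) := by
  apply Complex.ext
  · rw [re_expect, re_expect, ← expect_update i]
    refine Finset.expect_congr rfl fun x _ => ?_
    rw [re_expect, av]
  · rw [im_expect, im_expect, ← expect_update i]
    refine Finset.expect_congr rfl fun x _ => ?_
    rw [im_expect, av]

lemma sq_expect_norm (G : X → ℂ) : ((‖𝔼 t, G t‖ ^ 2 : ℝ) : ℂ) = 𝔼 s, 𝔼 t, G s * (starRingEnd ℂ) (G t) := by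
  rw [Complex.ofReal_pow, ← Complex.mul_conj', conj_expect, Finset.expect_mul_expect]

lemma lin_update {p : ℕ} {i : I} {U : Finset I} (hi : i ∉ U) (c : I → ZMod p) (x : I → ZMod p) (t : ZMod p) :
    ∑ j ∈ U, c j * Function.update x i t j = ∑ j ∈ U, c j * x j := by
  refine Finset.sum_congr rfl fun j hj => ?_
  rw [Function.update_of_ne (by rintro rfl; exact hi hj)]

lemma vdc_step {p : ℕ} [Fact p.Prime] {i : I} {U : Finset I} (hi : i ∉ U) (c : I → ZMod p) (T : ZMod p → ℂ)
    (h : I → (I → ZMod p) → ℝ) (hind : Indep i (h i)) (hb : ∀ x, |h i x| ≤ 1) :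
    ‖𝔼 x, T (∑ j ∈ insert i U, c j * x j) * ((∏ j ∈ insert i U, h j x : ℝ) : ℂ)‖ ^ 2 ≤
    𝔼 s, 𝔼 t, ‖𝔼 x : I → ZMod p, (T (∑ j ∈ U, c j * x j + c i * s) * (starRingEnd ℂ) (T (∑ j ∈ U, c j * x j + c i * t))) *
      ((∏ j ∈ U, (h j (Function.update x i s) * h j (Function.update x i t)) : ℝ) : ℂ)‖ := by
  have e1 : 𝔼 x, T (∑ j ∈ insert i U, c j * x j) * ((∏ j ∈ insert i U, h j x : ℝ) : ℂ) =
      𝔼 x, (h i x : ℂ) * 𝔼 t, T (∑ j ∈ U, c j * x j + c i * t) * ((∏ j ∈ U, h j (Function.update x i t) : ℝ) : ℂ) := by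
    rw [expect_update_c i]
    refine Finset.expect_congr rfl fun x _ => ?_
    rw [Finset.mul_expect]
    refine Finset.expect_congr rfl fun t _ => ?_
    rw [Finset.sum_insert hi, Finset.prod_insert hi, lin_update hi, Function.update_self, hind, add_comm (c i * t)]
    push_cast
    ring
  rw [e1]
  set G : (I → ZMod p) → ZMod p → ℂ := fun x t => T (∑ j ∈ U, c j * x j + c i * t) *
    ((∏ j ∈ U, h j (Function.update x i t) : ℝ) : ℂ) with hG
  have e2 : ‖𝔼 x, (h i x : ℂ) * 𝔼 t, G x t‖ ≤ 𝔼 x, ‖𝔼 t, G x t‖ := by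
    refine (norm_expect_le' _).trans (expect_mono fun x => ?_)
    rw [norm_mul, Complex.norm_real, Real.norm_eq_abs]
    exact mul_le_of_le_one_left (norm_nonneg _) (hb x)
  have e3 : ‖𝔼 x, (h i x : ℂ) * 𝔼 t, G x t‖ ^ 2 ≤ 𝔼 x, ‖𝔼 t, G x t‖ ^ 2 :=
    (pow_le_pow_left₀ (norm_nonneg _) e2 2).trans (sq_expect_le _)
  have e4 : ((𝔼 x, ‖𝔼 t, G x t‖ ^ 2 : ℝ) : ℂ) = 𝔼 s, 𝔼 t, 𝔼 x, G x s * (starRingEnd ℂ) (G x t) := by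
    rw [Complex.ofReal_expect]
    simp_rw [sq_expect_norm]
    rw [Finset.expect_comm]
    refine Finset.expect_congr rfl fun s _ => ?_
    rw [Finset.expect_comm]
  have e5 : 𝔼 x, ‖𝔼 t, G x t‖ ^ 2 = ‖𝔼 s, 𝔼 t, 𝔼 x, G x s * (starRingEnd ℂ) (G x t)‖ := by
    rw [← e4, Complex.norm_real, Real.norm_eq_abs, abs_of_nonneg]
    exact expect_nn fun x => sq_nonneg _
  refine e3.trans ?_
  rw [e5]
  refine (norm_expect_le' _).trans (expect_mono fun s => ?_)
  refine (norm_expect_le' _).trans (expect_mono fun t => ?_)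
  apply le_of_eq
  congr 1
  refine Finset.expect_congr rfl fun x _ => ?_
  simp only [hG, map_mul, Complex.conj_ofReal, Finset.prod_mul_distrib, Complex.ofReal_mul]
  ring

end vdc

section chr
variable {p : ℕ} [Fact p.Prime]

lemma charT_norm_le (χ : MulChar (ZMod p) ℂ) (S S' : Finset (ZMod p)) (x : ZMod p) : ‖charT χ S S' x‖ ≤ 1 := by
  have h : ∀ a, ‖χ a‖ ≤ 1 := fun a => DirichletCharacter.norm_le_one χ a
  rw [charT, norm_mul, norm_prod, norm_prod]
  refine mul_le_one₀ (Finset.prod_le_one (fun _ _ => norm_nonneg _) (fun a _ => h _)) (Finset.prod_nonneg (fun _ _ => norm_nonneg _))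
    (Finset.prod_le_one (fun _ _ => norm_nonneg _) (fun a _ => ?_))
  rw [RCLike.norm_conj]
  exact h _

lemma charT_mul (χ : MulChar (ZMod p) ℂ) (S S' : Finset (ZMod p)) (a b : ZMod p)
    (hg : Disjoint ((S ∪ S').map (addLeftEmbedding a)) ((S ∪ S').map (addLeftEmbedding b))) (y : ZMod p) :
    charT χ S S' (y + a) * (starRingEnd ℂ) (charT χ S S' (y + b)) =
    charT χ (S.map (addLeftEmbedding a) ∪ S'.map (addLeftEmbedding b))
      (S'.map (addLeftEmbedding a) ∪ S.map (addLeftEmbedding b)) y := by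
  rw [← charT_conj, charT_shift, charT_shift]
  rw [Finset.map_union, Finset.map_union, Finset.disjoint_union_left, Finset.disjoint_union_right, Finset.disjoint_union_right] at hg
  rw [charT, charT, charT, Finset.prod_union hg.1.2, Finset.prod_union hg.2.1]
  ring

def CharHyp (χ : MulChar (ZMod p) ℂ) (M : ℕ) (σ : ℝ) : Prop :=
  ∀ S S' : Finset (ZMod p), Disjoint S S' → (S ∪ S').Nonempty → S.card + S'.card ≤ M → ‖𝔼 x, charT χ S S' x‖ ≤ σ

lemma bad_count (W : Finset (ZMod p)) (a : ZMod p) (ci : ZMod p) (hci : ci ≠ 0) :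
    𝔼 t, (if Disjoint (W.map (addLeftEmbedding a)) (W.map (addLeftEmbedding (ci * t))) then (0:ℝ) else 1) ≤ (W.card ^ 2 : ℕ) / p := by
  classical
  rw [Fintype.expect_eq_sum_div_card, ZMod.card]
  gcongr
  have hs : ∀ t : ZMod p, (if Disjoint (W.map (addLeftEmbedding a)) (W.map (addLeftEmbedding (ci * t))) then (0:ℝ) else 1) =
      if ¬ Disjoint (W.map (addLeftEmbedding a)) (W.map (addLeftEmbedding (ci * t))) then (1:ℝ) else 0 := by
    intro t
    rw [ite_not]
  rw [Finset.sum_congr rfl fun t _ => hs t, ← Finset.sum_filter, Finset.sum_const, nsmul_eq_mul, mul_one]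
  norm_cast
  rw [pow_two, ← Finset.card_product]
  have : univ.filter (fun t => ¬ Disjoint (W.map (addLeftEmbedding a)) (W.map (addLeftEmbedding (ci * t)))) ⊆
    (W ×ˢ W).image (fun w => ci⁻¹ * (a + w.1 - w.2)) := by
    intro t ht
    rw [Finset.mem_filter] at ht
    obtain ⟨y, h1, h2⟩ := Finset.not_disjoint_iff.1 ht.2
    rw [Finset.mem_map] at h1 h2
    obtain ⟨u, hu, rfl⟩ := h1
    obtain ⟨v, hv, hvu⟩ := h2
    simp only [addLeftEmbedding_apply] at hvu
    refine Finset.mem_image.2 ⟨(u, v), Finset.mk_mem_product hu hv, ?_⟩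
    simp only
    rw [← hvu]
    field_simp
    ring
  exact (Finset.card_le_card this).trans Finset.card_image_le

variable {I : Type} [Fintype I] [DecidableEq I]

lemma std_bound (χ : MulChar (ZMod p) ℂ) (M : ℕ) (σ : ℝ) (hσ : CharHyp χ M σ) (hM : (M ^ 2 : ℕ) / (p:ℝ) ≤ σ)
    (c : I → ZMod p) (U : Finset I) :
    ∀ (u : ℕ) (_ : U.card = u + 1) (_ : ∀ j ∈ U, c j ≠ 0) (N : ℕ) (_ : N * 2 ^ u ≤ M) (ρ : ℝ) (_ : 0 ≤ ρ) (_ : ρ ≤ 1) (_ : σ ≤ ρ ^ 2 ^ u)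
      (S S' : Finset (ZMod p)) (_ : Disjoint S S') (_ : (S ∪ S').Nonempty) (_ : S.card + S'.card ≤ N)
      (h : I → (I → ZMod p) → ℝ) (_ : ∀ j ∈ U, Indep j (h j)) (_ : ∀ j ∈ U, ∀ x, |h j x| ≤ 1),
      ‖𝔼 x, charT χ S S' (∑ j ∈ U, c j * x j) * ((∏ j ∈ U, h j x : ℝ) : ℂ)‖ ≤ 2 * ρ := by
  induction U using Finset.induction_on with
  | empty => intro u hu; simp at hu
  | insert i U hi ih =>
    intro u hu hc N hN ρ hρ0 hρ1 hσρ S S' hd hne hSN h hind hb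
    have hci : c i ≠ 0 := hc i (by simp)
    rw [Finset.card_insert_of_notMem hi] at hu
    rcases u with _ | u
    · have hU : U = ∅ := by simpa using hu
      subst hU
      simp only [pow_zero, mul_one, pow_one] at hN hσρ
      have e1 : 𝔼 x, charT χ S S' (∑ j ∈ insert i ∅, c j * x j) * ((∏ j ∈ insert i (∅ : Finset I), h j x : ℝ) : ℂ) =
        𝔼 x : I → ZMod p, (h i x : ℂ) * 𝔼 t, charT χ S S' t := by
        rw [expect_update_c i]
        refine Finset.expect_congr rfl fun x _ => ?_
        rw [Finset.mul_expect]
        apply Fintype.expect_equiv (Equiv.mulLeft₀ (c i) hci)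
        intro t
        simp [hind i (by simp) x t, mul_comm]
      rw [e1]
      refine (norm_expect_le' _).trans ?_
      have := hσ S S' hd hne (hSN.trans hN)
      apply expect_le_of (by positivity)
      intro x
      rw [norm_mul, Complex.norm_real, Real.norm_eq_abs]
      refine (mul_le_of_le_one_left (norm_nonneg _) (hb i (by simp) x)).trans ?_
      linarith
    · have hu' : U.card = u + 1 := by omega
      have hN2 : 2 * N * 2 ^ u ≤ M := by
        refine le_trans (le_of_eq ?_) hN
        rw [pow_succ]; ring
      have hstep := vdc_step hi c (charT χ S S') h (hind i (by simp)) (hb i (by simp))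
      have hρ2 : σ ≤ (ρ ^ 2) ^ 2 ^ u := by
        rw [← pow_mul, ← pow_succ']; exact hσρ
      have hσρ2 : σ ≤ ρ ^ 2 := hρ2.trans (pow_le_of_le_one (by positivity) (by nlinarith) (by positivity))
      have hpt : ∀ s t : ZMod p, ‖𝔼 x : I → ZMod p, (charT χ S S' (∑ j ∈ U, c j * x j + c i * s) * (starRingEnd ℂ) (charT χ S S' (∑ j ∈ U, c j * x j + c i * t))) *
      ((∏ j ∈ U, (h j (Function.update x i s) * h j (Function.update x i t)) : ℝ) : ℂ)‖ ≤ 2 * ρ ^ 2 +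
        (if Disjoint ((S ∪ S').map (addLeftEmbedding (c i * s))) ((S ∪ S').map (addLeftEmbedding (c i * t))) then (0:ℝ) else 1) := by
        intro s t
        have hbh : ∀ j ∈ U, ∀ x, |h j (Function.update x i s) * h j (Function.update x i t)| ≤ 1 := by
          intro j hj x
          rw [abs_mul]
          exact mul_le_one₀ (hb j (by simp [hj]) _) (abs_nonneg _) (hb j (by simp [hj]) _)
        split_ifs with hg
        · rw [add_zero]
          have e : ∀ x : I → ZMod p, charT χ S S' (∑ j ∈ U, c j * x j + c i * s) * (starRingEnd ℂ) (charT χ S S' (∑ j ∈ U, c j * x j + c i * t)) = _ :=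
            fun x => charT_mul χ S S' _ _ hg (∑ j ∈ U, c j * x j)
          simp_rw [e]
          refine ih u hu' (fun j hj => hc j (by simp [hj])) (2 * N) hN2 (ρ ^ 2) (by positivity) (by nlinarith) hρ2 _ _ ?_ ?_ ?_
            (fun j x => h j (Function.update x i s) * h j (Function.update x i t)) ?_ hbh
          · rw [Finset.map_union, Finset.map_union, Finset.disjoint_union_left, Finset.disjoint_union_right, Finset.disjoint_union_right] at hg
            rw [Finset.disjoint_union_left, Finset.disjoint_union_right, Finset.disjoint_union_right]
            exact ⟨⟨(Finset.disjoint_map _).2 hd, hg.1.1⟩, hg.2.2.symm, (Finset.disjoint_map _).2 hd.symm⟩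
          · obtain ⟨w, hw⟩ := hne
            refine ⟨c i * s + w, ?_⟩
            rcases Finset.mem_union.1 hw with hw | hw <;> simp [hw]
          · have a1 := Finset.card_union_le (S.map (addLeftEmbedding (c i * s))) (S'.map (addLeftEmbedding (c i * t)))
            have a2 := Finset.card_union_le (S'.map (addLeftEmbedding (c i * s))) (S.map (addLeftEmbedding (c i * t)))
            simp only [Finset.card_map] at a1 a2
            omega
          · intro j hj x r
            have hji : j ≠ i := by rintro rfl; exact hi hj
            simp only
            rw [Function.update_comm hji, Function.update_comm hji, hind j (by simp [hj]), hind j (by simp [hj])]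
        · refine (norm_expect_le' _).trans (expect_le_of (by positivity) fun x => ?_)
          rw [norm_mul, norm_mul, RCLike.norm_conj, Complex.norm_real, Real.norm_eq_abs, Finset.abs_prod]
          have b1 := charT_norm_le χ S S' (∑ j ∈ U, c j * x j + c i * s)
          have b2 := charT_norm_le χ S S' (∑ j ∈ U, c j * x j + c i * t)
          have b3 := Finset.prod_le_one (s := U) (f := fun j => |h j (Function.update x i s) * h j (Function.update x i t)|) (fun _ _ => abs_nonneg _) (fun j hj => hbh j hj x)
          have := mul_le_one₀ (mul_le_one₀ b1 (norm_nonneg _) b2) (Finset.prod_nonneg fun _ _ => abs_nonneg _) b3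
          refine this.trans ?_
          have := sq_nonneg ρ
          linarith
      have hfin : ‖𝔼 x, charT χ S S' (∑ j ∈ insert i U, c j * x j) * ((∏ j ∈ insert i U, h j x : ℝ) : ℂ)‖ ^ 2 ≤ 3 * ρ ^ 2 := by
        refine hstep.trans (expect_le_of (by positivity) fun s => ?_)
        refine (expect_mono (hpt s)).trans ?_
        rw [Finset.expect_add_distrib, Fintype.expect_const]
        have hbad := bad_count (S ∪ S') (c i * s) (c i) hci
        have hcard : (S ∪ S').card ≤ M := by
          refine (Finset.card_union_le _ _).trans (hSN.trans (le_trans ?_ hN))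
          exact Nat.le_mul_of_pos_right _ (by positivity)
        have : (((S ∪ S').card ^ 2 : ℕ) : ℝ) / p ≤ (M ^ 2 : ℕ) / p := by
          gcongr
        linarith
      refine abs_le_of_sq_le_sq' ?_ (by positivity) |>.2
      nlinarith
end chr
end MulAP

namespace MulAP
open scoped BigOperators
open Finset (univ)
set_option linter.unusedSectionVars false

section dm
variable {X : Type} [Fintype X]

def GoodT (Φ : Set (X → ℝ)) (T : X → ℝ) : Prop := ∀ φ ∈ Φ, |𝔼 x, T x * φ x| ≤ 1

def DualS (Φ : Set (X → ℝ)) : Set (X → ℝ) := {ψ | ∀ T, GoodT Φ T → |𝔼 x, T x * ψ x| ≤ 1}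

lemma dual_hb [Nonempty X] (Φ : Set (X → ℝ)) (f : X → ℝ) (ε : ℝ) (hε : 0 < ε)
    (h : ∀ ψ ∈ DualS Φ, ∃ g : X → ℝ, (∀ x, 0 ≤ g x) ∧ (∀ x, g x ≤ 1) ∧ 𝔼 x, (f x - g x) * ψ x ≤ ε) :
    ∃ g : X → ℝ, (∀ x, 0 ≤ g x) ∧ (∀ x, g x ≤ 1) ∧ ∀ φ ∈ Φ, |𝔼 x, (f x - g x) * φ x| ≤ ε := by
  classical
  by_contra hcon
  push Not at hcon
  set K : Set (X → ℝ) := Set.Icc (fun _ => 0) (fun _ => 1) with hK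
  set C : Set (X → ℝ) := {F | ∀ φ ∈ Φ, |𝔼 x, (f x - F x) * φ x| ≤ ε} with hC
  have hcont : ∀ φ : X → ℝ, Continuous fun F : X → ℝ => 𝔼 x, (f x - F x) * φ x := by
    intro φ
    simp only [Fintype.expect_eq_sum_div_card]
    fun_prop
  have hlin : ∀ (φ F G : X → ℝ) (a b : ℝ), a + b = 1 → 𝔼 x, (f x - (a • F + b • G) x) * φ x =
      a * 𝔼 x, (f x - F x) * φ x + b * 𝔼 x, (f x - G x) * φ x := by
    intro φ F G a b hab
    rw [Finset.mul_expect, Finset.mul_expect, ← Finset.expect_add_distrib]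
    refine Finset.expect_congr rfl fun x _ => ?_
    simp only [Pi.add_apply, Pi.smul_apply, smul_eq_mul]
    have : f x = (a + b) * f x := by rw [hab, one_mul]
    rw [this]
    ring_nf
    rw [show b = 1 - a by linarith]
    ring
  have hCc : Convex ℝ C := by
    intro F hF G hG a b ha hb hab φ hφ
    rw [hlin φ F G a b hab]
    have h1 := abs_le.1 (hF φ hφ)
    have h2 := abs_le.1 (hG φ hφ)
    rw [abs_le]
    constructor <;> nlinarith
  have hCcl : IsClosed C := by
    have : C = ⋂ φ ∈ Φ, {F | |𝔼 x, (f x - F x) * φ x| ≤ ε} := by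
      ext F; simp [hC]
    rw [this]
    refine isClosed_biInter fun φ _ => ?_
    exact isClosed_le (hcont φ).abs continuous_const
  have hdisj : Disjoint K C := by
    rw [Set.disjoint_left]
    intro g hg hgC
    obtain ⟨φ, hφ, hh⟩ := hcon g (fun x => hg.1 x) (fun x => hg.2 x)
    exact absurd (hgC φ hφ) (not_le.2 hh)
  obtain ⟨ℓ, u, v, hu, huv, hv⟩ := geometric_hahn_banach_compact_closed (convex_Icc _ _) isCompact_Icc hCc hCcl hdisj
  obtain ⟨w, hw⟩ : ∃ w : X → ℝ, ∀ F, ℓ F = 𝔼 x, F x * w x := by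
    refine ⟨fun x => Fintype.card X * ℓ (Pi.single x 1), fun F => ?_⟩
    rw [Fintype.expect_eq_sum_div_card, eq_div_iff (by positivity)]
    conv_lhs => rw [pi_eq_sum_univ' F, map_sum, Finset.sum_mul]
    refine Finset.sum_congr rfl fun x _ => ?_
    rw [map_smul]
    have : (fun j => if j = x then (1:ℝ) else 0) = Pi.single x 1 := by
      funext j; rw [Pi.single_apply]
    rw [smul_eq_mul]
    ring
  have hfT : ∀ T, GoodT Φ T → v < ℓ f - ε * 𝔼 x, T x * w x := by
    intro T hT
    have hm : (fun x => f x - ε * T x) ∈ C := by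
      intro φ hφ
      have : 𝔼 x, (f x - (f x - ε * T x)) * φ x = ε * 𝔼 x, T x * φ x := by
        rw [Finset.mul_expect]
        refine Finset.expect_congr rfl fun x _ => ?_
        ring
      rw [this, abs_mul, abs_of_pos hε]
      exact mul_le_of_le_one_right hε.le (hT φ hφ)
    have := hv _ hm
    rw [hw] at this
    rw [hw, Finset.mul_expect, ← Finset.expect_sub_distrib]
    convert this using 1
    refine Finset.expect_congr rfl fun x _ => ?_
    ring
  set a := (ℓ f - v) / ε with ha
  have ha0 : 0 < a := by
    have := hfT (fun _ => 0) (by intro φ _; simp)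
    simp only [zero_mul, Finset.expect_const_zero, mul_zero, sub_zero] at this
    exact div_pos (by linarith) hε
  have hψ : (fun x => w x / a) ∈ DualS Φ := by
    intro T hT
    have h1 := hfT T hT
    have h2 := hfT (fun x => - T x) (by
      intro φ hφ
      have := hT φ hφ
      simpa [Finset.expect_neg_distrib] using this)
    have e : 𝔼 x, T x * (w x / a) = (𝔼 x, T x * w x) / a := by
      rw [Finset.expect_div]
      refine Finset.expect_congr rfl fun x _ => ?_
      ring
    rw [e, abs_div, abs_of_pos ha0, div_le_one ha0, ha, le_div_iff₀ hε]
    simp only [neg_mul, Finset.expect_neg_distrib] at h2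
    rcases abs_cases (𝔼 x, T x * w x) with ⟨hh, _⟩ | ⟨hh, _⟩ <;> rw [hh] <;> nlinarith
  obtain ⟨g, g0, g1, hg⟩ := h _ hψ
  have hgu := hu g ⟨g0, g1⟩
  have e : 𝔼 x, (f x - g x) * (w x / a) = (ℓ f - ℓ g) / a := by
    rw [hw, hw, ← Finset.expect_sub_distrib, Finset.expect_div]
    refine Finset.expect_congr rfl fun x _ => ?_
    ring
  rw [e, div_le_iff₀ ha0, ha, mul_div_cancel₀ _ hε.ne'] at hg
  linarith

lemma dual_bound [Nonempty X] {Φ : Set (X → ℝ)} (hb : ∀ φ ∈ Φ, ∀ x, |φ x| ≤ 1) {ψ : X → ℝ} (hψ : ψ ∈ DualS Φ) (x : X) : |ψ x| ≤ 1 := by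
  classical
  have key : ∀ φ : X → ℝ, 𝔼 y, (if y = x then (Fintype.card X : ℝ) else 0) * φ y = φ x := by
    intro φ
    rw [Fintype.expect_eq_sum_div_card]
    simp
  have := hψ (fun y => if y = x then (Fintype.card X : ℝ) else 0) (by
    intro φ hφ
    rw [key]
    exact hb φ hφ x)
  rwa [key] at this

lemma dual_mul {Φ : Set (X → ℝ)} (hm : ∀ T, GoodT Φ T → ∀ φ ∈ Φ, GoodT Φ (fun x => T x * φ x))
    {ψ ψ' : X → ℝ} (h : ψ ∈ DualS Φ) (h' : ψ' ∈ DualS Φ) : (fun x => ψ x * ψ' x) ∈ DualS Φ := by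
  intro T hT
  have : GoodT Φ (fun x => T x * ψ' x) := by
    intro φ hφ
    have := h' _ (hm T hT φ hφ)
    convert this using 3
    ring
  have := h _ this
  convert this using 3
  ring

lemma dual_pow {Φ : Set (X → ℝ)} (h1 : (fun _ => 1) ∈ Φ) (hm : ∀ T, GoodT Φ T → ∀ φ ∈ Φ, GoodT Φ (fun x => T x * φ x))
    {ψ : X → ℝ} (h : ψ ∈ DualS Φ) (n : ℕ) : (fun x => ψ x ^ n) ∈ DualS Φ := by
  induction n with
  | zero =>
    intro T hT
    simpa using hT _ h1
  | succ n ih =>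
    simp only [pow_succ]
    exact dual_mul hm ih h

lemma dual_scale {Φ : Set (X → ℝ)} {ψ : X → ℝ} (h : ψ ∈ DualS Φ) {T : X → ℝ} {ε : ℝ} (hε : 0 < ε)
    (hT : ∀ φ ∈ Φ, |𝔼 x, T x * φ x| ≤ ε) : |𝔼 x, T x * ψ x| ≤ ε := by
  have e : ∀ φ : X → ℝ, 𝔼 x, (T x / ε) * φ x = (𝔼 x, T x * φ x) / ε := by
    intro φ
    rw [Finset.expect_div]
    refine Finset.expect_congr rfl fun x _ => ?_
    ring
  have := h (fun x => T x / ε) (fun φ hφ => by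
    rw [e, abs_div, abs_of_pos hε, div_le_one hε]; exact hT φ hφ)
  rwa [e, abs_div, abs_of_pos hε, div_le_one hε] at this

theorem dense_model (ε : ℝ) (hε : 0 < ε) : ∃ ε' > 0, ∀ (X : Type) [Fintype X] [Nonempty X] (Φ : Set (X → ℝ)),
    (fun _ => 1) ∈ Φ → (∀ φ ∈ Φ, ∀ x, |φ x| ≤ 1) →
    (∀ T, GoodT Φ T → ∀ φ ∈ Φ, GoodT Φ (fun x => T x * φ x)) →
    ∀ f ν : X → ℝ, (∀ x, 0 ≤ f x) → (∀ x, f x ≤ ν x) → (∀ φ ∈ Φ, |𝔼 x, (ν x - 1) * φ x| ≤ ε') →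
    ∃ g : X → ℝ, (∀ x, 0 ≤ g x) ∧ (∀ x, g x ≤ 1) ∧ ∀ φ ∈ Φ, |𝔼 x, (f x - g x) * φ x| ≤ ε := by
  obtain ⟨P, hP⟩ := exists_polynomial_near_of_continuousOn (-1) 1 (fun x : ℝ => max x 0)
    (by fun_prop) (ε / 6) (by positivity)
  set Cs : ℝ := ∑ n ∈ P.support, |P.coeff n| with hCs
  have hCs0 : 0 ≤ Cs := Finset.sum_nonneg fun _ _ => abs_nonneg _
  refine ⟨min 1 (ε / (2 * (Cs + 1))), by positivity, ?_⟩
  intro X _ _ Φ h1 hb hm f ν hf hfν hν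
  set ε' := min 1 (ε / (2 * (Cs + 1))) with hε'
  have hε'0 : 0 < ε' := by positivity
  have hε'1 : ε' ≤ 1 := min_le_left _ _
  have hε'C : Cs * ε' ≤ ε / 2 := by
    have : ε' * (2 * (Cs + 1)) ≤ ε := by
      rw [← le_div_iff₀ (by positivity)]; exact min_le_right _ _
    nlinarith
  apply dual_hb Φ f ε hε
  intro ψ hψ
  have hψ1 := dual_bound hb hψ
  refine ⟨fun x => if 0 < ψ x then 1 else 0, fun x => by dsimp only; split_ifs <;> simp, fun x => by dsimp only; split_ifs <;> simp, ?_⟩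
  have hν0 : ∀ x, 0 ≤ ν x := fun x => (hf x).trans (hfν x)
  have hEν : 𝔼 x, ν x ≤ 2 := by
    have := hν _ h1
    simp only [mul_one] at this
    rw [Finset.expect_sub_distrib, Fintype.expect_const] at this
    have := (abs_le.1 this).2
    linarith
  have hpt : ∀ x, (f x - if 0 < ψ x then 1 else 0) * ψ x ≤ (ν x - 1) * P.eval (ψ x) + ε / 6 * (ν x + 1) := by
    intro x
    have hx := abs_le.1 (hψ1 x)
    have hPx := abs_lt.1 (hP (ψ x) ⟨hx.1, hx.2⟩)
    have h3 : (f x - if 0 < ψ x then 1 else 0) * ψ x ≤ (ν x - 1) * max (ψ x) 0 := by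
      split_ifs with hp
      · rw [max_eq_left hp.le]
        exact mul_le_mul_of_nonneg_right (by linarith [hfν x]) hp.le
      · rw [max_eq_right (not_lt.1 hp)]
        have := mul_nonneg (hf x) (neg_nonneg.2 (not_lt.1 hp))
        linarith
    have h4 : (ν x - 1) * (max (ψ x) 0 - P.eval (ψ x)) ≤ ε / 6 * (ν x + 1) := by
      set d := max (ψ x) 0 - P.eval (ψ x) with hd
      have d1 : d ≤ ε / 6 := by linarith
      have d2 : -(ε / 6) ≤ d := by linarith
      nlinarith [hν0 x]
    linarith
  have hpoly : |𝔼 x, (ν x - 1) * P.eval (ψ x)| ≤ ε / 2 := by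
    have e : 𝔼 x, (ν x - 1) * P.eval (ψ x) = ∑ n ∈ P.support, P.coeff n * 𝔼 x, (ν x - 1) * ψ x ^ n := by
      simp_rw [Finset.mul_expect]
      rw [← Finset.expect_sum_comm]
      refine Finset.expect_congr rfl fun x _ => ?_
      rw [Polynomial.eval_eq_sum, Polynomial.sum, Finset.mul_sum]
      refine Finset.sum_congr rfl fun n _ => ?_
      ring
    rw [e]
    refine (Finset.abs_sum_le_sum_abs _ _).trans ?_
    refine le_trans ?_ hε'C
    rw [hCs, Finset.sum_mul]
    refine Finset.sum_le_sum fun n _ => ?_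
    rw [abs_mul]
    exact mul_le_mul_of_nonneg_left (dual_scale (dual_pow h1 hm hψ n) hε'0 hν) (abs_nonneg _)
  refine (expect_mono hpt).trans ?_
  rw [Finset.expect_add_distrib, ← Finset.mul_expect, Finset.expect_add_distrib, Fintype.expect_const]
  have := (abs_le.1 hpoly).2
  nlinarith
end dm
end MulAP

namespace MulAP
open scoped BigOperators
open Finset (univ)
set_option linter.unusedSectionVars false

section rel
variable {J : Type} [Fintype J] [DecidableEq J] {p : ℕ} [Fact p.Prime]

def StdR (J : Type) [Fintype J] [DecidableEq J] {p : ℕ} [Fact p.Prime] (F : ZMod p → ℝ) (η : ℝ) : Prop :=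
  ∀ h : J → (J → ZMod p) → ℝ, (∀ j, Indep j (h j)) → (∀ j x, |h j x| ≤ 1) →
    |𝔼 y : J → ZMod p, F (∑ j, y j) * ∏ j, h j y| ≤ η

noncomputable def ee (j0 : J) : (ZMod p) × (J → ZMod p) →+ (J → ZMod p) where
  toFun w := w.2 + Pi.single j0 (w.1 - ∑ j, w.2 j)
  map_zero' := by simp
  map_add' a b := by
    simp only [Prod.fst_add, Prod.snd_add, Pi.add_apply, Finset.sum_add_distrib]
    rw [show a.1 + b.1 - (∑ j, a.2 j + ∑ j, b.2 j) = (a.1 - ∑ j, a.2 j) + (b.1 - ∑ j, b.2 j) by ring, Pi.single_add]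
    abel

lemma ee_sum (j0 : J) (w : (ZMod p) × (J → ZMod p)) : ∑ j, ee j0 w j = w.1 := by
  simp [ee, Finset.sum_add_distrib]

lemma ee_surj (j0 : J) : Function.Surjective (ee (p := p) j0) := by
  intro z
  refine ⟨(∑ j, z j, z), ?_⟩
  simp [ee]

noncomputable def dualF (j0 : J) (h : J → (J → ZMod p) → ℝ) (s : ZMod p) : ℝ := 𝔼 y : J → ZMod p, ∏ j, h j (ee j0 (s, y))

lemma dualF_spec (j0 : J) (h : J → (J → ZMod p) → ℝ) (T : ZMod p → ℝ) :
    𝔼 s, T s * dualF j0 h s = 𝔼 y : J → ZMod p, T (∑ j, y j) * ∏ j, h j y := by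
  have hh := expect_hom (ee (p := p) j0) (ee_surj j0) (fun y : J → ZMod p => T (∑ j, y j) * ∏ j, h j y)
  rw [← hh, expect_prod_type]
  refine Finset.expect_congr rfl fun s _ => ?_
  unfold dualF
  rw [Finset.mul_expect]
  refine Finset.expect_congr rfl fun y _ => ?_
  rw [ee_sum]

def PhiS (j0 : J) : Set (ZMod p → ℝ) :=
  {φ | ∃ h : J → (J → ZMod p) → ℝ, (∀ j, Indep j (h j)) ∧ (∀ j x, |h j x| ≤ 1) ∧ φ = dualF j0 h}

lemma std_iff (j0 : J) (F : ZMod p → ℝ) (η : ℝ) : StdR J F η ↔ ∀ φ ∈ PhiS j0, |𝔼 s, F s * φ s| ≤ η := by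
  constructor
  · rintro h φ ⟨u, h1, h2, rfl⟩
    rw [dualF_spec]
    exact h u h1 h2
  · intro h u h1 h2
    rw [← dualF_spec j0]
    exact h _ ⟨u, h1, h2, rfl⟩

lemma dualF_mul (j0 : J) (h h' : J → (J → ZMod p) → ℝ) (s : ZMod p) :
    dualF j0 h s * dualF j0 h' s = 𝔼 z : J → ZMod p, dualF j0 (fun j w => h j w * h' j (w + ee j0 (0, z))) s := by
  unfold dualF
  rw [expect_comm2, Finset.expect_mul]
  refine Finset.expect_congr rfl fun y _ => ?_
  rw [Finset.mul_expect]
  symm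
  apply Fintype.expect_equiv (Equiv.addLeft y)
  intro z
  rw [Finset.prod_mul_distrib]
  congr 2
  funext j
  rw [← map_add]
  simp

theorem rel_dense_model (j0 : J) (ε : ℝ) (hε : 0 < ε) : ∃ ε' > 0, ∀ (p : ℕ) [Fact p.Prime] (f ν : ZMod p → ℝ),
    (∀ x, 0 ≤ f x) → (∀ x, f x ≤ ν x) → StdR J (fun x => ν x - 1) ε' →
    ∃ g : ZMod p → ℝ, (∀ x, 0 ≤ g x) ∧ (∀ x, g x ≤ 1) ∧ StdR J (fun x => f x - g x) ε := by
  obtain ⟨ε', hε', H⟩ := dense_model ε hε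
  refine ⟨ε', hε', ?_⟩
  intro p _ f ν hf hfν hν
  simp only [std_iff j0] at hν ⊢
  refine H (ZMod p) (PhiS j0) ⟨fun _ _ => 1, fun _ _ _ => rfl, by simp, ?_⟩ ?_ ?_ f ν hf hfν hν
  · funext s
    simp [dualF]
  · rintro φ ⟨h, h1, h2, rfl⟩ s
    refine abs_expect_le zero_le_one fun y => ?_
    rw [Finset.abs_prod]
    exact Finset.prod_le_one (fun _ _ => abs_nonneg _) (fun j _ => h2 j _)
  · rintro T hT φ ⟨h, h1, h2, rfl⟩ φ' ⟨h', h1', h2', rfl⟩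
    have e : 𝔼 s, T s * dualF j0 h s * dualF j0 h' s =
        𝔼 z : J → ZMod p, 𝔼 s, T s * dualF j0 (fun j w => h j w * h' j (w + ee j0 (0, z))) s := by
      rw [expect_comm2]
      refine Finset.expect_congr rfl fun s _ => ?_
      rw [mul_assoc, dualF_mul, Finset.mul_expect]
    rw [e]
    refine abs_expect_le zero_le_one fun z => ?_
    refine hT _ ⟨_, ?_, ?_, rfl⟩
    · intro j x t
      simp only
      rw [h1 j x t]
      have : Function.update x j t + ee j0 (0, z) = Function.update (x + ee j0 (0, z)) j (t + ee j0 (0, z) j) := by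
        funext l
        by_cases hl : l = j
        · subst hl; simp
        · simp [hl]
      rw [this, h1']
    · intro j x
      rw [abs_mul]
      exact mul_le_one₀ (h2 j _) (abs_nonneg _) (h2' j _)
end rel

section bridge
variable {p : ℕ} [Fact p.Prime] {k : ℕ}

lemma std_to_cut {F : ZMod p → ℝ} {η : ℝ} (hF : StdR (Fin k) F η) (hη : 0 ≤ η) (i : Fin (k+1)) (c : Fin (k+1) → ZMod p)
    (hc : ∀ j, j ≠ i → c j ≠ 0) : CutLe i (fun x : Fin (k+1) → ZMod p => F (∑ j ∈ univ.erase i, c j * x j)) η := by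
  intro h h1 h2
  have herase : univ.erase i = univ.map i.succAboveEmb := by
    ext j
    simp only [Finset.mem_erase, Finset.mem_univ, and_true, Finset.mem_map, true_and]
    constructor
    · intro hj
      obtain ⟨l, hl⟩ := Fin.exists_succAbove_eq hj
      exact ⟨l, hl⟩
    · rintro ⟨l, rfl⟩
      exact Fin.succAbove_ne i l
  have e : 𝔼 x : Fin (k+1) → ZMod p, F (∑ j ∈ univ.erase i, c j * x j) * ∏ j ∈ univ.erase i, h j x =
      𝔼 t : ZMod p, 𝔼 y : Fin k → ZMod p, F (∑ j, y j) *
        ∏ j, h (i.succAbove j) (i.insertNth t (fun l => (c (i.succAbove l))⁻¹ * y l)) := by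
    rw [← expect_prod_type (fun w : ZMod p × (Fin k → ZMod p) => F (∑ j, w.2 j) *
        ∏ j, h (i.succAbove j) (i.insertNth w.1 (fun l => (c (i.succAbove l))⁻¹ * w.2 l)))]
    symm
    have hbij : ∀ l, c (i.succAbove l) ≠ 0 := fun l => hc _ (Fin.succAbove_ne i l)
    let E : (Fin k → ZMod p) ≃ (Fin k → ZMod p) := Equiv.piCongrRight fun l => Equiv.mulLeft₀ (c (i.succAbove l))⁻¹ (inv_ne_zero (hbij l))
    apply Fintype.expect_equiv ((Equiv.prodCongr (Equiv.refl _) E).trans (Fin.insertNthEquiv (fun _ => ZMod p) i))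
    rintro ⟨t, y⟩
    rw [herase, Finset.sum_map, Finset.prod_map]
    have hx : ((Equiv.prodCongr (Equiv.refl _) E).trans (Fin.insertNthEquiv (fun _ => ZMod p) i)) (t, y) =
      i.insertNth t (fun l => (c (i.succAbove l))⁻¹ * y l) := rfl
    rw [hx]
    congr 2
    · refine Finset.sum_congr rfl fun j _ => ?_
      simp only [Fin.succAboveEmb_apply, Fin.insertNth_apply_succAbove]
      rw [mul_inv_cancel_left₀ (hbij j)]
  rw [e]
  refine abs_expect_le hη fun t => ?_
  refine hF (fun j y => h (i.succAbove j) (i.insertNth t (fun l => (c (i.succAbove l))⁻¹ * y l))) ?_ ?_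
  · intro j y s
    simp only
    rw [← h1 (i.succAbove j) (Fin.succAbove_ne i j) (i.insertNth t (fun l => (c (i.succAbove l))⁻¹ * y l)) ((c (i.succAbove j))⁻¹ * s)]
    congr 1
    funext l
    rcases Fin.eq_self_or_eq_succAbove i l with rfl | ⟨l, rfl⟩
    · rw [Function.update_of_ne (Fin.succAbove_ne _ _).symm]
      simp
    · by_cases hl : l = j
      · subst hl; simp
      · rw [Function.update_of_ne (fun hh => hl (Fin.succAbove_right_injective hh))]
        simp [hl]
  · intro j y
    exact h2 _ (Fin.succAbove_ne i j) _
end bridge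
end MulAP

namespace MulAP
open scoped BigOperators
open Finset (univ)
set_option linter.unusedSectionVars false

section relap
variable {p : ℕ} [Fact p.Prime] {k : ℕ}

def cf (p : ℕ) {k : ℕ} (i j : Fin (k+1)) : ZMod p := ((j : ℕ) : ZMod p) - ((i : ℕ) : ZMod p)

lemma cf_ne (hp : k < p) {i j : Fin (k+1)} (h : j ≠ i) : cf p i j ≠ 0 := by
  intro h0
  apply h
  rw [cf, sub_eq_zero, ZMod.natCast_eq_natCast_iff] at h0
  apply Fin.ext
  exact Nat.ModEq.eq_of_lt_of_lt h0 (by omega) (by omega)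

def LL (i : Fin (k+1)) (x : Fin (k+1) → ZMod p) : ZMod p := ∑ j ∈ univ.erase i, cf p i j * x j

lemma LL_indep (F : ZMod p → ℝ) (i : Fin (k+1)) : Indep i (fun x => F (LL i x)) := by
  intro x t
  simp only [LL]
  rw [lin_update (by simp)]

noncomputable def apHom (p : ℕ) (k : ℕ) : (Fin (k+1) → ZMod p) →+ ZMod p × ZMod p where
  toFun x := (∑ j : Fin (k+1), ((j : ℕ) : ZMod p) * x j, - ∑ j, x j)
  map_zero' := by simp
  map_add' a b := by
    simp only [Pi.add_apply, mul_add, Finset.sum_add_distrib, neg_add, Prod.mk_add_mk]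

lemma LL_eq (i : Fin (k+1)) (x : Fin (k+1) → ZMod p) : LL i x = (apHom p k x).1 + ((i : ℕ) : ZMod p) * (apHom p k x).2 := by
  have : LL i x = ∑ j, cf p i j * x j := by
    rw [LL, Finset.sum_erase]
    simp [cf]
  rw [this]
  simp only [apHom, cf, AddMonoidHom.coe_mk, ZeroHom.coe_mk, sub_mul, Finset.sum_sub_distrib, ← Finset.mul_sum]
  ring

lemma apHom_surj (hk : 0 < k) : Function.Surjective (apHom p k) := by
  rintro ⟨a, d⟩
  obtain ⟨k, rfl⟩ : ∃ m, k = m + 1 := ⟨k - 1, by omega⟩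
  refine ⟨fun j => if j = 0 then -d - a else if j = 1 then a else 0, ?_⟩
  simp only [apHom, AddMonoidHom.coe_mk, ZeroHom.coe_mk, Prod.mk.injEq]
  constructor
  · rw [Fin.sum_univ_succ, Fin.sum_univ_succ]
    have h : ∀ i : Fin k, (i.succ.succ = 1) = False := fun i => by
      rw [eq_iff_iff, iff_false]; intro h; simpa using congrArg Fin.val h
    simp [h]
  · rw [Fin.sum_univ_succ, Fin.sum_univ_succ]
    have h : ∀ i : Fin k, (i.succ.succ = 1) = False := fun i => by
      rw [eq_iff_iff, iff_false]; intro h; simpa using congrArg Fin.val h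
    simp [h]

lemma ap_count (hk : 0 < k) (F : ZMod p → ℝ) :
    𝔼 x : Fin (k+1) → ZMod p, ∏ i, F (LL i x) = 𝔼 a, 𝔼 d, ∏ j ∈ Finset.range (k+1), F (a + (j : ZMod p) * d) := by
  have hh := expect_hom (apHom p k) (apHom_surj hk) (fun w : ZMod p × ZMod p => ∏ j ∈ Finset.range (k+1), F (w.1 + (j : ZMod p) * w.2))
  rw [← expect_prod_type (fun w : ZMod p × ZMod p => ∏ j ∈ Finset.range (k+1), F (w.1 + (j : ZMod p) * w.2)), ← hh]
  refine Finset.expect_congr rfl fun x _ => ?_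
  rw [Finset.prod_range]
  refine Finset.prod_congr rfl fun i _ => ?_
  rw [LL_eq]

lemma sum_surj (hk : 0 < k) (F : ZMod p → ℝ) : 𝔼 y : Fin k → ZMod p, F (∑ j, y j) = 𝔼 s, F s := by
  let Φ : (Fin k → ZMod p) →+ ZMod p :=
    { toFun := fun y => ∑ j, y j
      map_zero' := by simp
      map_add' := fun a b => by simp [Finset.sum_add_distrib] }
  refine expect_hom Φ ?_ F
  intro s
  refine ⟨Pi.single ⟨0, hk⟩ s, ?_⟩
  show ∑ j, (Pi.single ⟨0, hk⟩ s : Fin k → ZMod p) j = s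
  simp

lemma StdR.mono {F : ZMod p → ℝ} {a b : ℝ} (h : StdR (Fin k) F a) (hab : a ≤ b) : StdR (Fin k) F b :=
  fun u h1 h2 => (h u h1 h2).trans hab
end relap

theorem rel_AP (k : ℕ) (hk : 0 < k) (δ : ℝ) (hδ : 0 < δ) : ∃ c > 0, ∃ η > 0, ∀ (p : ℕ) [Fact p.Prime] (f ν : ZMod p → ℝ) (B ε₀ : ℝ),
    k < p → 1 ≤ B → 0 ≤ ε₀ → (∀ x, 0 ≤ f x) → (∀ x, f x ≤ ν x) → (∀ x, ν x ≤ B) →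
    StdR (Fin k) (fun x => ν x - 1) ε₀ → B ^ (2 * (k + 1)) * ε₀ ≤ η → δ ≤ 𝔼 x, f x →
    c ≤ 𝔼 a, 𝔼 d, ∏ j ∈ Finset.range (k+1), f (a + (j : ZMod p) * d) := by
  obtain ⟨c, hc, hvar⟩ := varnavides (k+1) (by omega) (δ/2) (by positivity)
  obtain ⟨η1, hη1, hcount⟩ := counting (I := Fin (k+1)) univ (c/2) (by positivity)
  obtain ⟨ε', hε', hdm⟩ := rel_dense_model (J := Fin k) ⟨0, hk⟩ (min η1 (δ/2)) (by positivity)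
  refine ⟨c/2, by positivity, min η1 ε', by positivity, ?_⟩
  intro p _ f ν B ε₀ hp hB h0 hf hfν hνB hν hBe hEf
  have h00 : ε₀ ≤ B ^ (2 * (k + 1)) * ε₀ := le_mul_of_one_le_left h0 (one_le_pow₀ hB)
  obtain ⟨g, hg0, hg1, hfg⟩ := hdm p f ν hf hfν (hν.mono (h00.trans (hBe.trans (min_le_right _ _))))
  have hEg : δ / 2 ≤ 𝔼 x, g x := by
    have := hfg (fun _ _ => 1) (fun _ _ _ => rfl) (by simp)
    simp only [Finset.prod_const_one, mul_one] at this
    rw [sum_surj hk (fun x => f x - g x), Finset.expect_sub_distrib] at this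
    have h1 := (abs_le.1 this).2
    have := min_le_right η1 (δ/2)
    linarith
  have hv := hvar p g hg0 hg1 hEg
  have hC := hcount (ZMod p) (fun i x => f (LL i x)) (fun i x => g (LL i x)) (fun i x => ν (LL i x)) B ε₀ hB h0
    (by rw [Fintype.card_fin]; exact hBe.trans (min_le_left _ _))
    (LL_indep f) (LL_indep g) (LL_indep ν) (fun _ _ => hf _) (fun _ _ => hfν _) (fun _ _ => hg0 _) (fun _ _ => hg1 _)
    (fun _ _ => hνB _)
    (fun i => std_to_cut (hfg.mono (min_le_left _ _)) hη1.le i (cf p i) (fun j hj => cf_ne hp hj))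
    (fun i => std_to_cut hν h0 i (cf p i) (fun j hj => cf_ne hp hj))
    (fun j hj => absurd (Finset.mem_univ j) hj)
  rw [ap_count hk, ap_count hk] at hC
  have := (abs_le.1 hC).1
  linarith
end MulAP

namespace MulAP
open scoped BigOperators
open Finset (univ)
set_option linter.unusedSectionVars false

section nt
variable {p : ℕ} [Fact p.Prime]

lemma chi_one_on (G : Subgroup (ZMod p)ˣ) (χ : MulChar (ZMod p) ℂ) (m : ℕ) (hm : Nat.card G * m = p - 1)
    (hχ : χ ^ m = 1) (x : (ZMod p)ˣ) (hx : x ∈ G) : χ (x : ZMod p) = 1 := by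
  obtain ⟨g, hg⟩ := IsCyclic.exists_monoid_generator (α := (ZMod p)ˣ)
  obtain ⟨e, rfl⟩ := Submonoid.mem_powers_iff x g |>.1 (hg x)
  have ho : orderOf g = p - 1 := by
    rw [orderOf_eq_card_of_forall_mem_powers hg, Nat.card_eq_fintype_card, ZMod.card_units]
  have h1 : (g ^ e) ^ Nat.card G = 1 := by
    have := Subgroup.orderOf_dvd_natCard G hx
    exact orderOf_dvd_iff_pow_eq_one.1 this
  rw [← pow_mul] at h1
  have h2 := orderOf_dvd_of_pow_eq_one h1
  rw [ho, ← hm, mul_comm e] at h2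
  have hG : 0 < Nat.card G := Nat.card_pos
  obtain ⟨l, rfl⟩ := Nat.dvd_of_mul_dvd_mul_left hG h2
  have : (χ ^ m) (g : ZMod p) = 1 := by rw [hχ, MulChar.one_apply_coe]
  rw [MulChar.pow_apply_coe] at this
  rw [Units.val_pow_eq_pow_val, map_pow, pow_mul, this, one_pow]

open Classical in
noncomputable def nuF (χ : MulChar (ZMod p) ℂ) (m : ℕ) (x : ZMod p) : ℝ :=
  if x = 0 then 1 else if χ x = 1 then m else 0

lemma nuF_sub_one (χ : MulChar (ZMod p) ℂ) (m : ℕ) (hm : 0 < m) (hχ : χ ^ m = 1) (x : ZMod p) :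
    ((nuF χ m x - 1 : ℝ) : ℂ) = ∑ j ∈ Finset.Ico 1 m, (χ ^ j) x := by
  unfold nuF
  split_ifs with h h1
  · subst h
    rw [Finset.sum_eq_zero]
    · simp
    · intro j _
      exact MulChar.map_nonunit _ (by simp)
  · obtain ⟨u, rfl⟩ : IsUnit x := isUnit_iff_ne_zero.2 h
    have : ∀ j, (χ ^ j) (u : ZMod p) = 1 := fun j => by rw [MulChar.pow_apply_coe, h1, one_pow]
    simp [this, Nat.cast_sub hm]
  · obtain ⟨u, rfl⟩ : IsUnit x := isUnit_iff_ne_zero.2 h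
    simp_rw [MulChar.pow_apply_coe]
    have hz : χ (u : ZMod p) ^ m = 1 := by rw [← MulChar.pow_apply_coe, hχ, MulChar.one_apply_coe]
    have hg := mul_neg_geom_sum (χ (u : ZMod p)) m
    rw [hz, sub_self, mul_eq_zero] at hg
    rcases hg with hg | hg
    · exact absurd (sub_eq_zero.1 hg).symm h1
    · rw [Finset.range_eq_Ico, Finset.sum_eq_sum_Ico_succ_bot hm] at hg
      simp only [pow_zero, zero_add] at hg
      push_cast
      linear_combination - hg

lemma charT_single (χ : MulChar (ZMod p) ℂ) (x : ZMod p) : charT χ {0} ∅ x = χ x := by simp [charT]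

lemma std_nu (k : ℕ) (χ : MulChar (ZMod p) ℂ) (m : ℕ) (hm : 0 < m) (hχ : χ ^ m = 1) (σ ρ : ℝ)
    (hσ : ∀ j ∈ Finset.Ico 1 m, CharHyp (χ ^ j) (2 ^ k) σ) (hM : ((2 ^ k) ^ 2 : ℕ) / (p:ℝ) ≤ σ)
    (h0 : 0 ≤ ρ) (h1 : ρ ≤ 1) (hρ : σ ≤ ρ ^ 2 ^ k) :
    StdR (Fin (k+1)) (fun x => nuF χ m x - 1) (m * (2 * ρ)) := by
  intro h hi hb
  rw [← Real.norm_eq_abs, ← Complex.norm_real, Complex.ofReal_expect]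
  have e : 𝔼 y : Fin (k+1) → ZMod p, (((nuF χ m (∑ j, y j) - 1) * ∏ j, h j y : ℝ) : ℂ) =
      ∑ l ∈ Finset.Ico 1 m, 𝔼 y : Fin (k+1) → ZMod p, charT (χ ^ l) {0} ∅ (∑ j, 1 * y j) * ((∏ j, h j y : ℝ) : ℂ) := by
    rw [← Finset.expect_sum_comm]
    refine Finset.expect_congr rfl fun y _ => ?_
    rw [Complex.ofReal_mul, nuF_sub_one χ m hm hχ, Finset.sum_mul]
    refine Finset.sum_congr rfl fun l _ => ?_
    rw [charT_single]
    simp only [one_mul]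
  rw [e]
  refine (norm_sum_le _ _).trans ?_
  refine (Finset.sum_le_card_nsmul _ _ (2 * ρ) ?_).trans ?_
  · intro l hl
    exact std_bound (χ ^ l) (2 ^ k) σ (hσ l hl) hM (fun _ => 1) univ k (by simp) (fun _ _ => one_ne_zero) 1 (by simp) ρ h0 h1 hρ
      {0} ∅ (by simp) (by simp) (by simp) h (fun j _ => hi j) (fun j _ => hb j)
  · rw [nsmul_eq_mul]
    gcongr
    simp

lemma ev_small (C e η : ℝ) (he : 0 < e) (hη : 0 < η) : ∀ᶠ P : ℝ in Filter.atTop, C * P ^ (-e) ≤ η := by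
  have := (tendsto_rpow_neg_atTop he).const_mul C
  rw [mul_zero] at this
  exact this.eventually_le_const hη

lemma charHyp_of (χ : MulChar (ZMod p) ℂ) (M : ℕ) (hd : 2 ≤ orderOf χ) (hdm : (orderOf χ : ℝ) ≤ (p:ℝ) ^ (1/16 : ℝ))
    (hP : (2:ℝ) ≤ p) (h1 : 1 * (p:ℝ) ^ (-(1/16 : ℝ)) ≤ 1/2) (h2 : (2 * (M + 3) : ℝ) * (p:ℝ) ^ (-(13/32 : ℝ)) ≤ 1)
    (h3 : (4 * M + 4 : ℝ) * (p:ℝ) ^ (-(1/32 : ℝ)) ≤ 1/2) (h4 : (M : ℝ) * (p:ℝ) ^ (-(5/8 : ℝ)) ≤ 1/2) :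
    CharHyp χ M ((p:ℝ) ^ (-(3/8 : ℝ))) := by
  intro S S' hdisj hne hc
  have hP0 : (0:ℝ) < p := by linarith
  set d := orderOf χ with hdd
  have hdvd : d ∣ p - 1 := by
    have := MulChar.orderOf_dvd_card_sub_one (ZMod p) χ
    rwa [ZMod.card] at this
  obtain ⟨n, hn⟩ := hdvd
  have hp2 : 2 ≤ p := by exact_mod_cast hP
  have hnd : n * d + 1 = p := by rw [mul_comm]; omega
  have hn0 : 0 < n := by
    rcases Nat.eq_zero_or_pos n with h | h
    · subst h; omega
    · exact h
  set Q := (p:ℝ) ^ (13/32 : ℝ) with hQ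
  have hQ0 : 0 < Q := by positivity
  set q := ⌊Q⌋₊ with hq
  have hqQ : (q:ℝ) ≤ Q := Nat.floor_le hQ0.le
  have hQq : Q < q + 1 := Nat.lt_floor_add_one Q
  have hQM : 2 * (M + 3 : ℝ) ≤ Q := by
    have : (p:ℝ) ^ (-(13/32 : ℝ)) = Q⁻¹ := Real.rpow_neg hP0.le _
    rw [this, ← div_eq_mul_inv, div_le_one hQ0] at h2
    exact h2
  have hqlow : Q / 2 ≤ (q:ℝ) - M - 2 := by linarith
  have hqN : M + 2 < q := by
    have : (M:ℝ) + 2 < q := by linarith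
    exact_mod_cast this
  have hqd : q * q * d ≤ n := by
    have hr : (q * q * d : ℝ) * d ≤ (p:ℝ) - 1 := by
      calc (q * q * d : ℝ) * d ≤ Q * Q * (p:ℝ) ^ (1/16 : ℝ) * (p:ℝ) ^ (1/16 : ℝ) := by gcongr
        _ = (p:ℝ) * (p:ℝ) ^ (-(1/16 : ℝ)) := by
          rw [hQ, ← Real.rpow_add hP0, ← Real.rpow_add hP0, ← Real.rpow_add hP0]
          nth_rewrite 2 [← Real.rpow_one (p:ℝ)]
          rw [← Real.rpow_add hP0]
          norm_num
        _ ≤ (p:ℝ) * (1/2) := by gcongr; linarith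
        _ ≤ _ := by linarith
    have hr2 : ((q * q * d * d : ℕ) : ℝ) ≤ ((n * d : ℕ) : ℝ) := by
      have : ((n * d : ℕ) : ℝ) = (p:ℝ) - 1 := by
        rw [← hnd]; push_cast; ring
      rw [this]; push_cast; exact hr
    have hr3 : q * q * d * d ≤ n * d := by exact_mod_cast hr2
    exact Nat.le_of_mul_le_mul_right hr3 (by omega)
  have := stepanov_char χ d n q M hnd hdd.symm hd hn0 hqd hqN S S' hdisj hne hc
  rw [Fintype.expect_eq_sum_div_card, norm_div, ZMod.card, Complex.norm_natCast, div_le_iff₀ hP0]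
  refine this.trans ?_
  have a1 : (p:ℝ) * (2 * M + 2) / ((q : ℝ) - M - 2) ≤ (p:ℝ) * (2 * M + 2) / (Q / 2) := by
    gcongr
  have a2 : (p:ℝ) * (2 * M + 2) / (Q / 2) = p * ((p:ℝ) ^ (-(3/8 : ℝ)) * ((4 * M + 4 : ℝ) * (p:ℝ) ^ (-(1/32 : ℝ)))) := by
    have : (p:ℝ) ^ (-(3/8 : ℝ)) * (p:ℝ) ^ (-(1/32 : ℝ)) = Q⁻¹ := by
      rw [← Real.rpow_add hP0, hQ, ← Real.rpow_neg hP0.le]; norm_num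
    rw [show (p:ℝ) * ((p:ℝ) ^ (-(3/8 : ℝ)) * ((4 * M + 4 : ℝ) * (p:ℝ) ^ (-(1/32 : ℝ)))) =
      p * (4 * M + 4) * ((p:ℝ) ^ (-(3/8 : ℝ)) * (p:ℝ) ^ (-(1/32 : ℝ))) by ring, this]
    field_simp
    ring
  have a3 : (M:ℝ) = p * ((p:ℝ) ^ (-(3/8 : ℝ)) * (M * (p:ℝ) ^ (-(5/8 : ℝ)))) := by
    have : (p:ℝ) ^ (-(3/8 : ℝ)) * (p:ℝ) ^ (-(5/8 : ℝ)) = (p:ℝ)⁻¹ := by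
      rw [← Real.rpow_add hP0, ← Real.rpow_neg_one]; norm_num
    rw [show (p:ℝ) * ((p:ℝ) ^ (-(3/8 : ℝ)) * (M * (p:ℝ) ^ (-(5/8 : ℝ)))) =
      p * M * ((p:ℝ) ^ (-(3/8 : ℝ)) * (p:ℝ) ^ (-(5/8 : ℝ))) by ring, this]
    field_simp
  have hs0 : 0 < (p:ℝ) ^ (-(3/8 : ℝ)) := by positivity
  have b1 : (p:ℝ) * ((p:ℝ) ^ (-(3/8 : ℝ)) * ((4 * M + 4 : ℝ) * (p:ℝ) ^ (-(1/32 : ℝ)))) ≤ p * ((p:ℝ) ^ (-(3/8 : ℝ)) * (1/2)) := by gcongr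
  have b2 : (p:ℝ) * ((p:ℝ) ^ (-(3/8 : ℝ)) * (M * (p:ℝ) ^ (-(5/8 : ℝ)))) ≤ p * ((p:ℝ) ^ (-(3/8 : ℝ)) * (1/2)) := by gcongr
  rw [a2] at a1
  linarith
end nt
end MulAP

namespace MulAP
open scoped BigOperators
open Finset (univ)
set_option linter.unusedSectionVars false

lemma diag_bound {p : ℕ} [Fact p.Prime] (r : ℕ) (hr : 0 < r) (f : ZMod p → ℝ) (B : ℝ) (hB : 0 ≤ B) (hf0 : ∀ x, 0 ≤ f x) (hfB : ∀ x, f x ≤ B)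
    (hno : ∀ a d : ZMod p, d ≠ 0 → ∃ j < r, f (a + (j : ZMod p) * d) = 0) :
    𝔼 a, 𝔼 d, ∏ j ∈ Finset.range r, f (a + (j : ZMod p) * d) ≤ B ^ r / p := by
  apply expect_le_of (by positivity)
  intro a
  rw [Fintype.expect_eq_sum_div_card, ZMod.card]
  gcongr
  rw [Finset.sum_eq_single 0]
  · refine (Finset.prod_le_prod (fun _ _ => hf0 _) (fun _ _ => hfB _)).trans ?_
    simp
  · intro d _ hd
    obtain ⟨j, hj, h⟩ := hno a d hd
    exact Finset.prod_eq_zero (Finset.mem_range.2 hj) h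
  · intro h
    exact absurd (Finset.mem_univ _) h

theorem main_aux (k : ℕ) (δ : ℝ) (hδ : 0 < δ) :
    ∃ p₀ : ℕ, ∀ p : ℕ, p.Prime → p > p₀ →
      ∀ G : Subgroup (ZMod p)ˣ,
        (Nat.card G : ℝ) > (p : ℝ) ^ ((1 : ℝ) - 1 / (((k + 2 : ℕ) : ℝ) * 2 ^ ((k + 2) + 1))) →
        ∀ A : Finset (ZMod p),
          (↑A : Set (ZMod p)) ⊆ Units.val '' (G : Set (ZMod p)ˣ) →
          (A.card : ℝ) > δ * (Nat.card G : ℝ) →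
          ∃ a b : ZMod p, b ≠ 0 ∧ ∀ i : ℕ, i < k + 2 → a + (i : ZMod p) * b ∈ A := by
  obtain ⟨c, hc, η, hη, hrel⟩ := rel_AP (k+1) (by omega) (δ/2) (by positivity)
  set r : ℝ := ((k + 2 : ℕ) : ℝ) with hr
  have hr2 : 2 ≤ r := by rw [hr]; push_cast; linarith [Nat.cast_nonneg (α := ℝ) k]
  set D : ℝ := 2 ^ ((k + 2) + 1) with hD
  have hD8 : D = 8 * 2 ^ k := by rw [hD]; ring
  have hD0 : 8 ≤ D := by
    rw [hD8]; have : (1:ℝ) ≤ 2 ^ k := one_le_pow₀ (by norm_num)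
    linarith
  have hDpos : 0 < D := by linarith
  set M : ℕ := 2 ^ k with hM
  have hev : ∀ᶠ P : ℝ in Filter.atTop, (max 2 (k + 2 : ℝ) ≤ P) ∧ (1 * P ^ (-(1/16 : ℝ)) ≤ 1/2) ∧
      ((2 * (M + 3) : ℝ) * P ^ (-(13/32 : ℝ)) ≤ 1) ∧ ((4 * M + 4 : ℝ) * P ^ (-(1/32 : ℝ)) ≤ 1/2) ∧
      ((M : ℝ) * P ^ (-(5/8 : ℝ)) ≤ 1/2) ∧ (((M ^ 2 : ℕ) : ℝ) * P ^ (-(5/8 : ℝ)) ≤ 1) ∧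
      (2 * P ^ (-((1 - 1/r)/D)) ≤ η) ∧ (1 * P ^ (-(1 - 1/D)) ≤ c / 2) := by
    refine (Filter.eventually_ge_atTop _).and ?_
    refine (ev_small _ _ _ (by norm_num) (by norm_num)).and ?_
    refine (ev_small _ _ _ (by norm_num) (by norm_num)).and ?_
    refine (ev_small _ _ _ (by norm_num) (by norm_num)).and ?_
    refine (ev_small _ _ _ (by norm_num) (by norm_num)).and ?_
    refine (ev_small _ _ _ (by norm_num) (by norm_num)).and ?_
    refine (ev_small _ _ _ ?_ hη).and (ev_small _ _ _ ?_ (by positivity))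
    · apply div_pos _ hDpos
      rw [sub_pos, div_lt_one (by linarith)]; linarith
    · rw [sub_pos, div_lt_one (by linarith)]; linarith
  obtain ⟨p₀, hp₀⟩ := Filter.eventually_atTop.1 (tendsto_natCast_atTop_atTop.eventually hev)
  refine ⟨p₀, ?_⟩
  intro p hpp hpp0 G hG A hAG hAc
  haveI : Fact p.Prime := ⟨hpp⟩
  obtain ⟨E1, E2, E3, E4, E5, E6, E7, E8⟩ := hp₀ p hpp0.le
  have hP2 : (2:ℝ) ≤ p := (le_max_left _ _).trans E1
  have hPk : (k + 2 : ℝ) ≤ p := (le_max_right _ _).trans E1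
  have hP0 : (0:ℝ) < p := by linarith
  have hP1 : (1:ℝ) ≤ p := by linarith
  -- index
  set m := G.index with hm
  have hcard : Nat.card G * m = p - 1 := by
    rw [hm, Subgroup.card_mul_index, Nat.card_eq_fintype_card, ZMod.card_units]
  have hG0 : 0 < Nat.card G := Nat.card_pos
  have hp2 : 2 ≤ p := hpp.two_le
  have hm0 : 0 < m := by
    rcases Nat.eq_zero_or_pos m with h | h
    · rw [h] at hcard; omega
    · exact h
  have hm1 : (1:ℝ) ≤ m := by exact_mod_cast hm0
  have hcardR : (Nat.card G : ℝ) * m = p - 1 := by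
    rw [← Nat.cast_mul, hcard, Nat.cast_sub (by omega), Nat.cast_one]
  set κ : ℝ := 1 / (r * D) with hκ
  have hmκ : (m:ℝ) ≤ (p:ℝ) ^ κ := by
    have h1 : (p:ℝ) ^ (1 - κ) * m ≤ p := by
      have : (p:ℝ) ^ (1 - κ) * m ≤ (Nat.card G : ℝ) * m := by gcongr
      linarith
    rw [Real.rpow_sub hP0, Real.rpow_one, div_mul_eq_mul_div, div_le_iff₀ (by positivity)] at h1
    exact le_of_mul_le_mul_left h1 hP0
  have hκ16 : κ ≤ 1/16 := by
    rw [hκ]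
    apply one_div_le_one_div_of_le (by norm_num)
    nlinarith
  have hm16 : (m:ℝ) ≤ (p:ℝ) ^ (1/16 : ℝ) := hmκ.trans (Real.rpow_le_rpow_of_exponent_le hP1 hκ16)
  obtain ⟨χ, hχ⟩ := MulChar.exists_mulChar_orderOf (ZMod p) (R := ℂ) (n := m)
    (by rw [ZMod.card, ← hcard]; exact dvd_mul_left _ _) (Complex.isPrimitiveRoot_exp m hm0.ne')
  have hχm : χ ^ m = 1 := by rw [← hχ]; exact pow_orderOf_eq_one χ
  set σ := (p:ℝ) ^ (-(3/8 : ℝ)) with hσ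
  set ρ := (p:ℝ) ^ (-(3/D)) with hρ
  have hρ1 : ρ ≤ 1 := Real.rpow_le_one_of_one_le_of_nonpos hP1 (by rw [neg_nonpos]; positivity)
  have hρσ : σ ≤ ρ ^ 2 ^ k := by
    apply le_of_eq
    rw [hρ, hσ, ← Real.rpow_natCast, ← Real.rpow_mul hP0.le]
    congr 1
    rw [hD8]
    push_cast
    field_simp
  have hMσ : ((M ^ 2 : ℕ) : ℝ) / (p:ℝ) ≤ σ := by
    have e : ((M ^ 2 : ℕ) : ℝ) / (p:ℝ) = σ * (((M ^ 2 : ℕ) : ℝ) * (p:ℝ) ^ (-(5/8 : ℝ))) := by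
      have : σ * (p:ℝ) ^ (-(5/8 : ℝ)) = (p:ℝ)⁻¹ := by
        rw [hσ, ← Real.rpow_add hP0, ← Real.rpow_neg_one]; norm_num
      rw [mul_left_comm, this, div_eq_mul_inv]
    rw [e]
    exact mul_le_of_le_one_right (by positivity) E6
  have hchar : ∀ j ∈ Finset.Ico 1 m, CharHyp (χ ^ j) (2 ^ k) σ := by
    intro j hj
    rw [Finset.mem_Ico] at hj
    have hdvd : orderOf (χ ^ j) ∣ m := by
      rw [← hχ]; exact orderOf_pow_dvd j
    have hne1 : χ ^ j ≠ 1 := by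
      intro h
      have := orderOf_dvd_of_pow_eq_one h
      rw [hχ] at this
      exact absurd (Nat.le_of_dvd (by omega) this) (by omega)
    have hge : 2 ≤ orderOf (χ ^ j) := by
      have h1 : orderOf (χ ^ j) ≠ 1 := fun h => hne1 (orderOf_eq_one_iff.1 h)
      have h2 : 0 < orderOf (χ ^ j) := Nat.pos_of_dvd_of_pos hdvd hm0
      omega
    refine charHyp_of (χ ^ j) M hge ?_ hP2 E2 E3 E4 E5
    refine le_trans ?_ hm16
    exact_mod_cast Nat.le_of_dvd hm0 hdvd
  have hstd := std_nu k χ m hm0 hχm σ ρ hchar hMσ (by positivity) hρ1 hρσ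
  -- the function f
  classical
  set f : ZMod p → ℝ := fun x => if x ∈ A then (m:ℝ) else 0 with hf
  have hf0 : ∀ x, 0 ≤ f x := fun x => by simp only [hf]; split_ifs <;> positivity
  have hfm : ∀ x, f x ≤ m := fun x => by simp only [hf]; split_ifs <;> simp
  have hfν : ∀ x, f x ≤ nuF χ m x := by
    intro x
    simp only [hf]
    split_ifs with hx
    · obtain ⟨u, hu, rfl⟩ := hAG hx
      rw [nuF, if_neg u.ne_zero, if_pos (chi_one_on G χ m hcard hχm u hu)]
    · unfold nuF
      split_ifs <;> simp
  have hνB : ∀ x, nuF χ m x ≤ m := by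
    intro x
    unfold nuF
    split_ifs
    · exact hm1
    · exact le_rfl
    · simp
  have hEf : δ / 2 ≤ 𝔼 x, f x := by
    rw [Fintype.expect_eq_sum_div_card, ZMod.card, le_div_iff₀ hP0]
    simp only [hf, Finset.sum_ite_mem, Finset.univ_inter, Finset.sum_const, nsmul_eq_mul]
    have : δ * (Nat.card G : ℝ) * m ≤ A.card * m := by gcongr
    rw [mul_assoc, hcardR] at this
    nlinarith
  have hBe : (m:ℝ) ^ (2 * ((k + 1) + 1)) * (m * (2 * ρ)) ≤ η := by
    have e1 : (m:ℝ) ^ (2 * ((k + 1) + 1)) * (m * (2 * ρ)) = 2 * ((m:ℝ) ^ (2 * (k+2) + 1) * ρ) := by ring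
    rw [e1]
    refine le_trans ?_ E7
    gcongr
    calc (m:ℝ) ^ (2 * (k+2) + 1) * ρ ≤ ((p:ℝ) ^ κ) ^ (2 * (k+2) + 1) * ρ := by gcongr
      _ = (p:ℝ) ^ (-((1 - 1/r)/D)) := by
        rw [← Real.rpow_natCast, ← Real.rpow_mul hP0.le, hρ, ← Real.rpow_add hP0]
        congr 1
        have : ((2 * (k+2) + 1 : ℕ) : ℝ) = 2 * r + 1 := by rw [hr]; push_cast; ring
        rw [this, hκ]
        field_simp
        ring
  have hfin := hrel p f (nuF χ m) m (m * (2 * ρ)) (by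
      have : ((k + 1 : ℕ) : ℝ) < p := by push_cast; linarith
      exact_mod_cast this) hm1 (by positivity) hf0 hfν hνB hstd hBe hEf
  by_contra hcon
  push Not at hcon
  have hdiag := diag_bound (k+1+1) (by omega) f m (by positivity) hf0 hfm (by
    intro a d hd
    obtain ⟨i, hi, hiA⟩ := hcon a d hd
    exact ⟨i, hi, by simp only [hf]; rw [if_neg hiA]⟩)
  have hsmall : (m:ℝ) ^ (k+1+1) / p ≤ c / 2 := by
    refine le_trans ?_ E8
    rw [one_mul]
    calc (m:ℝ) ^ (k+1+1) / p ≤ ((p:ℝ) ^ κ) ^ (k+1+1) / p := by gcongr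
      _ = (p:ℝ) ^ (-(1 - 1/D)) := by
        rw [← Real.rpow_natCast, ← Real.rpow_mul hP0.le]
        nth_rewrite 2 [← Real.rpow_one (p:ℝ)]
        rw [← Real.rpow_sub hP0]
        congr 1
        have : ((k+1+1 : ℕ) : ℝ) = r := rfl
        rw [this, hκ]
        field_simp
        ring
  linarith
end MulAP

theorem arithmetic_progressions_in_large_subsets_of_multiplicative_groups
    (r : ℕ) (hr : 0 < r) (δ : ℝ) (hδ : 0 < δ) :
    ∃ p₀ : ℕ, ∀ p : ℕ, p.Prime → p > p₀ →
      ∀ G : Subgroup (ZMod p)ˣ,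
        (Nat.card G : ℝ) > (p : ℝ) ^ ((1 : ℝ) - 1 / ((r : ℝ) * 2 ^ (r + 1))) →
        ∀ A : Finset (ZMod p),
          (↑A : Set (ZMod p)) ⊆ Units.val '' (G : Set (ZMod p)ˣ) →
          (A.card : ℝ) > δ * (Nat.card G : ℝ) →
          ∃ a b : ZMod p, b ≠ 0 ∧ ∀ i : ℕ, i < r → a + (i : ZMod p) * b ∈ A := by
  match r, hr with
  | 1, _ =>
    refine ⟨0, ?_⟩
    intro p hp _ G _ A _ hA
    haveI : Fact p.Prime := ⟨hp⟩
    have h0 : (0:ℝ) < A.card := lt_of_le_of_lt (by positivity) hA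
    have h1 : 0 < A.card := by exact_mod_cast h0
    obtain ⟨a, ha⟩ := Finset.card_pos.1 h1
    refine ⟨a, 1, one_ne_zero, ?_⟩
    intro i hi
    have : i = 0 := by omega
    subst this
    simpa using ha
  | k + 2, _ => exact MulAP.main_aux k δ hδ
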